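/- Let p > 3 be a prime with p ≡ 1 or 7 (mod 8). If p ≡ 1 or 7 (mod 24), then there are integers x, y with p = x^2 + 6y^2, and for any such x, Σ_{k=0}^{p-1} C(2k,k) · a_k · 36^{-k} ≡ 4x^2 (mod p). If p ≡ 17 or 23 (mod 24), then Σ_{k=0}^{p-1} C(2k,k) · a_k · 36^{-k} ≡ 0 (mod p). -/

import Mathlib

open Finset

/-- `a n = ∑_{k=0}^{n} C(n,k)^2·C(2k,k)`. -/
def a (n : ℕ) : ℕ :=
  ∑ k ∈ Finset.range (n + 1), Nat.choose n k ^ 2 * Nat.choose (2 * k) k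

/-!
Let `s² = 2` in `𝔽_p`. A Clausen-type identity, both sides of which solve the symmetric square of
the differential equation of `∑ a k Xᵏ`, makes the sum the square of `∑ a k ((3 + 2s) / 3)ᵏ`. Up to
sign the latter is the character sum, that is, the trace of Frobenius, of
`Y² = X³ + 12X² + (18 - 12s)X`, a curve with complex multiplication by `√-6`. If `-6` is a
nonresidue, pulling back along the endomorphism `√-6` forces the character sum to vanish. If
`p = x² + 6y²`, take the points over `K(T)` of the twist by the cubic; they are the rational
self-maps of the curve, the height (degree) is a quadratic form on them, and the multiplier of the
invariant differential is additive. With the right sign of `√-6`, the point `x + y√-6` has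
multiplier `0` modulo `p` and degree `p`, so it is plus or minus Frobenius. The height of Frobenius
minus the identity counts points on the curve, which gives the character sum `±2x`.
-/

section PowerSums

open Polynomial

theorem sum_pow_eq_ite {K : Type*} [Field K] [Fintype K] (i : ℕ) :
    ∑ x : K, x ^ i = if i ≠ 0 ∧ Fintype.card K - 1 ∣ i then -1 else 0 := by
  classical
  rcases eq_or_ne i 0 with rfl | hi
  · simp
  rw [← Finset.sum_erase univ (f := fun x : K => x ^ i) (zero_pow hi)]
  have hunits : ∑ x ∈ univ.erase (0 : K), x ^ i = ∑ u : Kˣ, (u : K) ^ i :=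
    Finset.sum_bij' (fun x hx => Units.mk0 x (ne_of_mem_erase hx)) (fun u _ => u)
      (fun _ _ => mem_univ _) (fun u _ => mem_erase.2 ⟨u.ne_zero, mem_univ _⟩)
      (fun _ _ => rfl) (fun u _ => Units.mk0_val u _) (fun _ _ => rfl)
  push_cast [hunits, FiniteField.sum_pow_units]
  simp [hi]

theorem sum_eval_eq_neg_coeff_add_coeff {K : Type*} [Field K] [Fintype K] {f : K[X]}
    (hf : f.natDegree ≤ 2 * (Fintype.card K - 1)) :
    ∑ x : K, f.eval x =
      -(f.coeff (Fintype.card K - 1) + f.coeff (2 * (Fintype.card K - 1))) := by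
  have hq : 0 < Fintype.card K - 1 := Nat.sub_pos_of_lt Fintype.one_lt_card
  generalize hcard : Fintype.card K - 1 = q at *
  simp_rw [eval_eq_sum_range' (Nat.lt_succ_of_le hf)]
  rw [Finset.sum_comm]
  simp_rw [← Finset.mul_sum, sum_pow_eq_ite, hcard]
  rw [← Finset.sum_subset (s₁ := {q, 2 * q}) (by intro i; simp; lia),
    Finset.sum_pair (by lia)]
  · simp [hq.ne']; ring
  · intro i hi hne
    rw [if_neg, mul_zero]
    rintro ⟨h0, m, rfl⟩
    have hm : m < 3 := by
      by_contra! h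
      have := Nat.mul_le_mul_left q h
      have := mem_range.1 hi
      lia
    interval_cases m <;> simp_all [mul_comm]

theorem sum_eval_eq_neg_coeff {K : Type*} [Field K] [Fintype K] {f : K[X]}
    (hf : f.natDegree < 2 * (Fintype.card K - 1)) :
    ∑ x : K, f.eval x = -f.coeff (Fintype.card K - 1) := by
  rw [sum_eval_eq_neg_coeff_add_coeff hf.le, coeff_eq_zero_of_natDegree_lt hf, add_zero]

end PowerSums

section CharacterSums

open Polynomial

variable {p : ℕ} [Fact p.Prime]

theorem two_mul_half_prime (hp : p ≠ 2) : 2 * (p / 2) = p - 1 := by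
  have := ((Fact.out : p.Prime).eq_two_or_odd).resolve_left hp
  lia

theorem sq_pow_half_prime (hp : p ≠ 2) {z : ZMod p} (hz : z ≠ 0) : (z ^ 2) ^ (p / 2) = 1 := by
  rw [← pow_mul, two_mul_half_prime hp, ZMod.pow_card_sub_one_eq_one hz]

theorem two_ne_zero_of_ne_two (hp : p ≠ 2) : (2 : ZMod p) ≠ 0 := by
  have : Fact (2 < p) := ⟨lt_of_le_of_ne (Fact.out : p.Prime).two_le hp.symm⟩
  exact Ring.two_ne_zero (by rwa [ZMod.ringChar_zmod_n])

theorem two_mul_natCast_half_prime (R : Type*) [CommRing R] [CharP R p] (hp : p ≠ 2) :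
    2 * ((p / 2 : ℕ) : R) = -1 := by
  have h : ((2 * (p / 2) + 1 : ℕ) : R) = 0 := by
    rw [two_mul_half_prime hp, Nat.sub_add_cancel (Fact.out : p.Prime).one_le, CharP.cast_eq_zero]
  push_cast at h
  linear_combination h

theorem card_filter_sq_eq (hp : p ≠ 2) (d : ZMod p) :
    (#{u : ZMod p | u ^ 2 = d} : ZMod p) = 1 + d ^ (p / 2) := by
  have hchar : ringChar (ZMod p) ≠ 2 := by rwa [ZMod.ringChar_zmod_n]
  have hcount := congrArg (Int.cast : ℤ → ZMod p) (quadraticChar_card_sqrts hchar d)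
  have hpow := quadraticChar_eq_pow_of_char_ne_two' hchar d
  rw [ZMod.card] at hpow
  push_cast [hpow] at hcount
  rw [add_comm, ← hcount]
  congr 2
  ext
  simp

theorem card_filter_quadratic_eq_zero (hp : p ≠ 2) {A : ZMod p} (hA : A ≠ 0) (B C : ZMod p) :
    (#{x : ZMod p | A * x ^ 2 + B * x + C = 0} : ZMod p) = 1 + discrim A B C ^ (p / 2) := by
  have h2 := two_ne_zero_of_ne_two hp
  rw [← card_filter_sq_eq hp]
  congr 1
  refine Finset.card_equiv ((Equiv.mulLeft₀ (2 * A) (mul_ne_zero h2 hA)).trans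
    (Equiv.addRight B)) fun x => ?_
  have : NeZero (2 : ZMod p) := ⟨h2⟩
  simp [pow_two, quadratic_eq_zero_iff_discrim_eq_sq hA, eq_comm]

/-- The residue modulo `p` of the Legendre symbol sum `∑ (F(x) / p)`. -/
def charSum (F : (ZMod p)[X]) : ZMod p :=
  ∑ x : ZMod p, F.eval x ^ (p / 2)

theorem charSum_eq_neg_coeff (hp : p ≠ 2) {F : (ZMod p)[X]} (hF : F.natDegree ≤ 3) :
    charSum F = -(F ^ (p / 2)).coeff (p - 1) := by
  have hhalf := two_mul_half_prime hp
  have htwo := (Fact.out : p.Prime).two_le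
  have hdeg : (F ^ (p / 2)).natDegree < 2 * (Fintype.card (ZMod p) - 1) := by
    have := natDegree_pow_le_of_le (p / 2) hF
    rw [ZMod.card]
    lia
  have hsum := sum_eval_eq_neg_coeff hdeg
  rwa [ZMod.card, Finset.sum_congr rfl fun x _ => eval_pow (p / 2)] at hsum

end CharacterSums

section CentralBinomialSum

open Polynomial

variable {p : ℕ} [Fact p.Prime]

theorem centralBinom_eq_neg_four_pow_mul_choose (hp : p ≠ 2) {j : ℕ} (hj : j < p) :
    ((2 * j).choose j : ZMod p) = (-4) ^ j * ((p / 2).choose j : ZMod p) := by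
  induction j with
  | zero => simp
  | succ j ih =>
    have hj0 : ((j + 1 : ℕ) : ZMod p) ≠ 0 := by
      rw [Ne, ZMod.natCast_eq_zero_iff]
      exact Nat.not_dvd_of_pos_of_lt j.succ_pos hj
    have hcentral := congrArg (Nat.cast : ℕ → ZMod p) (Nat.succ_mul_centralBinom_succ j)
    have hchoose := congrArg (Nat.cast : ℕ → ZMod p) (Nat.choose_succ_right_eq (p / 2) j)
    simp only [Nat.centralBinom_eq_two_mul_choose, Nat.cast_mul] at hcentral hchoose
    rw [ih (by lia)] at hcentral
    refine mul_left_cancel₀ hj0 (hcentral.trans ?_)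
    rcases le_or_gt j (p / 2) with hle | hgt
    · have hhalf := two_mul_natCast_half_prime (ZMod p) hp
      rw [Nat.cast_sub hle] at hchoose
      push_cast at hchoose ⊢
      linear_combination (-4) ^ j * 4 * hchoose + (-4) ^ j * 2 * ((p / 2).choose j) * hhalf
    · rw [Nat.choose_eq_zero_of_lt hgt, Nat.choose_eq_zero_of_lt (by lia)]
      ring

theorem sum_pow_mul_one_sub_four_mul_pow (hp : p ≠ 2) {j : ℕ} (hj : j < p) :
    ∑ v : ZMod p, v ^ (p - 1 - j) * (1 - 4 * v) ^ (p / 2) = -((2 * j).choose j : ZMod p) := by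
  set f : (ZMod p)[X] := X ^ (p - 1 - j) * ((1 + X) ^ (p / 2)).comp (C (-4) * X) with hf
  have hhalf := two_mul_half_prime hp
  have htwo := (Fact.out : p.Prime).two_le
  have hdeg : f.natDegree < 2 * (Fintype.card (ZMod p) - 1) := by
    have hpow : ((1 + C (-4) * X : (ZMod p)[X]) ^ (p / 2)).natDegree ≤ p / 2 * 1 :=
      natDegree_pow_le_of_le _ (by compute_degree)
    have := natDegree_mul_le_of_le (natDegree_X_pow_le (R := ZMod p) (p - 1 - j)) hpow
    rw [ZMod.card]
    simp only [hf, pow_comp, add_comp, one_comp, X_comp]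
    lia
  have hcoeff : f.coeff (p - 1) = ((2 * j).choose j : ZMod p) := by
    rw [hf, coeff_X_pow_mul', if_pos (by lia), comp_C_mul_X_coeff, coeff_one_add_X_pow,
      show p - 1 - (p - 1 - j) = j by lia, centralBinom_eq_neg_four_pow_mul_choose hp hj, mul_comm]
  have hsum := sum_eval_eq_neg_coeff hdeg
  rw [ZMod.card, hcoeff] at hsum
  rw [← hsum]
  refine Finset.sum_congr rfl fun v _ => ?_
  simp [hf, sub_eq_add_neg]

/-- The homogenized geometric sum `∑ xᵖ⁻¹⁻ᵏ yᵏ` is `1` off the diagonal and `0` on it, since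
`(x - y) ∑ xᵖ⁻¹⁻ᵏ yᵏ = xᵖ - yᵖ = x - y`. -/
theorem sum_pow_mul_pow_eq_ite (x y : ZMod p) :
    ∑ k ∈ range p, x ^ (p - 1 - k) * y ^ k = if x = y then 0 else 1 := by
  have hgeom := Commute.geom_sum₂_mul (Commute.all y x) p
  simp only [ZMod.pow_card] at hgeom
  split_ifs with hxy
  · subst hxy
    rw [Finset.sum_congr rfl fun k hk => by
      rw [← pow_add, Nat.sub_add_cancel (Nat.le_sub_one_of_lt (mem_range.1 hk))]]
    simp
  · refine mul_right_cancel₀ (sub_ne_zero.2 (Ne.symm hxy)) ?_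
    rw [one_mul]
    exact (congrArg (· * (y - x)) (Finset.sum_congr rfl fun k _ => mul_comm _ _)).trans hgeom

theorem coeff_pow_mul_one_add_X_pow {R : Type*} [CommRing R] (c : R) (k : ℕ) :
    ((1 + C c * X) ^ k * (1 + X) ^ k).coeff k =
      ∑ j ∈ range (k + 1), (k.choose j : R) ^ 2 * c ^ j := by
  rw [coeff_mul, Finset.Nat.sum_antidiagonal_eq_sum_range_succ_mk]
  refine Finset.sum_congr rfl fun j hj => ?_
  have hcomp : (1 + C c * X) ^ k = ((1 + X) ^ k).comp (C c * X) := by simp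
  rw [hcomp, comp_C_mul_X_coeff, coeff_one_add_X_pow, coeff_one_add_X_pow,
    Nat.choose_symm (Nat.le_of_lt_succ (mem_range.1 hj))]
  ring

theorem sum_pow_mul_pow_mul_pow (c : ZMod p) {k : ℕ} (hk : k < p) :
    ∑ x : ZMod p, x ^ (p - 1 - k) * ((1 + c * x) ^ k * (1 + x) ^ k) =
      -(∑ j ∈ range (k + 1), (k.choose j : ZMod p) ^ 2 * c ^ j) -
        if k = p - 1 then c ^ (p - 1) else 0 := by
  set g : (ZMod p)[X] := (1 + C c * X) ^ k * (1 + X) ^ k with hg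
  have hleft : ((1 + C c * X) ^ k).natDegree ≤ k * 1 :=
    natDegree_pow_le_of_le k (by compute_degree)
  have hright : ((1 + X : (ZMod p)[X]) ^ k).natDegree ≤ k * 1 :=
    natDegree_pow_le_of_le k (by compute_degree)
  have hdeg : (X ^ (p - 1 - k) * g).natDegree ≤ 2 * (Fintype.card (ZMod p) - 1) := by
    have := natDegree_mul_le_of_le (natDegree_X_pow_le (R := ZMod p) (p - 1 - k))
      (natDegree_mul_le_of_le hleft hright)
    rw [ZMod.card]
    lia
  have hlow : (X ^ (p - 1 - k) * g).coeff (p - 1) =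
      ∑ j ∈ range (k + 1), (k.choose j : ZMod p) ^ 2 * c ^ j := by
    rw [coeff_X_pow_mul', if_pos (by lia), show p - 1 - (p - 1 - k) = k by lia,
      coeff_pow_mul_one_add_X_pow]
  have hhigh : (X ^ (p - 1 - k) * g).coeff (2 * (p - 1)) =
      if k = p - 1 then c ^ (p - 1) else 0 := by
    rw [coeff_X_pow_mul', if_pos (by lia)]
    split_ifs with hlast
    · have hcomp : (1 + C c * X) ^ k = ((1 + X) ^ k).comp (C c * X) := by simp
      rw [hg, show 2 * (p - 1) - (p - 1 - k) = k * 1 + k * 1 by lia,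
        coeff_mul_add_eq_of_natDegree_le hleft hright, hcomp, comp_C_mul_X_coeff]
      simp [coeff_one_add_X_pow, hlast]
    · exact coeff_eq_zero_of_natDegree_lt
        ((natDegree_mul_le_of_le hleft hright).trans_lt (by lia))
  have hsum := sum_eval_eq_neg_coeff_add_coeff hdeg
  rw [ZMod.card, hlow, hhigh] at hsum
  rw [← neg_add', ← hsum]
  exact Finset.sum_congr rfl fun x _ => by simp [hg]

theorem sum_sum_pow_mul_pow_eq_neg_one_add_discrim (hp : p ≠ 2) {c t : ZMod p} (hc : c ≠ 0)
    (ht : t ≠ 0) :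
    ∑ x : ZMod p, ∑ k ∈ range p, x ^ (p - 1 - k) * (t * ((1 + c * x) * (1 + x))) ^ k =
      -(1 + ((1 - t * (1 + c)) ^ 2 - 4 * t ^ 2 * c) ^ (p / 2)) := by
  have hcount := card_filter_quadratic_eq_zero hp (mul_ne_zero ht hc) (t * (1 + c) - 1) t
  rw [show discrim (t * c) (t * (1 + c) - 1) t = (1 - t * (1 + c)) ^ 2 - 4 * t ^ 2 * c by
    rw [discrim]; ring] at hcount
  have hiff (x : ZMod p) : x = t * ((1 + c * x) * (1 + x)) ↔
      t * c * x ^ 2 + (t * (1 + c) - 1) * x + t = 0 := by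
    rw [← sub_eq_zero, ← neg_eq_zero]
    ring_nf
  have hcompl (P : Prop) [Decidable P] :
      (if P then 0 else 1 : ZMod p) = 1 - if P then 1 else 0 := by
    split_ifs <;> simp
  simp_rw [sum_pow_mul_pow_eq_ite, hiff, ← hcount, hcompl, Finset.sum_sub_distrib,
    Finset.sum_boole]
  simp

theorem sum_sum_pow_mul_pow_eq_neg_sum_choose_sq_sub_one {c t : ZMod p} (hc : c ≠ 0)
    (ht : t ≠ 0) :
    ∑ x : ZMod p, ∑ k ∈ range p, x ^ (p - 1 - k) * (t * ((1 + c * x) * (1 + x))) ^ k =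
      -(∑ k ∈ range p, t ^ k * ∑ j ∈ range (k + 1), (k.choose j : ZMod p) ^ 2 * c ^ j) - 1 := by
  have hone := (Fact.out : p.Prime).one_le
  have hterm (k : ℕ) (hk : k ∈ range p) : ∑ x : ZMod p,
      x ^ (p - 1 - k) * (t * ((1 + c * x) * (1 + x))) ^ k =
        -(t ^ k * ∑ j ∈ range (k + 1), (k.choose j : ZMod p) ^ 2 * c ^ j) -
          if k = p - 1 then 1 else 0 := by
    have hpow (x : ZMod p) : x ^ (p - 1 - k) * (t * ((1 + c * x) * (1 + x))) ^ k =
        t ^ k * (x ^ (p - 1 - k) * ((1 + c * x) ^ k * (1 + x) ^ k)) := by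
      rw [mul_pow, mul_pow]; ring
    simp_rw [hpow, ← Finset.mul_sum, sum_pow_mul_pow_mul_pow c (mem_range.1 hk)]
    split_ifs with hlast
    · rw [hlast, ZMod.pow_card_sub_one_eq_one hc, ZMod.pow_card_sub_one_eq_one ht]; ring
    · ring
  rw [Finset.sum_comm, Finset.sum_congr rfl hterm, Finset.sum_sub_distrib, Finset.sum_neg_distrib,
    Finset.sum_ite_eq', if_pos (mem_range.2 (by lia))]

/-- The generating polynomial of the Legendre-type polynomials `∑ C(k,j)² cʲ` is
`((1 - t(1 + c))² - 4t²c)^(-1/2)`; modulo `p` the exponent `-1/2` becomes `⌊p/2⌋`. -/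
theorem sum_pow_mul_sum_choose_sq (hp : p ≠ 2) {c t : ZMod p} (hc : c ≠ 0) (ht : t ≠ 0) :
    ∑ k ∈ range p, t ^ k * ∑ j ∈ range (k + 1), (k.choose j : ZMod p) ^ 2 * c ^ j =
      ((1 - t * (1 + c)) ^ 2 - 4 * t ^ 2 * c) ^ (p / 2) := by
  linear_combination sum_sum_pow_mul_pow_eq_neg_sum_choose_sq_sub_one hc ht -
    sum_sum_pow_mul_pow_eq_neg_one_add_discrim hp hc ht

theorem sum_pow_mul_sum_choose_sq_mul_pow (hp : p ≠ 2) {t : ZMod p} (ht : t ≠ 0) (v : ZMod p) :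
    ∑ k ∈ range p, t ^ k * ∑ j ∈ range (k + 1), (k.choose j : ZMod p) ^ 2 * v ^ (p - 1 - j) =
      ((t - 1) ^ 2 * v ^ 2 - 2 * t * (t + 1) * v + t ^ 2) ^ (p / 2) := by
  have hone := (Fact.out : p.Prime).one_le
  rcases eq_or_ne v 0 with rfl | hv
  · have hzero (k : ℕ) (hk : k ∈ range p) : t ^ k * ∑ j ∈ range (k + 1),
        (k.choose j : ZMod p) ^ 2 * 0 ^ (p - 1 - j) = if k = p - 1 then 1 else 0 := by
      rw [Finset.sum_range_succ, Finset.sum_eq_zero fun j hj => by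
        rw [zero_pow (by simp at hk hj; lia), mul_zero], zero_add, zero_pow_eq]
      have := mem_range.1 hk
      split_ifs with hsub hlast hlast
      · simp [hlast, ZMod.pow_card_sub_one_eq_one ht]
      all_goals lia
    rw [Finset.sum_congr rfl hzero, Finset.sum_ite_eq', if_pos (mem_range.2 (by lia))]
    simp [sq_pow_half_prime hp ht]
  · have hinv {j : ℕ} (hj : j < p) : v ^ (p - 1 - j) = v⁻¹ ^ j := by
      rw [inv_pow]
      refine eq_inv_of_mul_eq_one_left ?_
      rw [← pow_add, Nat.sub_add_cancel (by lia), ZMod.pow_card_sub_one_eq_one hv]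
    have hsum := sum_pow_mul_sum_choose_sq hp (inv_ne_zero hv) ht
    have hquad : (t - 1) ^ 2 * v ^ 2 - 2 * t * (t + 1) * v + t ^ 2 =
        v ^ 2 * ((1 - t * (1 + v⁻¹)) ^ 2 - 4 * t ^ 2 * v⁻¹) := by
      field_simp; ring
    rw [hquad, mul_pow, sq_pow_half_prime hp hv, one_mul, ← hsum]
    refine Finset.sum_congr rfl fun k hk => ?_
    congr 1
    refine Finset.sum_congr rfl fun j hj => ?_
    rw [hinv (by simp at hk hj; lia)]

theorem sum_a_mul_pow (hp : p ≠ 2) {t : ZMod p} (ht : t ≠ 0) :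
    ∑ k ∈ range p, (a k : ZMod p) * t ^ k =
      -∑ v : ZMod p,
        ((1 - 4 * v) * ((t - 1) ^ 2 * v ^ 2 - 2 * t * (t + 1) * v + t ^ 2)) ^ (p / 2) := by
  simp_rw [mul_pow, ← sum_pow_mul_sum_choose_sq_mul_pow hp ht, Finset.mul_sum]
  rw [Finset.sum_comm, ← Finset.sum_neg_distrib]
  refine Finset.sum_congr rfl fun k hk => ?_
  rw [Finset.sum_comm, ← Finset.sum_neg_distrib, a, Nat.cast_sum, Finset.sum_mul]
  refine Finset.sum_congr rfl fun j hj => ?_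
  have hcentral := sum_pow_mul_one_sub_four_mul_pow hp (j := j) (by simp at hk hj; lia)
  push_cast
  rw [← neg_neg ((2 * j).choose j : ZMod p), ← hcentral, mul_neg, neg_mul, Finset.mul_sum,
    Finset.sum_mul]
  congr 1
  exact Finset.sum_congr rfl fun v _ => by ring

end CentralBinomialSum

section AffineChange

open Polynomial

/-- The cubic `X(X² + αX + β)`, the right-hand side of an elliptic curve `Y² = X(X² + αX + β)`
with a marked `2`-torsion point at the origin. -/
noncomputable def twoTorsionCubic {R : Type*} [CommRing R] (α β : R) : R[X] :=
  X * (X ^ 2 + C α * X + C β)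

theorem eval_twoTorsionCubic {R : Type*} [CommRing R] (α β x : R) :
    (twoTorsionCubic α β).eval x = x * (x ^ 2 + α * x + β) := by
  simp [twoTorsionCubic]

theorem sq_sum_a_mul_pow {p : ℕ} [Fact p.Prime] (h2 : (2 : ZMod p) ≠ 0) (h3 : (3 : ZMod p) ≠ 0)
    {s : ZMod p} (hs : s ^ 2 = 2) :
    (∑ k ∈ range p, (a k : ZMod p) * ((3 + 2 * s) / 3) ^ k) ^ 2 =
      charSum (twoTorsionCubic 12 (18 - 12 * s)) ^ 2 := by
  have hp : p ≠ 2 := by rintro rfl; exact h2 (ZMod.natCast_self 2)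
  have hunit : (3 + 2 * s) * (3 - 2 * s) = 1 := by linear_combination (-4) * hs
  have hscale : 3 * s - 4 ≠ 0 := by
    refine left_ne_zero_of_mul (b := 3 * s + 4) ?_
    rwa [show (3 * s - 4) * (3 * s + 4) = 2 by linear_combination 9 * hs]
  have hμ : 2 * (3 * (3 - 2 * s)) ≠ 0 :=
    mul_ne_zero h2 (mul_ne_zero h3 (right_ne_zero_of_mul_eq_one hunit))
  rw [sum_a_mul_pow hp (div_ne_zero (left_ne_zero_of_mul_eq_one hunit) h3), neg_sq]
  set t := (3 + 2 * s) / 3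
  have ht : 3 * t = 3 + 2 * s := mul_div_cancel₀ _ h3
  have hcubic (v : ZMod p) :
      (3 * s - 4) * (2 * (3 * (3 - 2 * s))) ^ 2 *
          ((1 - 4 * v) * ((t - 1) ^ 2 * v ^ 2 - 2 * t * (t + 1) * v + t ^ 2)) =
        (twoTorsionCubic 12 (18 - 12 * s)).eval ((3 * s - 4) * (1 - 4 * v)) := by
    have hquad : 9 * ((t - 1) ^ 2 * v ^ 2 - 2 * t * (t + 1) * v + t ^ 2) =
        4 * s ^ 2 * v ^ 2 - 2 * (3 + 2 * s) * (6 + 2 * s) * v + (3 + 2 * s) ^ 2 := by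
      linear_combination
        ((3 * t - 3 + 2 * s) * v ^ 2 - 2 * (3 * t + 6 + 2 * s) * v + (3 * t + 3 + 2 * s)) * ht
    calc
      _ = 4 * (3 * s - 4) * (3 - 2 * s) ^ 2 * (1 - 4 * v) *
          (9 * ((t - 1) ^ 2 * v ^ 2 - 2 * t * (t + 1) * v + t ^ 2)) := by ring
      _ = _ := by rw [hquad, eval_twoTorsionCubic]; grind
  have hsum : charSum (twoTorsionCubic 12 (18 - 12 * s)) =
      ((3 * s - 4) * (2 * (3 * (3 - 2 * s))) ^ 2) ^ (p / 2) * ∑ v : ZMod p,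
        ((1 - 4 * v) * ((t - 1) ^ 2 * v ^ 2 - 2 * t * (t + 1) * v + t ^ 2)) ^ (p / 2) := by
    have hfour : (4 : ZMod p) ≠ 0 := by
      rw [show (4 : ZMod p) = 2 * 2 by norm_num]; exact mul_ne_zero h2 h2
    rw [Finset.mul_sum, Finset.sum_congr rfl fun v _ => by rw [← mul_pow, hcubic]]
    exact (Equiv.sum_comp ((Equiv.mulLeft₀ 4 hfour).trans
      ((Equiv.subLeft 1).trans (Equiv.mulLeft₀ (3 * s - 4) hscale))) _).symm
  rw [hsum, mul_pow, ← pow_mul, mul_comm (p / 2), pow_mul,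
    sq_pow_half_prime hp (mul_ne_zero hscale (pow_ne_zero 2 hμ)), one_mul]

end AffineChange

section Recurrences

theorem choose_mul_succ_eq_int (m k : ℕ) :
    (m.choose k : ℤ) * (m + 1) = (m + 1).choose k * (m + 1 - k) := by
  rcases lt_or_ge (m + 1) k with hlt | hle
  · simp [Nat.choose_eq_zero_of_lt hlt, Nat.choose_eq_zero_of_lt (m.lt_succ_self.trans hlt)]
  · have := congrArg (Nat.cast : ℕ → ℤ) (Nat.choose_mul_succ_eq m k)
    push_cast [Nat.cast_sub hle] at this
    exact this

/-- Zeilberger's certificate for the recurrence of `a`: up to the factor `(n + 2)²`, the summand of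
the recurrence is the forward difference of this sequence. -/
def recurrenceCertificate (n k : ℕ) : ℤ :=
  (k : ℤ) ^ 3 * (3 * k - 4 * (n + 2)) * (((n + 2).choose k : ℤ) ^ 2 * (2 * k).choose k)

theorem recurrenceCertificate_succ_sub {n k : ℕ} (hk : k ≤ n + 2) :
    recurrenceCertificate n (k + 1) - recurrenceCertificate n k = ((n : ℤ) + 2) ^ 2 *
      (((n : ℤ) + 2) ^ 2 * (((n + 2).choose k : ℤ) ^ 2 * (2 * k).choose k) -
        (10 * (n + 1) ^ 2 + 10 * (n + 1) + 3) * (((n + 1).choose k : ℤ) ^ 2 * (2 * k).choose k) +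
        9 * (n + 1) ^ 2 * ((n.choose k : ℤ) ^ 2 * (2 * k).choose k)) := by
  have hsucc : ((n + 2).choose (k + 1) : ℤ) * (k + 1) = (n + 2).choose k * (n + 2 - k) := by
    have := congrArg (Nat.cast : ℕ → ℤ) (Nat.choose_succ_right_eq (n + 2) k)
    push_cast [Nat.cast_sub hk] at this
    exact this
  have hcentral : ((k : ℤ) + 1) * (2 * (k + 1)).choose (k + 1) =
      2 * (2 * k + 1) * (2 * k).choose k := by
    exact_mod_cast Nat.succ_mul_centralBinom_succ k
  have hpred₁ := choose_mul_succ_eq_int (n + 1) k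
  have hpred₀ := choose_mul_succ_eq_int n k
  simp only [recurrenceCertificate]
  push_cast at hpred₁ ⊢
  generalize ((n + 2).choose k : ℤ) = b₂ at *
  generalize ((n + 1).choose k : ℤ) = b₁ at *
  generalize (n.choose k : ℤ) = b₀ at *
  generalize ((n + 2).choose (k + 1) : ℤ) = d at *
  generalize ((2 * (k + 1)).choose (k + 1) : ℤ) = e' at *
  generalize ((2 * k).choose k : ℤ) = e at *
  grind

theorem a_recurrence (n : ℕ) :
    ((n : ℤ) + 2) ^ 2 * a (n + 2) - (10 * (n + 1) ^ 2 + 10 * (n + 1) + 3) * a (n + 1) +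
      9 * (n + 1) ^ 2 * a n = 0 := by
  have hextend (m : ℕ) (hm : m ≤ n + 2) :
      (a m : ℤ) = ∑ k ∈ range (n + 3), (m.choose k : ℤ) ^ 2 * (2 * k).choose k := by
    rw [a, Nat.cast_sum]
    push_cast
    refine Finset.sum_subset (range_subset_range.2 (by lia)) fun k _ hk => ?_
    rw [Nat.choose_eq_zero_of_lt (by simpa using hk)]
    simp
  have hsum := Finset.sum_congr rfl fun k (hk : k ∈ range (n + 3)) =>
    (recurrenceCertificate_succ_sub (Nat.le_of_lt_succ (mem_range.1 hk))).symm
  have hlast : (n + 2).choose (n + 3) = 0 := Nat.choose_eq_zero_of_lt (Nat.lt_succ_self _)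
  rw [Finset.sum_range_sub, ← Finset.mul_sum, Finset.sum_add_distrib, Finset.sum_sub_distrib,
    ← Finset.mul_sum, ← Finset.mul_sum, ← Finset.mul_sum, ← hextend (n + 2) le_rfl,
    ← hextend (n + 1) (by lia), ← hextend n (by lia)] at hsum
  simp only [recurrenceCertificate, hlast] at hsum
  refine (mul_eq_zero.1 (hsum.trans ?_)).resolve_left (by positivity)
  simp

theorem a_recurrence_cast {R : Type*} [CommRing R] (n : ℕ) :
    ((n : R) + 2) ^ 2 * a (n + 2) - (10 * (n + 1) ^ 2 + 10 * (n + 1) + 3) * a (n + 1) +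
      9 * (n + 1) ^ 2 * a n = 0 := by
  simpa using congrArg (Int.cast : ℤ → R) (a_recurrence n)

theorem choose_mul_a_recurrence {R : Type*} [CommRing R] (n : ℕ) :
    ((n : R) + 2) ^ 3 * ((2 * (n + 2)).choose (n + 2) * a (n + 2)) -
        2 * (2 * n + 3) * (10 * (n + 1) ^ 2 + 10 * (n + 1) + 3) *
          ((2 * (n + 1)).choose (n + 1) * a (n + 1)) +
      36 * (n + 1) * (2 * n + 1) * (2 * n + 3) * ((2 * n).choose n * a n) = 0 := by
  have hcentral (k : ℕ) : ((k : R) + 1) * (2 * (k + 1)).choose (k + 1) =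
      2 * (2 * k + 1) * (2 * k).choose k := by
    simpa [Nat.centralBinom] using congrArg (Nat.cast : ℕ → R) (Nat.succ_mul_centralBinom_succ k)
  have hcentral₁ := hcentral (n + 1)
  push_cast at hcentral₁
  rw [show n + 1 + 1 = n + 2 from rfl] at hcentral₁
  linear_combination
    2 * (2 * (n : R) + 3) * (2 * (n + 1)).choose (n + 1) * a_recurrence_cast (R := R) n
    + (n + 2) ^ 2 * (a (n + 2) : R) * hcentral₁
    - 18 * (n + 1) * (2 * n + 3) * (a n : R) * hcentral n

theorem sum_three_term_telescope {R : Type*} [CommRing R] {g α β γ : ℕ → R}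
    (hzero : α 0 = 0) (hone : α 1 * g 1 = β 0 * g 0)
    (hrec : ∀ n, α (n + 2) * g (n + 2) - β (n + 1) * g (n + 1) + γ n * g n = 0)
    (J : ℕ → R) (n : ℕ) :
    ∑ k ∈ range (n + 1), g k * (α k * J k - β k * J (k + 1) + γ k * J (k + 2)) =
      γ n * g n * J (n + 2) - α (n + 1) * g (n + 1) * J (n + 1) := by
  induction n with
  | zero => simp [hzero]; linear_combination J 1 * hone
  | succ n ih => rw [Finset.sum_range_succ, ih]; linear_combination J (n + 2) * hrec n

end Recurrences

section SymmetricSquare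

variable {k R : Type*} [CommRing k] [CommRing R] [Algebra k R] (D : Derivation k R R)

/-- The symmetric square `D³ - 4Q D - 2 D(Q)` of the second order operator `D² - Q`. -/
def symSquareOp (Q : R) : R →ₗ[k] R :=
  D.toLinearMap ∘ₗ D.toLinearMap ∘ₗ D.toLinearMap - LinearMap.mulLeft k (4 * Q) ∘ₗ D.toLinearMap -
    LinearMap.mulLeft k (2 * D Q)

theorem symSquareOp_apply (Q f : R) :
    symSquareOp D Q f = D (D (D f)) - 4 * Q * D f - 2 * D Q * f := by
  simp [symSquareOp, mul_assoc]

theorem symSquareOp_sq {Q f : R} (hf : D (D f) = Q * f) : symSquareOp D Q (f ^ 2) = 0 := by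
  simp only [symSquareOp_apply, pow_two, Derivation.leibniz, smul_eq_mul, map_add, hf]
  ring

variable {D}

theorem mul_derivation_mul {r l₁ l₂ f₁ f₂ : R} (h₁ : r * D f₁ = l₁ * f₁)
    (h₂ : r * D f₂ = l₂ * f₂) : r * D (f₁ * f₂) = (l₁ + l₂) * (f₁ * f₂) := by
  rw [Derivation.leibniz, smul_eq_mul, smul_eq_mul]
  linear_combination f₂ * h₁ + f₁ * h₂

theorem mul_derivation_pow {r l f : R} (hf : r * D f = l * f) (n : ℕ) :
    r * D (f ^ n) = n * l * f ^ n := by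
  induction n with
  | zero => simp
  | succ n ih =>
    rw [pow_succ, mul_derivation_mul ih hf]
    push_cast
    ring

/-- Clears denominators in `symSquareOp D Q f` when `D f / f = l / r`. -/
theorem pow_three_mul_symSquareOp (Q : R) {r l f : R} (hf : r * D f = l * f) :
    r ^ 3 * symSquareOp D Q f =
      (r * D (r * D l + l ^ 2 - l * D r) + (r * D l + l ^ 2 - l * D r) * l -
        2 * D r * (r * D l + l ^ 2 - l * D r) - 4 * Q * r ^ 2 * l - 2 * D Q * r ^ 3) * f := by
  have hD := congrArg D hf
  simp only [Derivation.leibniz, smul_eq_mul] at hD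
  have hsecond : r ^ 2 * D (D f) = (r * D l + l ^ 2 - l * D r) * f := by
    linear_combination r * hD + (l - D r) * hf
  have hD₂ := congrArg D hsecond
  generalize r * D l + l ^ 2 - l * D r = M at *
  simp only [Derivation.leibniz, pow_two, smul_eq_mul] at hD₂
  rw [symSquareOp_apply]
  linear_combination r * hD₂ + (M - 4 * Q * r ^ 2) * hf - 2 * D r * hsecond

end SymmetricSquare

section LocalUniqueness

open Polynomial

variable {K : Type*} [Field K]

theorem exists_smul_derivative_pow_mul (U V : K[X]) (c : K) (m : ℕ) :
    ∃ W : K[X], (((X - C c) * U) • derivative' (R := K)) ((X - C c) ^ m * V) = (X - C c) ^ m * W ∧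
      W.eval c = m * U.eval c * V.eval c := by
  refine ⟨U * ((m : K[X]) * V + (X - C c) * derivative V), ?_, by simp; ring⟩
  rcases m with _ | m
  · simp; ring
  · simp; ring

/-- At a simple zero `c` of the leading coefficient `P` where also the potential `Q` vanishes, all
local exponents of the symmetric square are `0`, so a solution vanishing to order `m` at `c` with
`m ≠ 0` in `K` vanishes to order `m + 1`. -/
theorem pow_succ_dvd_of_symSquareOp_eq_zero {P U Q f : K[X]} {c : K} (hP : P = (X - C c) * U)
    (hU : U.eval c ≠ 0) (hQ : Q.eval c = 0) (hf : symSquareOp (P • derivative' (R := K)) Q f = 0)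
    {m : ℕ} (hm : (m : K) ≠ 0) (hdvd : (X - C c) ^ m ∣ f) : (X - C c) ^ (m + 1) ∣ f := by
  subst hP
  obtain ⟨V, rfl⟩ := hdvd
  obtain ⟨V₁, hV₁, heval₁⟩ := exists_smul_derivative_pow_mul U V c m
  obtain ⟨V₂, hV₂, heval₂⟩ := exists_smul_derivative_pow_mul U V₁ c m
  obtain ⟨V₃, hV₃, heval₃⟩ := exists_smul_derivative_pow_mul U V₂ c m
  have hDQ : ((((X - C c) * U) • derivative' (R := K)) Q).eval c = 0 := by simp
  rw [symSquareOp_apply, hV₁, hV₂, hV₃] at hf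
  generalize (((X - C c) * U) • derivative' (R := K)) Q = DQ at *
  have hcancel : (X - C c) ^ m * (V₃ - 4 * Q * V₁ - 2 * DQ * V) = 0 := by
    rw [← hf]; ring
  have heval := congrArg (eval c)
    ((mul_eq_zero.1 hcancel).resolve_left (pow_ne_zero m (X_sub_C_ne_zero c)))
  simp only [eval_sub, eval_mul, hQ, hDQ, heval₃, heval₂, heval₁] at heval
  have hV : V.eval c = 0 := by simpa [hm, hU] using heval
  rw [pow_succ]
  exact mul_dvd_mul_left _ (dvd_iff_isRoot.2 hV)

theorem pow_dvd_of_symSquareOp_eq_zero (p : ℕ) [CharP K p] {P U Q f : K[X]} {c : K}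
    (hP : P = (X - C c) * U) (hU : U.eval c ≠ 0) (hQ : Q.eval c = 0)
    (hf : symSquareOp (P • derivative' (R := K)) Q f = 0) (hroot : f.IsRoot c) :
    (X - C c) ^ p ∣ f := by
  suffices h : ∀ m < p, (X - C c) ^ (m + 1) ∣ f by
    rcases p with _ | p
    · simp
    · exact h p p.lt_succ_self
  intro m hm
  induction m with
  | zero => simpa using dvd_iff_isRoot.2 hroot
  | succ m ih =>
    refine pow_succ_dvd_of_symSquareOp_eq_zero hP hU hQ hf ?_ (ih (Nat.lt_of_succ_lt hm))
    rw [Ne, CharP.cast_eq_zero_iff K p]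
    exact Nat.not_dvd_of_pos_of_lt m.succ_pos hm

end LocalUniqueness

section TruncatedSeries

open Polynomial

section Equation

variable {R : Type*} [CommRing R]

/-- The polynomial `σ` such that `D = σ d/dX` turns the differential equation of `∑ aₖXᵏ` into
`D² = Q`. -/
noncomputable def aLeading : R[X] := X * ((1 - X) * (1 - 9 * X))

/-- The potential `Q` in the differential equation `D² = Q` of `∑ aₖXᵏ`. -/
noncomputable def aPotential : R[X] := 3 * (1 - 3 * X) * aLeading

/-- The polynomial `ρ` such that `z = σ/ρ²` is the argument of the series
`∑ C(2k,k) aₖ zᵏ` related to the square of `∑ aₖXᵏ`. -/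
noncomputable def aScale : R[X] := 1 - 9 * X ^ 2

/-- The derivation `D = σ d/dX`. -/
noncomputable def aDerivation : Derivation R R[X] R[X] :=
  (aLeading : R[X]) • derivative'

theorem aDerivation_apply (f : R[X]) : aDerivation f = aLeading * derivative f := by
  simp [aDerivation]

theorem aDerivation_X_pow (k : ℕ) :
    aDerivation (X ^ k : R[X]) = (1 - X) * (1 - 9 * X) * ((k : R[X]) * X ^ k) := by
  rw [aDerivation_apply, aLeading]
  rcases k with _ | k
  · simp
  · simp; ring

theorem aDerivation_aDerivation_X_pow_sub (k : ℕ) :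
    aDerivation (aDerivation (X ^ k : R[X])) - aPotential * X ^ k = (1 - X) * (1 - 9 * X) *
      ((k : R[X]) ^ 2 * X ^ k - (10 * (k : R[X]) ^ 2 + 10 * (k : R[X]) + 3) * X ^ (k + 1) +
        9 * ((k : R[X]) + 1) ^ 2 * X ^ (k + 2)) := by
  rw [aDerivation_X_pow, Derivation.leibniz, Derivation.leibniz, aDerivation_X_pow]
  simp only [aDerivation_apply, aPotential, aLeading, smul_eq_mul]
  simp
  ring

/-- The sum `∑ aₖXᵏ` over `k < p`. -/
noncomputable def aTrunc (p : ℕ) : R[X] := ∑ k ∈ range p, C (a k : R) * X ^ k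

theorem aDerivation_aDerivation_aTrunc (p : ℕ) [CharP R p] :
    aDerivation (aDerivation (aTrunc p : R[X])) = aPotential * aTrunc p := by
  rcases p with _ | m
  · simp [aTrunc]
  have hcast : ((m : R[X]) + 1) = 0 := by exact_mod_cast CharP.cast_eq_zero R[X] (m + 1)
  have hterm (k : ℕ) : aDerivation (aDerivation (C (a k : R) * X ^ k)) -
      aPotential * (C (a k : R) * X ^ k) = (1 - X) * (1 - 9 * X) * ((a k : R[X]) *
        ((k : R[X]) ^ 2 * X ^ k - (10 * (k : R[X]) ^ 2 + 10 * (k : R[X]) + 3) * X ^ (k + 1) +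
          9 * ((k : R[X]) + 1) ^ 2 * X ^ (k + 2))) := by
    simp only [← smul_eq_C_mul, Derivation.map_smul]
    simp only [smul_eq_C_mul, map_natCast]
    linear_combination (a k : R[X]) * aDerivation_aDerivation_X_pow_sub (R := R) k
  rw [← sub_eq_zero, aTrunc, map_sum, map_sum, Finset.mul_sum, ← Finset.sum_sub_distrib]
  simp_rw [hterm, ← Finset.mul_sum]
  rw [sum_three_term_telescope (g := fun k => (a k : R[X])) (α := fun k => (k : R[X]) ^ 2)
    (β := fun k => 10 * (k : R[X]) ^ 2 + 10 * (k : R[X]) + 3)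
    (γ := fun k => 9 * ((k : R[X]) + 1) ^ 2) (by simp) (by simp [a, Finset.sum_range_succ])
    (fun n => by simpa using a_recurrence_cast n)]
  simp [hcast]

theorem pow_three_mul_symSquareOp_term {f N : R[X]} (hN : derivative N = 0)
    (hf : aScale * aDerivation f =
      (N * (derivative aLeading * aScale) + (2 * N + 1) * (aLeading * (18 * X))) * f) :
    aScale ^ 3 * symSquareOp aDerivation aPotential f =
      (derivative aLeading * aScale + 36 * X * aLeading) *
        (N ^ 3 * aScale ^ 4 -
          2 * (2 * N + 1) * (10 * N ^ 2 + 10 * N + 3) * aLeading * aScale ^ 2 +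
          36 * (N + 1) * (2 * N + 1) * (2 * N + 3) * aLeading ^ 2) * f := by
  rw [pow_three_mul_symSquareOp _ hf]
  congr 1
  simp only [aDerivation_apply, aPotential, aLeading, aScale]
  simp [hN, derivative_pow, show (C 2 : R[X]) = 2 from rfl]
  ring

end Equation

variable {p : ℕ} [Fact p.Prime]

/-- The polynomial `zᵏρᵖ⁻¹` for `z = σ/ρ²`. -/
noncomputable def centralTerm (p k : ℕ) : (ZMod p)[X] :=
  aLeading ^ k * aScale ^ (2 * (p / 2 - k))

/-- The sum `ρᵖ⁻¹ ∑ C(2k,k) aₖ zᵏ` over `k < p` for `z = σ/ρ²`; the terms with `k > p / 2` vanish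
since `p` divides `C(2k,k)`. -/
noncomputable def centralTrunc (p : ℕ) : (ZMod p)[X] :=
  ∑ k ∈ range (p / 2 + 1), C ((2 * k).choose k * a k : ZMod p) * centralTerm p k

theorem aScale_pow_three_mul_symSquareOp_centralTerm (hp : p ≠ 2) {k : ℕ} (hk : k ≤ p / 2) :
    aScale ^ 3 * symSquareOp aDerivation aPotential (centralTerm p k) =
      (derivative aLeading * aScale + 36 * X * aLeading) *
        ((k : (ZMod p)[X]) ^ 3 * (aLeading ^ k * aScale ^ (2 * (p / 2 + 2 - k))) -
          2 * (2 * (k : (ZMod p)[X]) + 1) *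
              (10 * (k : (ZMod p)[X]) ^ 2 + 10 * (k : (ZMod p)[X]) + 3) *
            (aLeading ^ (k + 1) * aScale ^ (2 * (p / 2 + 2 - (k + 1)))) +
          36 * ((k : (ZMod p)[X]) + 1) * (2 * (k : (ZMod p)[X]) + 1) * (2 * (k : (ZMod p)[X]) + 3) *
            (aLeading ^ (k + 2) * aScale ^ (2 * (p / 2 + 2 - (k + 2))))) := by
  have hσ : aScale * aDerivation (aLeading : (ZMod p)[X]) =
      derivative aLeading * aScale * aLeading := by
    rw [aDerivation_apply]; ring
  have hρ : aScale * aDerivation (aScale : (ZMod p)[X]) = -(18 * X * aLeading) * aScale := by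
    rw [aDerivation_apply, aScale]
    simp
    ring
  have hexp : ((2 * (p / 2 - k) : ℕ) : (ZMod p)[X]) = -(2 * (k : (ZMod p)[X]) + 1) := by
    have hhalf := two_mul_natCast_half_prime (ZMod p)[X] hp
    push_cast [Nat.cast_sub hk] at hhalf ⊢
    linear_combination hhalf
  rw [pow_three_mul_symSquareOp_term (N := (k : (ZMod p)[X])) (derivative_natCast) ?_, centralTerm,
    show 2 * (p / 2 + 2 - k) = 2 * (p / 2 - k) + 4 by lia,
    show 2 * (p / 2 + 2 - (k + 1)) = 2 * (p / 2 - k) + 2 by lia,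
    show 2 * (p / 2 + 2 - (k + 2)) = 2 * (p / 2 - k) by lia]
  · ring
  · rw [centralTerm, mul_derivation_mul (mul_derivation_pow hσ _) (mul_derivation_pow hρ _), hexp]
    ring

theorem choose_two_mul_self_eq_zero {k : ℕ} (hk : p / 2 < k) (hkp : k < p) :
    ((2 * k).choose k : ZMod p) = 0 := by
  rcases eq_or_ne p 2 with rfl | hp
  · lia
  · rw [centralBinom_eq_neg_four_pow_mul_choose hp hkp, Nat.choose_eq_zero_of_lt hk]
    simp

theorem symSquareOp_centralTrunc (hp : p ≠ 2) :
    symSquareOp aDerivation aPotential (centralTrunc p) = 0 := by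
  have hρ : (aScale : (ZMod p)[X]) ≠ 0 := fun h => by simpa [aScale] using congrArg (eval 0) h
  have hhalf := two_mul_natCast_half_prime (ZMod p)[X] hp
  have hlast : ((2 * (p / 2 + 1)).choose (p / 2 + 1) : (ZMod p)[X]) = 0 := by
    have := two_mul_half_prime hp
    have := (Fact.out : p.Prime).two_le
    rw [← map_natCast C, choose_two_mul_self_eq_zero (Nat.lt_succ_self _) (by lia), map_zero]
  let α : ℕ → (ZMod p)[X] := fun k => k ^ 3
  let β : ℕ → (ZMod p)[X] := fun k => 2 * (2 * k + 1) * (10 * k ^ 2 + 10 * k + 3)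
  let γ : ℕ → (ZMod p)[X] := fun k => 36 * (k + 1) * (2 * k + 1) * (2 * k + 3)
  let J : ℕ → (ZMod p)[X] := fun k => aLeading ^ k * aScale ^ (2 * (p / 2 + 2 - k))
  have hrec (n : ℕ) : α (n + 2) * ((2 * (n + 2)).choose (n + 2) * a (n + 2)) -
      β (n + 1) * ((2 * (n + 1)).choose (n + 1) * a (n + 1)) +
      γ n * ((2 * n).choose n * a n) = 0 := by
    simp only [α, β, γ]
    push_cast
    linear_combination choose_mul_a_recurrence (R := (ZMod p)[X]) n
  have hterm (k : ℕ) (hk : k ∈ range (p / 2 + 1)) : aScale ^ 3 * symSquareOp aDerivation aPotential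
      (C ((2 * k).choose k * a k : ZMod p) * centralTerm p k) =
      (derivative aLeading * aScale + 36 * X * aLeading) *
        (((2 * k).choose k * a k : (ZMod p)[X]) *
          (α k * J k - β k * J (k + 1) + γ k * J (k + 2))) := by
    rw [← smul_eq_C_mul, map_smul, smul_eq_C_mul, mul_left_comm,
      aScale_pow_three_mul_symSquareOp_centralTerm hp (Nat.le_of_lt_succ (mem_range.1 hk)),
      map_mul, map_natCast, map_natCast]
    ring
  refine (mul_eq_zero.1 (?_ : aScale ^ 3 * _ = 0)).resolve_left (pow_ne_zero 3 hρ)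
  rw [centralTrunc, map_sum, Finset.mul_sum, Finset.sum_congr rfl hterm, ← Finset.mul_sum,
    sum_three_term_telescope (g := fun k => ((2 * k).choose k * a k : (ZMod p)[X]))
      (by simp [α]) (by simp [a, α, β, Finset.sum_range_succ]) hrec, hlast]
  have hγ : γ (p / 2) = 0 := by
    simp only [γ]
    linear_combination 36 * (((p / 2 : ℕ) : (ZMod p)[X]) + 1) * (2 * (p / 2 : ℕ) + 3) * hhalf
  simp [hγ]

theorem natDegree_aTrunc_sq_sub_centralTrunc_le (hp : p ≠ 2) :
    (aTrunc p ^ 2 - centralTrunc p).natDegree ≤ 2 * (p - 1) := by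
  have hhalf := two_mul_half_prime hp
  have hA : (aTrunc p : (ZMod p)[X]).natDegree ≤ p - 1 :=
    natDegree_sum_le_of_forall_le _ _ fun k hk =>
      (natDegree_C_mul_X_pow_le _ k).trans (Nat.le_sub_one_of_lt (mem_range.1 hk))
  have hσ : (aLeading : (ZMod p)[X]).natDegree ≤ 3 := by
    unfold aLeading
    compute_degree
  have hρ : (aScale : (ZMod p)[X]).natDegree ≤ 2 := by
    unfold aScale
    compute_degree
  refine natDegree_sub_le_of_le (natDegree_pow_le_of_le 2 hA) ?_ |>.trans (max_self _).le
  refine natDegree_sum_le_of_forall_le _ _ fun k hk => (natDegree_C_mul_le _ _).trans ?_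
  refine (natDegree_mul_le_of_le (natDegree_pow_le_of_le k hσ)
    (natDegree_pow_le_of_le (2 * (p / 2 - k)) hρ)).trans ?_
  have := mem_range.1 hk
  lia

theorem eight_ne_zero_of_ne_two (hp : p ≠ 2) : (8 : ZMod p) ≠ 0 := by
  rw [show (8 : ZMod p) = 2 ^ 3 by norm_num]
  exact pow_ne_zero 3 (two_ne_zero_of_ne_two hp)

theorem eval_one_aTrunc (hp : p ≠ 2) : (aTrunc p : (ZMod p)[X]).eval 1 = 1 := by
  have h4 : (4 : ZMod p) ≠ 0 := by
    rw [show (4 : ZMod p) = 2 ^ 2 by norm_num]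
    exact pow_ne_zero 2 (two_ne_zero_of_ne_two hp)
  have hbij : Function.Bijective fun v : ZMod p => 1 - 4 * v :=
    Finite.injective_iff_bijective.1 fun v w h => mul_left_cancel₀ h4 (sub_right_injective h)
  have hsum := sum_a_mul_pow hp (one_ne_zero (α := ZMod p))
  have hsq (v : ZMod p) :
      ((1 - 4 * v) * ((1 - 1) ^ 2 * v ^ 2 - 2 * 1 * (1 + 1) * v + 1 ^ 2)) ^ (p / 2) =
        (1 - 4 * v) ^ (p - 1) := by
    rw [← two_mul_half_prime hp, pow_mul]
    ring
  simp_rw [hsq, hbij.sum_comp (· ^ (p - 1)), sum_pow_eq_ite] at hsum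
  simpa [aTrunc, eval_finsetSum, Nat.sub_eq_zero_iff_le, (Fact.out : p.Prime).one_lt] using hsum

theorem eval_one_centralTrunc (hp : p ≠ 2) : (centralTrunc p).eval 1 = 1 := by
  have h8 := eight_ne_zero_of_ne_two hp
  have hterm (k : ℕ) : (centralTerm p k).eval 1 = if k = 0 then 1 else 0 := by
    rcases k with _ | k
    · have hscale : eval 1 (aScale : (ZMod p)[X]) = -8 := by
        simp [aScale]
        norm_num
      rw [centralTerm, pow_zero, one_mul, eval_pow, hscale, Nat.sub_zero, two_mul_half_prime hp,
        ZMod.pow_card_sub_one_eq_one (neg_ne_zero.2 h8), if_pos rfl]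
    · simp [centralTerm, aLeading]
  simp [centralTrunc, eval_finsetSum, hterm, a]

theorem aTrunc_sq_eq_centralTrunc (hp : p ≠ 2) : aTrunc p ^ 2 = centralTrunc p := by
  have hpos := (Fact.out : p.Prime).pos
  have hode : symSquareOp aDerivation aPotential (aTrunc p ^ 2 - centralTrunc p) = 0 := by
    rw [map_sub, symSquareOp_sq _ (aDerivation_aDerivation_aTrunc p), symSquareOp_centralTrunc hp,
      sub_zero]
  have hzero : (aTrunc p ^ 2 - centralTrunc p).IsRoot 0 := by
    have hA : (aTrunc p : (ZMod p)[X]).eval 0 = 1 := by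
      simp [aTrunc, eval_finsetSum, zero_pow_eq, hpos, a]
    have hH : (centralTrunc p).eval 0 = 1 := by
      simp [centralTrunc, centralTerm, eval_finsetSum, aLeading, aScale, zero_pow_eq, a]
    simp [IsRoot, hA, hH]
  have hone : (aTrunc p ^ 2 - centralTrunc p).IsRoot 1 := by
    simp [IsRoot, eval_one_aTrunc hp, eval_one_centralTrunc hp]
  have hdvd₀ : (X - C 0) ^ p ∣ aTrunc p ^ 2 - centralTrunc p :=
    pow_dvd_of_symSquareOp_eq_zero p (U := (1 - X) * (1 - 9 * X)) (by simp [aLeading]) (by simp)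
      (by simp [aPotential, aLeading]) hode hzero
  have hdvd₁ : (X - C 1) ^ p ∣ aTrunc p ^ 2 - centralTrunc p :=
    pow_dvd_of_symSquareOp_eq_zero p (U := -X * (1 - 9 * X)) (by simp [aLeading]; ring)
      (by norm_num; exact eight_ne_zero_of_ne_two hp) (by simp [aPotential, aLeading]) hode hone
  rw [← sub_eq_zero]
  refine eq_zero_of_dvd_of_natDegree_lt
    ((isCoprime_X_sub_C_of_isUnit_sub (by simp)).pow.mul_dvd hdvd₀ hdvd₁)
    ((natDegree_aTrunc_sq_sub_centralTrunc_le hp).trans_lt ?_)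
  rw [((monic_X_sub_C 0).pow p).natDegree_mul ((monic_X_sub_C 1).pow p), natDegree_pow,
    natDegree_pow, natDegree_X_sub_C, natDegree_X_sub_C]
  lia

theorem sum_choose_mul_a_div_eq_sq (h2 : (2 : ZMod p) ≠ 0) (h3 : (3 : ZMod p) ≠ 0) {s : ZMod p}
    (hs : s ^ 2 = 2) :
    ∑ k ∈ range p, (Nat.choose (2 * k) k : ZMod p) * (a k : ZMod p) / (36 : ZMod p) ^ k =
      (∑ k ∈ range p, (a k : ZMod p) * ((3 + 2 * s) / 3) ^ k) ^ 2 := by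
  have hp : p ≠ 2 := by rintro rfl; exact h2 (ZMod.natCast_self 2)
  have hsq := congrArg (eval ((3 + 2 * s) / 3)) (aTrunc_sq_eq_centralTrunc hp)
  have h36 : (36 : ZMod p) ≠ 0 := by
    rw [show (36 : ZMod p) = 2 ^ 2 * 3 ^ 2 by norm_num]
    exact mul_ne_zero (pow_ne_zero 2 h2) (pow_ne_zero 2 h3)
  have hρ : (aScale : (ZMod p)[X]).eval ((3 + 2 * s) / 3) = -4 * (4 + 3 * s) := by
    simp [aScale]
    grind
  have hσ : (aLeading : (ZMod p)[X]).eval ((3 + 2 * s) / 3) = (-4 * (4 + 3 * s)) ^ 2 / 36 := by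
    simp [aLeading]
    grind
  have hρ₀ : -4 * (4 + 3 * s) ≠ 0 := by
    refine left_ne_zero_of_mul (b := 4 - 3 * s) ?_
    rw [show -4 * (4 + 3 * s) * (4 - 3 * s) = 2 ^ 3 by linear_combination 36 * hs]
    exact pow_ne_zero 3 h2
  have hA : (aTrunc p : (ZMod p)[X]).eval ((3 + 2 * s) / 3) =
      ∑ k ∈ range p, (a k : ZMod p) * ((3 + 2 * s) / 3) ^ k := by
    simp [aTrunc, eval_finsetSum]
  rw [← hA, ← eval_pow, hsq, centralTrunc, eval_finsetSum]
  have hhalf := two_mul_half_prime hp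
  have := (Fact.out : p.Prime).two_le
  rw [← Finset.sum_subset (range_subset_range.2 (show p / 2 + 1 ≤ p by lia)) fun k hk hk' => by
    rw [choose_two_mul_self_eq_zero (by simpa using hk') (mem_range.1 hk)]; simp]
  refine Finset.sum_congr rfl fun k hk => ?_
  have hsplit : (-4 * (4 + 3 * s)) ^ (2 * k) * (-4 * (4 + 3 * s)) ^ (2 * (p / 2 - k)) = 1 := by
    have := mem_range.1 hk
    rw [← pow_add, show 2 * k + 2 * (p / 2 - k) = p - 1 by lia, ZMod.pow_card_sub_one_eq_one hρ₀]
  rw [eval_mul, eval_C, centralTerm, eval_mul, eval_pow, eval_pow, hσ, hρ, div_pow, ← pow_mul,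
    div_mul_eq_mul_div, hsplit, mul_one_div]

end TruncatedSeries

section Pullback

open PowerSeries

variable {p : ℕ} [Fact p.Prime]

theorem coeff_pow_prime_mul_of_lt (f g : (ZMod p)⟦X⟧) {n : ℕ} (hn : n < p) :
    coeff n (f ^ p * g) = constantCoeff f * coeff n g := by
  have : CharP (ZMod p)⟦X⟧ p := charP_of_injective_ringHom (f := C) C_injective p
  obtain ⟨v, hv⟩ : X ∣ f - C (constantCoeff f) := by simp [X_dvd_iff]
  rw [sub_eq_iff_eq_add.1 hv, add_pow_char, ← map_pow, ZMod.pow_card, add_mul, map_add, mul_pow,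
    mul_assoc, coeff_X_pow_mul', if_neg hn.not_ge, zero_add, coeff_C_mul]
  simp

theorem coeff_pow_mul_derivative_eq_zero {R : Type*} [CommRing R] [NoZeroDivisors R] [CharP R p]
    (f : R⟦X⟧) {j : ℕ} (hj : ((j + 1 : ℕ) : R) ≠ 0) : coeff (p - 1) (f ^ j * d⁄dX R f) = 0 := by
  have hpow : d⁄dX R (f ^ (j + 1)) = C ((j + 1 : ℕ) : R) * (f ^ j * d⁄dX R f) := by
    rw [derivative_pow]
    simp
    ring
  have hcoeff := congrArg (coeff (p - 1)) hpow
  rw [coeff_derivative, ← Nat.cast_succ, Nat.succ_eq_add_one,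
    Nat.sub_add_cancel (Fact.out : p.Prime).one_le, CharP.cast_eq_zero, mul_zero,
    coeff_C_mul] at hcoeff
  exact (mul_eq_zero.1 hcoeff.symm).resolve_left hj

theorem coeff_aeval_mul_derivative {R : Type*} [CommRing R] [NoZeroDivisors R] [CharP R p]
    (u : R⟦X⟧) {G : Polynomial R} (hG : G.natDegree < 2 * p - 1) :
    coeff (p - 1) (Polynomial.aeval (X * u) G * d⁄dX R (X * u)) =
      G.coeff (p - 1) * constantCoeff u ^ p := by
  have hp := (Fact.out : p.Prime).one_le
  rw [Polynomial.aeval_eq_sum_range' hG, Finset.sum_mul, map_sum,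
    Finset.sum_eq_single_of_mem (p - 1) (mem_range.2 (by lia))]
  · rw [smul_mul_assoc, coeff_smul, mul_pow, mul_assoc, coeff_X_pow_mul', if_pos le_rfl,
      Nat.sub_self, coeff_zero_eq_constantCoeff, map_mul, map_pow]
    simp [Derivation.leibniz, ← pow_succ, Nat.sub_add_cancel hp]
  · intro j hj hne
    have hdvd : ¬p ∣ j + 1 := by
      have hj := mem_range.1 hj
      rintro ⟨m, hm⟩
      have hm2 : m < 2 := by
        by_contra! h
        have := Nat.mul_le_mul_left p h
        lia
      interval_cases m <;> lia
    rw [smul_mul_assoc, coeff_smul, coeff_pow_mul_derivative_eq_zero _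
      (by rwa [Ne, CharP.cast_eq_zero_iff R p]), smul_zero]

/-- Compare the coefficients of `X ^ (p - 1)` in
`ρ' ^ p * F ^ (p / 2) = c ^ (p / 2) * F(ρ) ^ (p / 2) * ρ'`, where `ρ = X * u`: up to the sign
`c ^ (p / 2)`, both sides give the coefficient of `F ^ (p / 2)` times `u 0`. -/
theorem charSum_eq_zero_of_pullback (hp : p ≠ 2) {F : Polynomial (ZMod p)} (hF : F.natDegree ≤ 3)
    {u : (ZMod p)⟦X⟧} (hu₀ : constantCoeff u ≠ 0) {c : ZMod p} (hc : c ^ (p / 2) = -1)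
    (hu : d⁄dX (ZMod p) (X * u) ^ 2 * (F : (ZMod p)⟦X⟧) =
      C c * Polynomial.aeval (X * u) F) :
    charSum F = 0 := by
  have hhalf := two_mul_half_prime hp
  have htwo := (Fact.out : p.Prime).two_le
  set ρ := X * u
  have hpow : d⁄dX (ZMod p) ρ ^ p * ((F ^ (p / 2) : Polynomial (ZMod p)) : (ZMod p)⟦X⟧) =
      C (-1) * (Polynomial.aeval ρ (F ^ (p / 2)) * d⁄dX (ZMod p) ρ) := by
    have hsplit : d⁄dX (ZMod p) ρ ^ p = (d⁄dX (ZMod p) ρ ^ 2) ^ (p / 2) * d⁄dX (ZMod p) ρ := by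
      rw [← pow_mul, ← pow_succ]
      congr 1
      lia
    rw [hsplit, Polynomial.coe_pow, map_pow, ← hc, map_pow, mul_right_comm, ← mul_pow, hu, mul_pow,
      mul_assoc]
  have hdeg : (F ^ (p / 2)).natDegree < 2 * p - 1 := by
    have := Polynomial.natDegree_pow_le_of_le (p / 2) hF
    lia
  have hρ₀ : constantCoeff (d⁄dX (ZMod p) ρ) = constantCoeff u := by simp [ρ, Derivation.leibniz]
  have hcoeff := congrArg (coeff (p - 1)) hpow
  rw [coeff_pow_prime_mul_of_lt _ _ (by lia), coeff_C_mul, coeff_aeval_mul_derivative u hdeg, hρ₀,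
    Polynomial.coeff_coe, ZMod.pow_card] at hcoeff
  have hzero : 2 * constantCoeff u * (F ^ (p / 2)).coeff (p - 1) = 0 := by
    linear_combination hcoeff
  rw [charSum_eq_neg_coeff hp hF,
    (mul_eq_zero.1 hzero).resolve_left (mul_ne_zero (two_ne_zero_of_ne_two hp) hu₀), neg_zero]

end Pullback

section ComplexMultiplication

open Polynomial

variable {R : Type*} [CommRing R]

/-- Numerator of the `X`-coordinate of the isogeny of degree `6` on `Y² = X(X² + 12X + 18 - 12s)`,
`s² = 2`, which is multiplication by `√-6` followed by the translation by `(0, 0)`; the translation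
makes it have a pole at infinity. -/
noncomputable def cmNum (s : R) : R[X] :=
  (X ^ 2 + 12 * X + C (18 - 12 * s)) * (X ^ 2 + C (12 - 6 * s) * X + C (18 - 12 * s)) ^ 2

/-- Denominator of the `X`-coordinate of the isogeny of `cmNum`. -/
noncomputable def cmDen (s : R) : R[X] :=
  -6 * X * ((X - C (3 * s)) * (X - C (3 * s - 4))) ^ 2

/-- Up to the factor `6`, the Wronskian of `cmNum` and `cmDen`. -/
noncomputable def cmWronskian (s : R) : R[X] :=
  (X ^ 2 + C (12 - 6 * s) * X + C (18 - 12 * s)) * ((X - C (3 * s)) * (X - C (3 * s - 4))) *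
    (X ^ 6 - C (12 * s) * X ^ 5 - C (54 + 108 * s) * X ^ 4 + C (1296 * s - 1620) * X ^ 2 +
      C (7344 * s - 10368) * X + C (15120 * s - 21384))

theorem derivative_cmDen_mul_cmNum_sub {s : R} (hs : s ^ 2 = 2) :
    derivative (cmDen s) * cmNum s - cmDen s * derivative (cmNum s) = 6 * cmWronskian s := by
  have hS : (C s : R[X]) ^ 2 = 2 := by rw [← C_pow, hs, map_ofNat]
  simp only [cmDen, cmNum, cmWronskian, derivative_mul, derivative_pow, derivative_add,
    derivative_sub, derivative_neg, derivative_X, derivative_C, derivative_ofNat, C_sub, C_mul,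
    C_add, map_ofNat, map_natCast]
  generalize (C s : R[X]) = S at *
  generalize (X : R[X]) = T
  grind

theorem cmNum_mul_cmDen_mul {s : R} (hs : s ^ 2 = 2) :
    cmNum s * cmDen s *
        (cmNum s ^ 2 + 12 * cmNum s * cmDen s + C (18 - 12 * s) * cmDen s ^ 2) =
      -6 * twoTorsionCubic 12 (18 - 12 * s) * cmWronskian s ^ 2 := by
  have hS : (C s : R[X]) ^ 2 = 2 := by rw [← C_pow, hs, map_ofNat]
  simp only [cmDen, cmNum, cmWronskian, twoTorsionCubic, C_sub, C_mul, C_add, map_ofNat]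
  generalize (C s : R[X]) = S at *
  generalize (X : R[X]) = T
  have hsq : (T ^ 6 - 12 * S * T ^ 5 - (54 + 108 * S) * T ^ 4 + (1296 * S - 1620) * T ^ 2 +
      (7344 * S - 10368) * T + (15120 * S - 21384)) ^ 2 =
      ((T ^ 2 + 12 * T + (18 - 12 * S)) * (T ^ 2 + (12 - 6 * S) * T + (18 - 12 * S)) ^ 2) ^ 2 +
        12 * ((T ^ 2 + 12 * T + (18 - 12 * S)) * (T ^ 2 + (12 - 6 * S) * T + (18 - 12 * S)) ^ 2) *
          (-6 * T * ((T - 3 * S) * (T - (3 * S - 4))) ^ 2) +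
        (18 - 12 * S) * (-6 * T * ((T - 3 * S) * (T - (3 * S - 4))) ^ 2) ^ 2 := by
    grind
  linear_combination 6 * T * (T ^ 2 + 12 * T + (18 - 12 * S)) *
    ((T ^ 2 + (12 - 6 * S) * T + (18 - 12 * S)) * ((T - 3 * S) * (T - (3 * S - 4)))) ^ 2 * hsq

theorem natDegree_twoTorsionCubic [Nontrivial R] (α β : R) :
    (twoTorsionCubic α β).natDegree = 3 := by
  unfold twoTorsionCubic
  compute_degree!

theorem toPowerSeries_ofNat (n : ℕ) [n.AtLeastTwo] :
    ((ofNat(n) : R[X]) : PowerSeries R) = ofNat(n) :=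
  map_ofNat coeToPowerSeries.ringHom n

theorem eighteen_sub_ne_zero [NoZeroDivisors R] (h2 : (2 : R) ≠ 0) (h3 : (3 : R) ≠ 0) {s : R}
    (hs : s ^ 2 = 2) : 18 - 12 * s ≠ 0 := by
  have hnorm : (18 - 12 * s) * (18 + 12 * s) = 2 ^ 2 * 3 ^ 2 := by linear_combination -144 * hs
  exact left_ne_zero_of_mul (hnorm ▸ mul_ne_zero (pow_ne_zero 2 h2) (pow_ne_zero 2 h3))

theorem monic_cmNum (s : R) : (cmNum s).Monic := by
  unfold cmNum
  exact Monic.mul (by monicity!) (Monic.pow (by monicity!) 2)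

end ComplexMultiplication

section Supersingular

open PowerSeries

theorem exists_X_mul_mul_cmNum_eq {K : Type*} [Field K] {s : K} (hs : s ^ 2 = 2)
    (hβ : 18 - 12 * s ≠ 0) :
    ∃ u : K⟦X⟧, constantCoeff u = -6 ∧
      X * u * Polynomial.toPowerSeries (cmNum s) =
        C (18 - 12 * s) * Polynomial.toPowerSeries (cmDen s) := by
  set β := 18 - 12 * s with hβ_def
  have hN₀ : constantCoeff (Polynomial.toPowerSeries (cmNum s)) = β ^ 3 := by
    simp [cmNum, hβ_def]
    ring
  refine ⟨C β * (-6 * ((X - C (3 * s)) * (X - C (3 * s - 4))) ^ 2) *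
    (Polynomial.toPowerSeries (cmNum s))⁻¹, ?_, ?_⟩
  · have hnorm : 3 * s * (3 * s - 4) = β := by linear_combination 9 * hs
    have hsq : (3 * s) ^ 2 * (3 * s - 4) ^ 2 = β ^ 2 := by rw [← mul_pow, hnorm]
    simp only [map_mul, map_pow, map_sub, map_neg, map_ofNat, constantCoeff_C, constantCoeff_X,
      constantCoeff_inv, hN₀]
    field_simp
    linear_combination -6 * hsq
  · have hinv := PowerSeries.inv_mul_cancel (Polynomial.toPowerSeries (cmNum s)) (by simp [hN₀, hβ])
    simp only [cmDen, Polynomial.coe_mul, Polynomial.coe_pow, Polynomial.coe_neg,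
      Polynomial.coe_sub, Polynomial.coe_X, Polynomial.coe_C, toPowerSeries_ofNat]
    linear_combination X * C β * (-6 * ((X - C (3 * s)) * (X - C (3 * s - 4))) ^ 2) * hinv

theorem derivative_mul_cmNum_sq {R : Type*} [CommRing R] {s b : R} (hs : s ^ 2 = 2) {ρ : R⟦X⟧}
    (hρ : ρ * Polynomial.toPowerSeries (cmNum s) = C b * Polynomial.toPowerSeries (cmDen s)) :
    d⁄dX R ρ * Polynomial.toPowerSeries (cmNum s) ^ 2 =
      6 * C b * Polynomial.toPowerSeries (cmWronskian s) := by
  have hder := congrArg (d⁄dX R) hρ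
  have hW := congrArg Polynomial.toPowerSeries (derivative_cmDen_mul_cmNum_sub hs)
  simp only [Polynomial.coe_mul, Polynomial.coe_sub, ← PowerSeries.derivative_coe,
    toPowerSeries_ofNat] at hW
  rw [Derivation.leibniz, Derivation.leibniz (d⁄dX R) (C b), derivative_C] at hder
  simp only [smul_eq_mul] at hder
  linear_combination Polynomial.toPowerSeries (cmNum s) * hder -
    d⁄dX R (Polynomial.toPowerSeries (cmNum s)) * hρ + C b * hW

variable {p : ℕ} [Fact p.Prime]

theorem charSum_twoTorsionCubic_eq_zero (h2 : (2 : ZMod p) ≠ 0) (h3 : (3 : ZMod p) ≠ 0)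
    {s : ZMod p} (hs : s ^ 2 = 2) (h6 : (-6 : ZMod p) ^ (p / 2) = -1) :
    charSum (twoTorsionCubic 12 (18 - 12 * s)) = 0 := by
  have hp : p ≠ 2 := by rintro rfl; exact h2 rfl
  have hneg_six : (-6 : ZMod p) ≠ 0 := by
    rw [show (-6 : ZMod p) = -(2 * 3) by norm_num]
    exact neg_ne_zero.2 (mul_ne_zero h2 h3)
  obtain ⟨u, hu₀, hρ⟩ := exists_X_mul_mul_cmNum_eq hs (eighteen_sub_ne_zero h2 h3 hs)
  have hρ' := derivative_mul_cmNum_sq hs hρ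
  have hcm := congrArg Polynomial.toPowerSeries (cmNum_mul_cmDen_mul hs)
  simp only [Polynomial.coe_mul, Polynomial.coe_pow, Polynomial.coe_neg, Polynomial.coe_add,
    Polynomial.coe_C, toPowerSeries_ofNat] at hcm
  have hN : Polynomial.toPowerSeries (cmNum s) ≠ 0 := by
    rw [Ne, Polynomial.coe_eq_zero_iff]
    exact (monic_cmNum s).ne_zero
  refine charSum_eq_zero_of_pullback hp (natDegree_twoTorsionCubic _ _).le (hu₀ ▸ hneg_six) h6
    (mul_right_cancel₀ (pow_ne_zero 4 hN) ?_)
  simp only [twoTorsionCubic, map_mul, map_add, map_pow, map_neg, map_ofNat, Polynomial.aeval_X,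
    Polynomial.aeval_C, Polynomial.coe_mul, Polynomial.coe_add, Polynomial.coe_pow,
    Polynomial.coe_X, Polynomial.coe_C, PowerSeries.algebraMap_eq, toPowerSeries_ofNat] at hcm ⊢
  generalize X * u = ρ at *
  generalize Polynomial.toPowerSeries (cmNum s) = N at *
  generalize Polynomial.toPowerSeries (cmDen s) = D at *
  generalize Polynomial.toPowerSeries (cmWronskian s) = w at *
  generalize (C (18 - 12 * s) : (ZMod p)⟦X⟧) = β at *
  linear_combination
    (d⁄dX (ZMod p) ρ * N ^ 2 + 6 * β * w) * (X * (X ^ 2 + 12 * X + β)) * hρ' + 6 * β ^ 2 * hcm +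
      6 * N * ((ρ * N) ^ 2 + ρ * N * (β * D) + (β * D) ^ 2 + 12 * N * (ρ * N + β * D) +
        β * N ^ 2) * hρ

end Supersingular

section TwistedCurve

open WeierstrassCurve WeierstrassCurve.Affine

theorem bezout_cubic_derivative {R : Type*} [CommRing R] (α β x : R) :
    (-6 * (α ^ 2 - 3 * β) * x + α * (15 * β - 4 * α ^ 2)) * (x ^ 3 + α * x ^ 2 + β * x) +
        (2 * (α ^ 2 - 3 * β) * x ^ 2 + α * (2 * α ^ 2 - 7 * β) * x + β * (α ^ 2 - 4 * β)) *
          (3 * x ^ 2 + 2 * α * x + β) =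
      β ^ 2 * (α ^ 2 - 4 * β) := by
  ring

variable {L : Type*} [Field L]

/-- The quadratic twist `φ Y² = X³ + α X² + β X`, put in Weierstrass form by `x = φ X`,
`y = φ² Y`. -/
def twistedCurve (φ α β : L) : WeierstrassCurve.Affine L :=
  ⟨0, α * φ, 0, β * φ ^ 2, 0⟩

variable {φ α β : L}

/-- `R` is the affine point `(X, Y)` in the coordinates of `φ Y² = X³ + α X² + β X`. -/
def HasCoords (R : (twistedCurve φ α β).Point) (X Y : L) : Prop :=
  ∃ h, R = Point.some (φ * X) (φ ^ 2 * Y) h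

theorem Δ_twistedCurve (φ α β : L) :
    (twistedCurve φ α β).Δ = 2 ^ 4 * φ ^ 6 * β ^ 2 * (α ^ 2 - 4 * β) := by
  simp only [WeierstrassCurve.Δ, WeierstrassCurve.b₂, WeierstrassCurve.b₄, WeierstrassCurve.b₆,
    WeierstrassCurve.b₈, twistedCurve]
  ring

theorem exists_hasCoords (hφ : φ ≠ 0) (hΔ : 2 * β * (α ^ 2 - 4 * β) ≠ 0) {X Y : L}
    (h : φ * Y ^ 2 = X ^ 3 + α * X ^ 2 + β * X) :
    ∃ R : (twistedCurve φ α β).Point, HasCoords R X Y := by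
  have heq : (twistedCurve φ α β).Equation (φ * X) (φ ^ 2 * Y) := by
    rw [equation_iff]
    simp only [twistedCurve]
    linear_combination φ ^ 3 * h
  have hΔ' : (twistedCurve φ α β).Δ ≠ 0 := by
    simp only [ne_eq, mul_eq_zero, not_or] at hΔ
    simp [Δ_twistedCurve, hφ, hΔ]
  exact ⟨_, (equation_iff_nonsingular_of_Δ_ne_zero hΔ').1 heq, rfl⟩

theorem eq_zero_or_exists_hasCoords (hφ : φ ≠ 0) (R : (twistedCurve φ α β).Point) :
    R = 0 ∨ ∃ X Y, HasCoords R X Y := by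
  rcases R with _ | ⟨x, y, h⟩
  · exact Or.inl rfl
  · have hx : φ * (x / φ) = x := mul_div_cancel₀ x hφ
    have hy : φ ^ 2 * (y / φ ^ 2) = y := mul_div_cancel₀ y (pow_ne_zero 2 hφ)
    exact Or.inr ⟨x / φ, y / φ ^ 2, hx.symm ▸ hy.symm ▸ h, by simp only [hx, hy]⟩

namespace HasCoords

variable {R R' : (twistedCurve φ α β).Point} {X Y X' Y' : L}

theorem equation (hφ : φ ≠ 0) (h : HasCoords R X Y) : φ * Y ^ 2 = X ^ 3 + α * X ^ 2 + β * X := by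
  obtain ⟨h, -⟩ := h
  have heq := (equation_iff ..).1 h.1
  simp only [twistedCurve] at heq
  apply mul_left_cancel₀ (pow_ne_zero 3 hφ)
  linear_combination heq

theorem ne_zero (h : HasCoords R X Y) : R ≠ 0 := by
  obtain ⟨h, rfl⟩ := h
  exact Point.some_ne_zero h

theorem neg (h : HasCoords R X Y) : HasCoords (-R) X (-Y) := by
  obtain ⟨h, rfl⟩ := h
  have hneg : (twistedCurve φ α β).negY (φ * X) (φ ^ 2 * Y) = φ ^ 2 * -Y := by
    simp [negY, twistedCurve]
  refine ⟨hneg ▸ (nonsingular_neg ..).2 h, ?_⟩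
  rw [Point.neg_some]
  congr 1

theorem unique (hφ : φ ≠ 0) (h : HasCoords R X Y) (h' : HasCoords R X' Y') : X = X' ∧ Y = Y' := by
  obtain ⟨h, rfl⟩ := h
  obtain ⟨h', heq⟩ := h'
  rw [Point.some.injEq] at heq
  exact ⟨mul_left_cancel₀ hφ heq.1, mul_left_cancel₀ (pow_ne_zero 2 hφ) heq.2⟩

theorem eq (h : HasCoords R X Y) (h' : HasCoords R' X Y) : R = R' := by
  obtain ⟨h, rfl⟩ := h
  obtain ⟨h', rfl⟩ := h'
  rfl

theorem eq_or_eq_neg (hφ : φ ≠ 0) (h : HasCoords R X Y) (h' : HasCoords R' X Y') :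
    R = R' ∨ R = -R' := by
  have hY : Y ^ 2 = Y' ^ 2 :=
    mul_left_cancel₀ hφ ((h.equation hφ).trans (h'.equation hφ).symm)
  rcases sq_eq_sq_iff_eq_or_eq_neg.1 hY with rfl | rfl
  · exact Or.inl (h.eq h')
  · exact Or.inr (h.eq h'.neg)

variable [DecidableEq L]

theorem add_of_X_ne (hφ : φ ≠ 0) (h : HasCoords R X Y) (h' : HasCoords R' X' Y') (hX : X ≠ X')
    {l : L} (hl : l * (X - X') = Y - Y') :
    HasCoords (R + R') (φ * l ^ 2 - α - X - X')
      (-(Y + l * (φ * l ^ 2 - α - X - X' - X))) := by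
  obtain ⟨h, rfl⟩ := h
  obtain ⟨h', rfl⟩ := h'
  have hX' : φ * X ≠ φ * X' := fun heq => hX (mul_left_cancel₀ hφ heq)
  have hslope : (twistedCurve φ α β).slope (φ * X) (φ * X') (φ ^ 2 * Y) (φ ^ 2 * Y') = φ * l := by
    rw [slope_of_X_ne hX', div_eq_iff (sub_ne_zero.2 hX')]
    linear_combination -φ ^ 2 * hl
  have hadd := Point.add_of_X_ne (h₁ := h) (h₂ := h') hX'
  have hns := nonsingular_add h h' fun hxy => hX' hxy.left
  simp only [hslope] at hadd hns
  have haddX : (twistedCurve φ α β).addX (φ * X) (φ * X') (φ * l) =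
      φ * (φ * l ^ 2 - α - X - X') := by
    simp only [addX, twistedCurve]
    ring
  have haddY : (twistedCurve φ α β).addY (φ * X) (φ * X') (φ ^ 2 * Y) (φ * l) =
      φ ^ 2 * -(Y + l * (φ * l ^ 2 - α - X - X' - X)) := by
    simp only [addY, negY, negAddY, addX, twistedCurve]
    ring
  simp only [haddX, haddY] at hadd hns
  exact ⟨hns, hadd⟩

theorem add_self_of_Y_ne (hφ : φ ≠ 0) (h : HasCoords R X Y) (hY : 2 * Y ≠ 0)
    {l : L} (hl : l * (φ * (2 * Y)) = 3 * X ^ 2 + 2 * α * X + β) :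
    HasCoords (R + R) (φ * l ^ 2 - α - X - X) (-(Y + l * (φ * l ^ 2 - α - X - X - X))) := by
  obtain ⟨h, rfl⟩ := h
  have hY' : φ ^ 2 * Y ≠ (twistedCurve φ α β).negY (φ * X) (φ ^ 2 * Y) := by
    simp only [negY, twistedCurve]
    intro heq
    exact mul_ne_zero (pow_ne_zero 2 hφ) hY (by linear_combination heq)
  have hslope : (twistedCurve φ α β).slope (φ * X) (φ * X) (φ ^ 2 * Y) (φ ^ 2 * Y) = φ * l := by
    rw [slope_of_Y_ne rfl hY', div_eq_iff (sub_ne_zero.2 hY')]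
    simp only [negY, twistedCurve]
    linear_combination -φ ^ 2 * hl
  have hadd := Point.add_self_of_Y_ne (h₁ := h) hY'
  have hns := nonsingular_add h h fun hxy => hY' hxy.right
  simp only [hslope] at hadd hns
  have haddX : (twistedCurve φ α β).addX (φ * X) (φ * X) (φ * l) =
      φ * (φ * l ^ 2 - α - X - X) := by
    simp only [addX, twistedCurve]
    ring
  have haddY : (twistedCurve φ α β).addY (φ * X) (φ * X) (φ ^ 2 * Y) (φ * l) =
      φ ^ 2 * -(Y + l * (φ * l ^ 2 - α - X - X - X)) := by
    simp only [addY, negY, negAddY, addX, twistedCurve]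
    ring
  simp only [haddX, haddY] at hadd hns
  exact ⟨hns, hadd⟩

/-- The two equations for the slope `l` hold for the chord and for the tangent alike. -/
theorem exists_slope (hφ : φ ≠ 0) (h : HasCoords R X Y) (h' : HasCoords R' X' Y')
    (hne : R + R' ≠ 0) :
    ∃ l : L, l * (X - X') = Y - Y' ∧
      l * (φ * (Y + Y')) = X ^ 2 + X * X' + X' ^ 2 + α * (X + X') + β ∧
      HasCoords (R + R') (φ * l ^ 2 - α - X - X')
        (-(Y + l * (φ * l ^ 2 - α - X - X' - X))) := by
  by_cases hX : X = X'
  · subst hX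
    obtain rfl : R = R' := (h.eq_or_eq_neg hφ h').resolve_right fun heq => hne (by simp [heq])
    obtain rfl := (h.unique hφ h').2
    have hY : 2 * Y ≠ 0 := by
      intro hY
      have hYneg : -Y = Y := by linear_combination -hY
      refine hne ?_
      nth_rewrite 2 [h.eq (hYneg ▸ h.neg : HasCoords (-R) X Y)]
      exact add_neg_cancel R
    have hl : (3 * X ^ 2 + 2 * α * X + β) / (φ * (2 * Y)) * (φ * (2 * Y)) =
        3 * X ^ 2 + 2 * α * X + β := div_mul_cancel₀ _ (mul_ne_zero hφ hY)
    refine ⟨_, by ring, ?_, h.add_self_of_Y_ne hφ hY hl⟩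
    linear_combination hl
  · have hl : (Y - Y') / (X - X') * (X - X') = Y - Y' := div_mul_cancel₀ _ (sub_ne_zero.2 hX)
    refine ⟨_, hl, ?_, h.add_of_X_ne hφ h' hX hl⟩
    generalize (Y - Y') / (X - X') = l at hl
    apply mul_left_cancel₀ (sub_ne_zero.2 hX)
    linear_combination φ * (Y + Y') * hl + h.equation hφ - h'.equation hφ

end HasCoords

/-- The ratio to `dX / Y` of its pullback along `R`: for a point `(X, Y)` it is `D X / Y`, which is
correctly `0` at the points of order two, where `D X = 0` and `Y = 0`. -/
def multiplier {k : Type*} [CommRing k] [Algebra k L] (D : Derivation k L L) :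
    (twistedCurve φ α β).Point → L
  | .zero => 0
  | .some x y _ => D (x / φ) / (y / φ ^ 2)

section Multiplier

variable {k : Type*} [CommRing k] [Algebra k L] {D : Derivation k L L}
  {R R₁ R₂ : (twistedCurve φ α β).Point} {X Y : L}

theorem multiplier_zero : multiplier D (0 : (twistedCurve φ α β).Point) = 0 := rfl

theorem HasCoords.multiplier_eq (hφ : φ ≠ 0) (h : HasCoords R X Y) :
    multiplier D R = D X / Y := by
  obtain ⟨h, rfl⟩ := h
  simp only [multiplier, mul_div_cancel_left₀ _ hφ, mul_div_cancel_left₀ _ (pow_ne_zero 2 hφ)]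

theorem HasCoords.multiplier_neg (hφ : φ ≠ 0) (h : HasCoords R X Y) :
    multiplier D (-R) = -multiplier D R := by
  rw [h.neg.multiplier_eq hφ, h.multiplier_eq hφ, div_neg]

theorem HasCoords.derivative_cubic_ne_zero (hφ : φ ≠ 0) (hΔ : 2 * β * (α ^ 2 - 4 * β) ≠ 0)
    (h : HasCoords R X 0) : 3 * X ^ 2 + 2 * α * X + β ≠ 0 := by
  intro hder
  have hbez := bezout_cubic_derivative α β X
  rw [← h.equation hφ, hder] at hbez
  have hzero : β * (2 * β * (α ^ 2 - 4 * β)) = 0 := by linear_combination -2 * hbez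
  refine (mul_ne_zero ?_ hΔ) hzero
  rintro rfl
  simp at hΔ

theorem HasCoords.two_mul_derivation_Y (hφ : φ ≠ 0) (hα : D α = 0) (hβ : D β = 0)
    (h : HasCoords R X Y) :
    Y * (2 * φ * D Y + D φ * Y) = D X * (3 * X ^ 2 + 2 * α * X + β) := by
  have hD := congrArg D (h.equation hφ)
  simp only [Derivation.leibniz, Derivation.leibniz_pow, map_add, smul_eq_mul, nsmul_eq_mul, hα,
    hβ] at hD
  push_cast at hD
  linear_combination hD

theorem HasCoords.derivation_eq (hφ : φ ≠ 0) (hΔ : 2 * β * (α ^ 2 - 4 * β) ≠ 0) (hα : D α = 0)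
    (hβ : D β = 0) (h : HasCoords R X Y) :
    D X = multiplier D R * Y ∧
      2 * φ * D Y = multiplier D R * (3 * X ^ 2 + 2 * α * X + β) - D φ * Y := by
  have hD := h.two_mul_derivation_Y hφ hα hβ
  rw [h.multiplier_eq hφ]
  by_cases hY : Y = 0
  · subst hY
    have hX : D X = 0 := (mul_eq_zero.1 (hD.symm.trans (zero_mul _))).resolve_right
      (h.derivative_cubic_ne_zero hφ hΔ)
    simp [hX]
  · refine ⟨(div_mul_cancel₀ _ hY).symm, mul_left_cancel₀ hY ?_⟩
    field_simp
    linear_combination hD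

theorem HasCoords.multiplier_eq_of_derivation_eq (hφ : φ ≠ 0) (hΔ : 2 * β * (α ^ 2 - 4 * β) ≠ 0)
    (h : HasCoords R X Y) {m : L} (hX : D X = m * Y)
    (hY : 2 * φ * D Y = m * (3 * X ^ 2 + 2 * α * X + β) - D φ * Y) : multiplier D R = m := by
  rw [h.multiplier_eq hφ, hX]
  by_cases hY0 : Y = 0
  · subst hY0
    have hm : m * (3 * X ^ 2 + 2 * α * X + β) = 0 := by simpa using hY.symm
    simp [(mul_eq_zero.1 hm).resolve_right (h.derivative_cubic_ne_zero hφ hΔ)]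
  · exact mul_div_cancel_right₀ m hY0

/-- Differentiating the two equations of `HasCoords.exists_slope` gives the asserted formula
multiplied by `X₁ - X₂` and by `Y₁ + Y₂`, which do not both vanish. -/
theorem two_mul_derivation_slope (hα : D α = 0) (hβ : D β = 0) {X₁ Y₁ X₂ Y₂ m₁ m₂ l : L}
    (hne : X₁ = X₂ → Y₁ + Y₂ ≠ 0) (hl : l * (X₁ - X₂) = Y₁ - Y₂)
    (hl' : l * (φ * (Y₁ + Y₂)) = X₁ ^ 2 + X₁ * X₂ + X₂ ^ 2 + α * (X₁ + X₂) + β)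
    (hX₁ : D X₁ = m₁ * Y₁) (hY₁ : 2 * φ * D Y₁ = m₁ * (3 * X₁ ^ 2 + 2 * α * X₁ + β) - D φ * Y₁)
    (hX₂ : D X₂ = m₂ * Y₂) (hY₂ : 2 * φ * D Y₂ = m₂ * (3 * X₂ ^ 2 + 2 * α * X₂ + β) - D φ * Y₂) :
    2 * φ * D l = m₁ * (2 * X₁ + X₂ + α - φ * l ^ 2) + m₂ * (X₁ + 2 * X₂ + α - φ * l ^ 2) -
      D φ * l := by
  have hDl := congrArg D hl
  have hDl' := congrArg D hl'
  simp only [Derivation.leibniz, Derivation.leibniz_pow, map_add, map_sub, smul_eq_mul,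
    nsmul_eq_mul, hα, hβ, hX₁, hX₂] at hDl hDl'
  push_cast at hDl hDl'
  by_cases hX : X₁ = X₂
  · apply mul_left_cancel₀ (hne hX)
    linear_combination 2 * hDl' - l * hY₁ - l * hY₂ -
      m₁ * ((2 * X₁ + X₂ + α) * hl - l * hl') + m₂ * ((X₁ + 2 * X₂ + α) * hl + l * hl')
  · apply mul_left_cancel₀ (sub_ne_zero.2 hX)
    linear_combination 2 * φ * hDl + hY₁ - hY₂ + D φ * hl - (m₁ - m₂) * hl' +
      (m₁ + m₂) * φ * l * hl

variable [DecidableEq L]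

theorem multiplier_add (hφ : φ ≠ 0) (hΔ : 2 * β * (α ^ 2 - 4 * β) ≠ 0) (hα : D α = 0)
    (hβ : D β = 0) (R₁ R₂ : (twistedCurve φ α β).Point) :
    multiplier D (R₁ + R₂) = multiplier D R₁ + multiplier D R₂ := by
  rcases eq_zero_or_exists_hasCoords hφ R₁ with rfl | ⟨X₁, Y₁, h₁⟩
  · simp [multiplier_zero]
  rcases eq_zero_or_exists_hasCoords hφ R₂ with rfl | ⟨X₂, Y₂, h₂⟩
  · simp [multiplier_zero]
  by_cases hne : R₁ + R₂ = 0
  · rw [hne, eq_neg_of_add_eq_zero_right hne, h₁.multiplier_neg hφ, add_neg_cancel,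
      multiplier_zero]
  obtain ⟨l, hl, hl', h₃⟩ := h₁.exists_slope hφ h₂ hne
  obtain ⟨hX₁, hY₁⟩ := h₁.derivation_eq hφ hΔ hα hβ
  obtain ⟨hX₂, hY₂⟩ := h₂.derivation_eq hφ hΔ hα hβ
  have hY : X₁ = X₂ → Y₁ + Y₂ ≠ 0 := by
    rintro rfl h
    obtain rfl := eq_neg_of_add_eq_zero_right h
    exact hne (by rw [h₂.eq h₁.neg, add_neg_cancel])
  have hDl := two_mul_derivation_slope hα hβ hY hl hl' hX₁ hY₁ hX₂ hY₂
  have hX₃ : D (φ * l ^ 2 - α - X₁ - X₂) = (multiplier D R₁ + multiplier D R₂) *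
      -(Y₁ + l * (φ * l ^ 2 - α - X₁ - X₂ - X₁)) := by
    simp only [Derivation.leibniz, Derivation.leibniz_pow, map_sub, smul_eq_mul, nsmul_eq_mul, hα,
      hX₁, hX₂]
    push_cast
    linear_combination l * hDl - multiplier D R₂ * hl
  refine h₃.multiplier_eq_of_derivation_eq hφ hΔ hX₃ ?_
  rw [map_neg, map_add, Derivation.leibniz, map_sub, hX₃, hX₁, smul_eq_mul, smul_eq_mul]
  linear_combination (2 * X₁ + X₂ + α - φ * l ^ 2) * hDl - hY₁ +
    (2 * multiplier D R₁ + multiplier D R₂) * (hl' - φ * l * hl)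

theorem multiplier_zsmul (hφ : φ ≠ 0) (hΔ : 2 * β * (α ^ 2 - 4 * β) ≠ 0) (hα : D α = 0)
    (hβ : D β = 0) (n : ℤ) (R : (twistedCurve φ α β).Point) :
    multiplier D (n • R) = n * multiplier D R := by
  simpa using map_zsmul (AddMonoidHom.mk' (multiplier D) (multiplier_add hφ hΔ hα hβ)) n R

end Multiplier

/-- The coefficients of the binary form whose roots are `u` and `v`: the image of a pair of points
of `ℙ¹` in `Sym² ℙ¹ = ℙ²`. -/
def symCoords {R : Type*} [CommRing R] (u v : R × R) : R × R × R :=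
  (u.2 * v.2, u.1 * v.2 + v.1 * u.2, u.1 * v.1)

/-- The map of `Sym² ℙ¹` induced by `(R₁, R₂) ↦ (R₁ + R₂, R₁ - R₂)` on the `x`-coordinates of
`φ Y² = X³ + α X² + β X`. -/
def kummerMap {R : Type*} [CommRing R] (α β : R) (s : R × R × R) : R × R × R :=
  (s.2.1 ^ 2 - 4 * s.1 * s.2.2, 2 * (s.2.1 * (s.2.2 + β * s.1) + 2 * α * s.1 * s.2.2),
    (s.2.2 - β * s.1) ^ 2)

/-- Homogeneous coordinates for the value at a point of the function `X`. -/
def projX : (twistedCurve φ α β).Point → L × L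
  | .zero => (1, 0)
  | .some x _ _ => (x / φ, 1)

section Kummer

variable {R R₁ R₂ : (twistedCurve φ α β).Point} {X Y : L}

theorem projX_zero : projX (0 : (twistedCurve φ α β).Point) = (1, 0) := rfl

theorem HasCoords.projX_eq (hφ : φ ≠ 0) (h : HasCoords R X Y) : projX R = (X, 1) := by
  obtain ⟨h, rfl⟩ := h
  simp only [projX, mul_div_cancel_left₀ _ hφ]

theorem projX_neg (hφ : φ ≠ 0) (R : (twistedCurve φ α β).Point) : projX (-R) = projX R := by
  rcases eq_zero_or_exists_hasCoords hφ R with rfl | ⟨X, Y, h⟩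
  · rfl
  · rw [h.projX_eq hφ, h.neg.projX_eq hφ]

theorem symCoords_comm {R : Type*} [CommRing R] (u v : R × R) : symCoords u v = symCoords v u := by
  simp only [symCoords, mul_comm, add_comm]

variable [DecidableEq L]

theorem HasCoords.exists_kummerMap_add_self_eq (hφ : φ ≠ 0) (hΔ : 2 * β * (α ^ 2 - 4 * β) ≠ 0)
    (h : HasCoords R X Y) :
    ∃ κ : L,
      kummerMap α β (symCoords (X, 1) (X, 1)) = κ • symCoords (projX (R + R)) (1, 0) := by
  have hcubic := h.equation hφ
  have h2 : (2 : L) ≠ 0 := left_ne_zero_of_mul (left_ne_zero_of_mul hΔ)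
  by_cases hR : R + R = 0
  · have hY : Y = 0 := by
      have hneg : HasCoords R X (-Y) := by
        rw [eq_neg_of_add_eq_zero_left hR]
        exact h.neg
      refine (mul_eq_zero.1 ?_).resolve_left h2
      linear_combination (h.unique hφ hneg).2
    subst hY
    refine ⟨(X ^ 2 - β) ^ 2, ?_⟩
    rw [hR, projX_zero]
    simp only [kummerMap, symCoords, Prod.smul_mk, smul_eq_mul, Prod.mk.injEq]
    exact ⟨by ring, by linear_combination -4 * hcubic, by ring⟩
  · obtain ⟨l, -, hl, hadd⟩ := h.exists_slope hφ h hR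
    refine ⟨4 * φ * Y ^ 2, ?_⟩
    rw [hadd.projX_eq hφ]
    simp only [kummerMap, symCoords, Prod.smul_mk, smul_eq_mul, Prod.mk.injEq]
    refine ⟨by ring, by linear_combination -4 * hcubic, ?_⟩
    linear_combination (-(l * (2 * φ * Y) + (3 * X ^ 2 + 2 * α * X + β))) * hl +
      4 * (α + 2 * X) * hcubic

theorem HasCoords.kummerMap_eq_of_X_ne (hφ : φ ≠ 0) {X₁ Y₁ X₂ Y₂ : L} (h₁ : HasCoords R₁ X₁ Y₁)
    (h₂ : HasCoords R₂ X₂ Y₂) (hX : X₁ ≠ X₂) :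
    kummerMap α β (symCoords (X₁, 1) (X₂, 1)) =
      (X₁ - X₂) ^ 2 • symCoords (projX (R₁ + R₂)) (projX (R₁ - R₂)) := by
  have hX' := sub_ne_zero.2 hX
  obtain ⟨l, hl⟩ : ∃ l, l * (X₁ - X₂) = Y₁ - Y₂ := ⟨_, div_mul_cancel₀ _ hX'⟩
  obtain ⟨m, hm⟩ : ∃ m, m * (X₁ - X₂) = Y₁ - -Y₂ := ⟨_, div_mul_cancel₀ _ hX'⟩
  rw [sub_eq_add_neg R₁, (h₁.add_of_X_ne hφ h₂ hX hl).projX_eq hφ,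
    (h₁.add_of_X_ne hφ h₂.neg hX hm).projX_eq hφ]
  have hsum : (φ * l ^ 2 + φ * m ^ 2) * (X₁ - X₂) ^ 2 =
      2 * (X₁ ^ 3 + α * X₁ ^ 2 + β * X₁) + 2 * (X₂ ^ 3 + α * X₂ ^ 2 + β * X₂) := by
    linear_combination φ * (l * (X₁ - X₂) + (Y₁ - Y₂)) * hl +
      φ * (m * (X₁ - X₂) + (Y₁ + Y₂)) * hm + 2 * h₁.equation hφ + 2 * h₂.equation hφ
  have hprod : φ * l * (φ * m) * (X₁ - X₂) ^ 2 =
      φ * (X₁ ^ 3 + α * X₁ ^ 2 + β * X₁) - φ * (X₂ ^ 3 + α * X₂ ^ 2 + β * X₂) := by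
    linear_combination φ ^ 2 * m * (X₁ - X₂) * hl + φ ^ 2 * (Y₁ - Y₂) * hm +
      φ * h₁.equation hφ - φ * h₂.equation hφ
  have hprod' : φ * l ^ 2 * (φ * m ^ 2) * (X₁ - X₂) ^ 4 =
      (X₁ ^ 3 + α * X₁ ^ 2 + β * X₁ - (X₂ ^ 3 + α * X₂ ^ 2 + β * X₂)) ^ 2 := by
    apply mul_left_cancel₀ (pow_ne_zero 2 hφ)
    rw [← mul_pow, mul_sub, ← hprod]
    ring
  simp only [kummerMap, symCoords, Prod.smul_mk, smul_eq_mul, Prod.mk.injEq]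
  refine ⟨by ring, by linear_combination -hsum, ?_⟩
  apply mul_left_cancel₀ (pow_ne_zero 2 hX')
  linear_combination -hprod' + (α + X₁ + X₂) * (X₁ - X₂) ^ 2 * hsum

theorem exists_kummerMap_eq (hφ : φ ≠ 0) (hΔ : 2 * β * (α ^ 2 - 4 * β) ≠ 0)
    (R₁ R₂ : (twistedCurve φ α β).Point) :
    ∃ κ : L, kummerMap α β (symCoords (projX R₁) (projX R₂)) =
      κ • symCoords (projX (R₁ + R₂)) (projX (R₁ - R₂)) := by
  rcases eq_zero_or_exists_hasCoords hφ R₁ with rfl | ⟨X₁, Y₁, h₁⟩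
  · refine ⟨1, ?_⟩
    rw [zero_add, zero_sub, projX_neg hφ, projX_zero]
    simp only [kummerMap, symCoords, Prod.smul_mk, smul_eq_mul, Prod.mk.injEq]
    exact ⟨by ring, by ring, by ring⟩
  rcases eq_zero_or_exists_hasCoords hφ R₂ with rfl | ⟨X₂, Y₂, h₂⟩
  · refine ⟨1, ?_⟩
    rw [add_zero, sub_zero, projX_zero]
    simp only [kummerMap, symCoords, Prod.smul_mk, smul_eq_mul, Prod.mk.injEq]
    exact ⟨by ring, by ring, by ring⟩
  rw [h₁.projX_eq hφ, h₂.projX_eq hφ]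
  by_cases hX : X₁ = X₂
  · subst hX
    obtain ⟨κ, heq⟩ := h₁.exists_kummerMap_add_self_eq hφ hΔ
    refine ⟨κ, ?_⟩
    rcases h₁.eq_or_eq_neg hφ h₂ with rfl | rfl
    · rw [sub_self, projX_zero, heq]
    · rw [heq, neg_add_cancel, projX_zero, symCoords_comm, ← neg_add, projX_neg hφ,
        ← projX_neg hφ (-R₂ - R₂), neg_sub, sub_neg_eq_add]
  · exact ⟨(X₁ - X₂) ^ 2, h₁.kummerMap_eq_of_X_ne hφ h₂ hX⟩

end Kummer

end TwistedCurve

section KummerDomain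

variable {R S : Type*} [CommRing R] [CommRing S]

theorem symCoords_ne_zero [IsDomain R] {u v : R × R} (hu : u ≠ 0) (hv : v ≠ 0) :
    symCoords u v ≠ 0 := by
  obtain ⟨a, b⟩ := u
  obtain ⟨c, d⟩ := v
  simp only [symCoords, ne_eq, Prod.mk_eq_zero] at *
  grind [mul_eq_zero]

theorem kummerMap_ne_zero [IsDomain R] {α β : R} (hΔ : 2 * β * (α ^ 2 - 4 * β) ≠ 0)
    {s : R × R × R} (hs : s ≠ 0) : kummerMap α β s ≠ 0 := by
  obtain ⟨s₀, s₁, s₂⟩ := s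
  contrapose! hs
  simp only [kummerMap, Prod.mk_eq_zero, pow_eq_zero_iff two_ne_zero] at hs ⊢
  obtain ⟨h₀, h₁, h₂⟩ := hs
  obtain rfl : s₂ = β * s₀ := sub_eq_zero.1 h₂
  have hs₀ : s₀ = 0 := by
    have hmul : 2 * β * (α ^ 2 - 4 * β) * (2 * s₀ ^ 3) = 0 := by
      linear_combination 4 * β * s₀ * h₀ - (s₁ - α * s₀) * h₁
    have h2 : (2 : R) ≠ 0 := left_ne_zero_of_mul (left_ne_zero_of_mul hΔ)
    simpa [h2] using (mul_eq_zero.1 hmul).resolve_left hΔ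
  subst hs₀
  refine ⟨rfl, ?_, mul_zero β⟩
  simpa using h₀

theorem symCoords_smul (t r : R) (u v : R × R) :
    symCoords (t • u) (r • v) = (t * r) • symCoords u v := by
  simp only [symCoords, Prod.smul_fst, Prod.smul_snd, Prod.smul_mk, smul_eq_mul, Prod.mk.injEq]
  exact ⟨by ring, by ring, by ring⟩

theorem kummerMap_smul (α β t : R) (s : R × R × R) :
    kummerMap α β (t • s) = t ^ 2 • kummerMap α β s := by
  simp only [kummerMap, Prod.smul_fst, Prod.smul_snd, Prod.smul_mk, smul_eq_mul, Prod.mk.injEq]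
  exact ⟨by ring, by ring, by ring⟩

theorem symCoords_map (f : R →+* S) (u v : R × R) :
    symCoords (Prod.map f f u) (Prod.map f f v) = Prod.map f (Prod.map f f) (symCoords u v) := by
  simp [symCoords]

theorem kummerMap_map (f : R →+* S) (α β : R) (s : R × R × R) :
    kummerMap (f α) (f β) (Prod.map f (Prod.map f f) s) =
      Prod.map f (Prod.map f f) (kummerMap α β s) := by
  simp [kummerMap, map_ofNat]

/-- A coprime multiplier of a triple that is nonzero modulo every prime is a unit. -/
theorem isUnit_of_smul_eq_smul {m n : R} (hmn : IsCoprime m n) {s t : R × R × R}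
    (ht : ∀ I : Ideal R, I.IsPrime →
      Prod.map (Ideal.Quotient.mk I) (Prod.map (Ideal.Quotient.mk I) (Ideal.Quotient.mk I)) t ≠ 0)
    (h : m • s = n • t) : IsUnit m := by
  by_contra hm
  obtain ⟨I, hI, hmI⟩ := exists_max_ideal_of_mem_nonunits hm
  refine ht I hI.isPrime ?_
  obtain ⟨u, v, huv⟩ := hmn
  have hmem : ∀ x y : R, m * x = n * y → Ideal.Quotient.mk I y = 0 := by
    intro x y hxy
    rw [Ideal.Quotient.eq_zero_iff_mem, show y = (u * y + v * x) * m by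
      linear_combination -y * huv - v * hxy]
    exact I.mul_mem_left _ hmI
  simp only [Prod.ext_iff, Prod.smul_fst, Prod.smul_snd, smul_eq_mul] at h
  simp only [Prod.ext_iff, Prod.map_fst, Prod.map_snd, Prod.fst_zero, Prod.snd_zero]
  exact ⟨hmem _ _ h.1, hmem _ _ h.2.1, hmem _ _ h.2.2⟩

theorem map_mk_ne_zero_of_isCoprime {u : R × R} (hu : IsCoprime u.1 u.2)
    (I : Ideal R) [I.IsPrime] :
    Prod.map (Ideal.Quotient.mk I) (Ideal.Quotient.mk I) u ≠ 0 := by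
  intro h
  rw [Prod.ext_iff] at h
  obtain ⟨x, y, hxy⟩ := hu.map (Ideal.Quotient.mk I)
  simp only [Prod.map_fst, Prod.map_snd, Prod.fst_zero, Prod.snd_zero] at h
  simp [h.1, h.2] at hxy

end KummerDomain

section Heights

open Polynomial

variable {K : Type*} [Field K]

theorem isUnit_of_smul_kummerMap_eq {α β : K} (hΔ : 2 * β * (α ^ 2 - 4 * β) ≠ 0)
    {u₁ u₂ u₃ u₄ : K[X] × K[X]} (h₁ : IsCoprime u₁.1 u₁.2) (h₂ : IsCoprime u₂.1 u₂.2)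
    (h₃ : IsCoprime u₃.1 u₃.2) (h₄ : IsCoprime u₄.1 u₄.2) {m n : K[X]} (hmn : IsCoprime m n)
    (h : m • kummerMap (C α) (C β) (symCoords u₁ u₂) = n • symCoords u₃ u₄) :
    IsUnit m ∧ IsUnit n := by
  refine ⟨isUnit_of_smul_eq_smul hmn (fun I hI => ?_) h,
    isUnit_of_smul_eq_smul hmn.symm (fun I hI => ?_) h.symm⟩
  · rw [← symCoords_map]
    exact symCoords_ne_zero (map_mk_ne_zero_of_isCoprime h₃ I) (map_mk_ne_zero_of_isCoprime h₄ I)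
  · have hΔ' := (map_ne_zero ((Ideal.Quotient.mk I).comp C)).2 hΔ
    simp only [map_mul, map_sub, map_pow, map_ofNat, RingHom.comp_apply] at hΔ'
    rw [← kummerMap_map, ← symCoords_map]
    exact kummerMap_ne_zero hΔ' (symCoords_ne_zero (map_mk_ne_zero_of_isCoprime h₁ I)
      (map_mk_ne_zero_of_isCoprime h₂ I))

/-- The larger of the degrees of the entries. -/
def pairDegree (u : K[X] × K[X]) : ℕ := max u.1.natDegree u.2.natDegree

/-- The entries' coefficients in degree `pairDegree u`: the value at `T = ∞` of the point of `ℙ¹`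
with homogeneous coordinates `u`. -/
def pairLead (u : K[X] × K[X]) : K × K := (u.1.coeff (pairDegree u), u.2.coeff (pairDegree u))

theorem pairLead_ne_zero {u : K[X] × K[X]} (hu : u ≠ 0) : pairLead u ≠ 0 := by
  obtain ⟨a, b⟩ := u
  contrapose! hu
  simp only [pairLead, pairDegree, Prod.mk_eq_zero] at hu ⊢
  rcases le_total a.natDegree b.natDegree with h | h
  · rw [max_eq_right h] at hu
    obtain rfl : b = 0 := leadingCoeff_eq_zero.1 hu.2
    rw [natDegree_zero, nonpos_iff_eq_zero] at h
    exact ⟨leadingCoeff_eq_zero.1 (by simpa [leadingCoeff, h] using hu.1), rfl⟩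
  · rw [max_eq_left h] at hu
    obtain rfl : a = 0 := leadingCoeff_eq_zero.1 hu.1
    rw [natDegree_zero, nonpos_iff_eq_zero] at h
    exact ⟨rfl, leadingCoeff_eq_zero.1 (by simpa [leadingCoeff, h] using hu.2)⟩

/-- The entries of `s` have degree at most `d`, with coefficients `v` in degree `d`. -/
structure HasLead (s : K[X] × K[X] × K[X]) (d : ℕ) (v : K × K × K) : Prop where
  natDegree_le : s.1.natDegree ≤ d ∧ s.2.1.natDegree ≤ d ∧ s.2.2.natDegree ≤ d
  coeff_eq : (s.1.coeff d, s.2.1.coeff d, s.2.2.coeff d) = v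

theorem HasLead.le {s : K[X] × K[X] × K[X]} {d d' : ℕ} {v v' : K × K × K} (h : HasLead s d v)
    (h' : HasLead s d' v') (hv : v ≠ 0) : d ≤ d' := by
  contrapose! hv
  obtain ⟨h₁, h₂, h₃⟩ := h'.natDegree_le
  rw [← h.coeff_eq, coeff_eq_zero_of_natDegree_lt (h₁.trans_lt hv),
    coeff_eq_zero_of_natDegree_lt (h₂.trans_lt hv), coeff_eq_zero_of_natDegree_lt (h₃.trans_lt hv)]
  rfl

theorem HasLead.unique {s : K[X] × K[X] × K[X]} {d d' : ℕ} {v v' : K × K × K} (h : HasLead s d v)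
    (h' : HasLead s d' v') (hv : v ≠ 0) (hv' : v' ≠ 0) : d = d' ∧ v = v' := by
  obtain rfl := (h.le h' hv).antisymm (h'.le h hv')
  exact ⟨rfl, h.coeff_eq.symm.trans h'.coeff_eq⟩

theorem HasLead.smul {s : K[X] × K[X] × K[X]} {d : ℕ} {v : K × K × K} (h : HasLead s d v) (c : K) :
    HasLead (C c • s) d (c • v) := by
  obtain ⟨⟨h₁, h₂, h₃⟩, rfl⟩ := h
  refine ⟨⟨?_, ?_, ?_⟩, by simp⟩
  exacts [(natDegree_C_mul_le c _).trans h₁, (natDegree_C_mul_le c _).trans h₂,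
    (natDegree_C_mul_le c _).trans h₃]

theorem hasLead_symCoords (u v : K[X] × K[X]) :
    HasLead (symCoords u v) (pairDegree u + pairDegree v)
      (symCoords (pairLead u) (pairLead v)) := by
  have hu₁ : u.1.natDegree ≤ pairDegree u := le_max_left ..
  have hu₂ : u.2.natDegree ≤ pairDegree u := le_max_right ..
  have hv₁ : v.1.natDegree ≤ pairDegree v := le_max_left ..
  have hv₂ : v.2.natDegree ≤ pairDegree v := le_max_right ..
  refine ⟨⟨natDegree_mul_le_of_le hu₂ hv₂, ?_, natDegree_mul_le_of_le hu₁ hv₁⟩, ?_⟩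
  · exact natDegree_add_le_of_degree_le (natDegree_mul_le_of_le hu₁ hv₂)
      ((natDegree_mul_le_of_le hv₁ hu₂).trans_eq (add_comm ..))
  · simp only [symCoords, pairLead, coeff_add, coeff_mul_add_eq_of_natDegree_le hu₂ hv₂,
      coeff_mul_add_eq_of_natDegree_le hu₁ hv₂, coeff_mul_add_eq_of_natDegree_le hu₁ hv₁]
    rw [add_comm (pairDegree u), coeff_mul_add_eq_of_natDegree_le hv₁ hu₂]

theorem HasLead.kummerMap {s : K[X] × K[X] × K[X]} {d : ℕ} {v : K × K × K} (h : HasLead s d v)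
    (α β : K) : HasLead (kummerMap (C α) (C β) s) (d + d) (kummerMap α β v) := by
  obtain ⟨⟨h₁, h₂, h₃⟩, rfl⟩ := h
  obtain ⟨f, g, h⟩ := s
  dsimp only at h₁ h₂ h₃
  have hsum : (h + C β * f).natDegree ≤ d :=
    natDegree_add_le_of_degree_le h₃ ((natDegree_C_mul_le β f).trans h₁)
  have hdiff : (h - C β * f).natDegree ≤ d :=
    (natDegree_sub_le_of_le h₃ ((natDegree_C_mul_le β f).trans h₁)).trans_eq (max_self d)
  have hprod : (f * h).natDegree ≤ d + d := natDegree_mul_le_of_le h₁ h₃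
  have heq : _root_.kummerMap (C α) (C β) (f, g, h) = (g * g - C 4 * (f * h),
      C 2 * (g * (h + C β * f) + C (2 * α) * (f * h)),
      (h - C β * f) * (h - C β * f)) := by
    simp only [_root_.kummerMap, C_mul, map_ofNat, Prod.mk.injEq]
    exact ⟨by ring, by ring, by ring⟩
  rw [heq]
  refine ⟨⟨?_, ?_, natDegree_mul_le_of_le hdiff hdiff⟩, ?_⟩
  · exact (natDegree_sub_le_of_le (natDegree_mul_le_of_le h₂ h₂)
      ((natDegree_C_mul_le _ _).trans hprod)).trans_eq (max_self (d + d))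
  · exact (natDegree_C_mul_le _ _).trans (natDegree_add_le_of_degree_le
      (natDegree_mul_le_of_le h₂ hsum) ((natDegree_C_mul_le _ _).trans hprod))
  · simp only [_root_.kummerMap, coeff_sub, coeff_add, coeff_C_mul,
      coeff_mul_add_eq_of_natDegree_le h₂ h₂, coeff_mul_add_eq_of_natDegree_le h₁ h₃,
      coeff_mul_add_eq_of_natDegree_le h₂ hsum, coeff_mul_add_eq_of_natDegree_le hdiff hdiff,
      Prod.mk.injEq]
    exact ⟨by ring, by ring, by ring⟩

end Heights

section RationalPoints

open Polynomial WeierstrassCurve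

variable {K : Type*} [Field K]

local notation "ι" => algebraMap K[X] (RatFunc K)

theorem exists_C_mul_num_denom_eq {a b : K[X]} (hb : b ≠ 0) (hab : IsCoprime a b) :
    ∃ c : K, c ≠ 0 ∧ (a, b) = C c • ((ι a / ι b).num, (ι a / ι b).denom) := by
  have hcross := (RatFunc.num_mul_eq_mul_denom_iff (x := ι a / ι b) (p := a) hb).2 rfl
  have hcop := (ι a / ι b).isCoprime_num_denom
  obtain ⟨u, hu⟩ : Associated (ι a / ι b).denom b := associated_of_dvd_dvd
    (hcop.symm.dvd_of_dvd_mul_left (hcross ▸ dvd_mul_left _ _))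
    (hab.symm.dvd_of_dvd_mul_left (hcross ▸ dvd_mul_left _ _))
  obtain ⟨c, hc, hcu⟩ := isUnit_iff.1 u.isUnit
  rw [← hcu] at hu
  refine ⟨c, hc.ne_zero, Prod.ext ?_ ((mul_comm _ _).trans hu).symm⟩
  refine mul_right_cancel₀ (ι a / ι b).denom_ne_zero ?_
  simp only [Prod.smul_fst, smul_eq_mul]
  linear_combination -hcross - (ι a / ι b).num * hu

/-- Differentiation of rational functions, as a function. -/
noncomputable def ratDeriv (x : RatFunc K) : RatFunc K :=
  ι (derivative x.num * x.denom - x.num * derivative x.denom) / ι x.denom ^ 2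

theorem ratDeriv_div (a : K[X]) {b : K[X]} (hb : b ≠ 0) :
    ratDeriv (ι a / ι b) = ι (derivative a * b - a * derivative b) / ι b ^ 2 := by
  have hcross := (RatFunc.num_mul_eq_mul_denom_iff (x := ι a / ι b) (p := a) hb).2 rfl
  have hder := congrArg derivative hcross
  have hden := (ι a / ι b).denom_ne_zero
  unfold ratDeriv
  generalize (ι a / ι b).num = N at *
  generalize (ι a / ι b).denom = M at *
  rw [div_eq_div_iff (pow_ne_zero 2 (RatFunc.algebraMap_ne_zero hden))
    (pow_ne_zero 2 (RatFunc.algebraMap_ne_zero hb)), ← map_pow, ← map_pow, ← map_mul, ← map_mul]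
  rw [derivative_mul, derivative_mul] at hder
  congr 1
  linear_combination (b * M) * hder - (derivative b * M + derivative M * b) * hcross

theorem ratDeriv_algebraMap (a : K[X]) : ratDeriv (ι a) = ι (derivative a) := by
  simpa using ratDeriv_div a one_ne_zero

theorem ratDeriv_add (x y : RatFunc K) : ratDeriv (x + y) = ratDeriv x + ratDeriv y := by
  induction x using RatFunc.induction_on with | _ a b hb
  induction y using RatFunc.induction_on with | _ c d hd
  have hb' := RatFunc.algebraMap_ne_zero hb
  have hd' := RatFunc.algebraMap_ne_zero hd
  rw [div_add_div _ _ hb' hd', ← map_mul, ← map_mul, ← map_mul, ← map_add,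
    ratDeriv_div _ (mul_ne_zero hb hd), ratDeriv_div _ hb, ratDeriv_div _ hd]
  simp only [map_mul, map_add, map_sub, derivative_mul]
  field_simp
  ring

theorem ratDeriv_mul (x y : RatFunc K) : ratDeriv (x * y) = x * ratDeriv y + y * ratDeriv x := by
  induction x using RatFunc.induction_on with | _ a b hb
  induction y using RatFunc.induction_on with | _ c d hd
  have hb' := RatFunc.algebraMap_ne_zero hb
  have hd' := RatFunc.algebraMap_ne_zero hd
  rw [div_mul_div_comm, ← map_mul, ← map_mul, ratDeriv_div _ (mul_ne_zero hb hd),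
    ratDeriv_div _ hb, ratDeriv_div _ hd]
  simp only [map_mul, map_add, map_sub, derivative_mul]
  field_simp
  ring

/-- Differentiation of rational functions, as a derivation. -/
noncomputable def ratDerivation : Derivation K (RatFunc K) (RatFunc K) :=
  Derivation.mk'
    { toFun := ratDeriv
      map_add' := ratDeriv_add
      map_smul' c x := by
        rw [RingHom.id_apply, Algebra.smul_def, ratDeriv_mul, Algebra.smul_def,
          IsScalarTower.algebraMap_apply K K[X] (RatFunc K), ratDeriv_algebraMap,
          algebraMap_eq, derivative_C, map_zero, mul_zero, add_zero] }
    ratDeriv_mul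

theorem ratDerivation_div (a : K[X]) {b : K[X]} (hb : b ≠ 0) :
    ratDerivation (ι a / ι b) = ι (derivative a * b - a * derivative b) / ι b ^ 2 :=
  ratDeriv_div a hb

theorem ratDerivation_algebraMap (a : K[X]) : ratDerivation (ι a) = ι (derivative a) :=
  ratDeriv_algebraMap a

/-- The twist `F(T) Y² = X³ + α X² + β X` over `K(T)`. -/
noncomputable abbrev ratCurve (F : K[X]) (α β : K) : WeierstrassCurve.Affine (RatFunc K) :=
  twistedCurve (ι F) (ι (C α)) (ι (C β))

variable {F : K[X]} {α β : K}

/-- Coprime polynomial homogeneous coordinates for the value at a point of the function `X`. -/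
noncomputable def xPair : (ratCurve F α β).Point → K[X] × K[X]
  | .zero => (1, 0)
  | .some x _ _ => ((x / ι F).num, (x / ι F).denom)

/-- The naive height, that is the degree in `T` of the function `X`. -/
noncomputable def height (R : (ratCurve F α β).Point) : ℕ := pairDegree (xPair R)

variable {R : (ratCurve F α β).Point}

theorem xPair_zero : xPair (0 : (ratCurve F α β).Point) = (1, 0) := rfl

theorem HasCoords.xPair_eq (hF : F ≠ 0) {X Y : RatFunc K} (h : HasCoords R X Y) :
    xPair R = (X.num, X.denom) := by
  obtain ⟨h, rfl⟩ := h
  simp only [xPair, mul_div_cancel_left₀ _ (RatFunc.algebraMap_ne_zero hF)]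

theorem isCoprime_xPair (R : (ratCurve F α β).Point) : IsCoprime (xPair R).1 (xPair R).2 := by
  rcases R with _ | ⟨x, _, _⟩
  · exact isCoprime_one_left
  · exact (x / ι F).isCoprime_num_denom

theorem xPair_ne_zero (R : (ratCurve F α β).Point) : xPair R ≠ 0 := by
  intro h
  have hcop := isCoprime_xPair R
  rw [h] at hcop
  exact not_isCoprime_zero_zero hcop

theorem xPair_neg (hF : F ≠ 0) (R : (ratCurve F α β).Point) : xPair (-R) = xPair R := by
  rcases eq_zero_or_exists_hasCoords (RatFunc.algebraMap_ne_zero hF) R with rfl | ⟨X, Y, h⟩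
  · rfl
  · rw [h.xPair_eq hF, h.neg.xPair_eq hF]

theorem exists_projX_eq_smul_xPair (hF : F ≠ 0) (R : (ratCurve F α β).Point) :
    ∃ t : RatFunc K, t ≠ 0 ∧ projX R = t • Prod.map ι ι (xPair R) := by
  have hF' := RatFunc.algebraMap_ne_zero hF
  rcases eq_zero_or_exists_hasCoords hF' R with rfl | ⟨X, Y, h⟩
  · exact ⟨1, one_ne_zero, by rw [projX_zero, xPair_zero]; simp⟩
  · have hden := RatFunc.algebraMap_ne_zero X.denom_ne_zero
    refine ⟨(ι X.denom)⁻¹, inv_ne_zero hden, ?_⟩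
    rw [h.projX_eq hF', h.xPair_eq hF]
    simp only [Prod.map_apply, Prod.smul_mk, smul_eq_mul, inv_mul_cancel₀ hden, Prod.mk.injEq,
      and_true]
    rw [mul_comm, ← div_eq_mul_inv, RatFunc.num_div_denom]

theorem pairDegree_C_smul {c : K} (hc : c ≠ 0) (u : K[X] × K[X]) :
    pairDegree (C c • u) = pairDegree u := by
  simp [pairDegree, natDegree_C_mul hc]

theorem pairLead_snd_eq_zero_iff {u : K[X] × K[X]} (hu : u ≠ 0) :
    (pairLead u).2 = 0 ↔ u.2.degree < u.1.degree := by
  constructor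
  · intro h
    contrapose! hu
    have hdeg : pairDegree u = u.2.natDegree := max_eq_right (natDegree_le_natDegree hu)
    rw [pairLead, hdeg] at h
    have h₂ : u.2 = 0 := leadingCoeff_eq_zero.1 h
    rw [h₂, degree_zero, le_bot_iff, degree_eq_bot] at hu
    exact Prod.ext hu h₂
  · intro h
    exact coeff_eq_zero_of_degree_lt
      (h.trans_le (degree_le_natDegree.trans (Nat.cast_le.2 (le_max_left ..))))

theorem four_torsion_poly_ne_zero (hΔ : 2 * β * (α ^ 2 - 4 * β) ≠ 0) :
    2 * ι (C β) * (ι (C α) ^ 2 - 4 * ι (C β)) ≠ 0 := by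
  have h := RatFunc.algebraMap_ne_zero (C_ne_zero.2 hΔ)
  simpa only [map_mul, map_sub, map_pow, map_ofNat] using h

variable [DecidableEq (RatFunc K)]

theorem exists_kummerMap_xPair_eq (hF : F ≠ 0) (hΔ : 2 * β * (α ^ 2 - 4 * β) ≠ 0)
    (R₁ R₂ : (ratCurve F α β).Point) :
    ∃ c : K, c ≠ 0 ∧ kummerMap (C α) (C β) (symCoords (xPair R₁) (xPair R₂)) =
      C c • symCoords (xPair (R₁ + R₂)) (xPair (R₁ - R₂)) := by
  obtain ⟨t₁, ht₁, h₁⟩ := exists_projX_eq_smul_xPair hF R₁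
  obtain ⟨t₂, ht₂, h₂⟩ := exists_projX_eq_smul_xPair hF R₂
  obtain ⟨t₃, -, h₃⟩ := exists_projX_eq_smul_xPair hF (R₁ + R₂)
  obtain ⟨t₄, -, h₄⟩ := exists_projX_eq_smul_xPair hF (R₁ - R₂)
  obtain ⟨κ, heq⟩ := exists_kummerMap_eq (RatFunc.algebraMap_ne_zero hF)
    (four_torsion_poly_ne_zero hΔ) R₁ R₂
  rw [h₁, h₂, h₃, h₄, symCoords_smul, symCoords_smul, kummerMap_smul, symCoords_map,
    symCoords_map, kummerMap_map, smul_smul] at heq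
  obtain ⟨ρ, hρ⟩ : ∃ ρ, ρ = κ * (t₃ * t₄) / (t₁ * t₂) ^ 2 := ⟨_, rfl⟩
  have ht₁₂ := pow_ne_zero 2 (mul_ne_zero ht₁ ht₂)
  have hsmul : ρ.denom • kummerMap (C α) (C β) (symCoords (xPair R₁) (xPair R₂)) =
      ρ.num • symCoords (xPair (R₁ + R₂)) (xPair (R₁ - R₂)) := by
    rw [eq_div_iff ht₁₂, ← ρ.num_div_denom,
      div_mul_eq_mul_div, div_eq_iff (RatFunc.algebraMap_ne_zero ρ.denom_ne_zero)] at hρ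
    generalize kummerMap (C α) (C β) (symCoords (xPair R₁) (xPair R₂)) = s at *
    generalize symCoords (xPair (R₁ + R₂)) (xPair (R₁ - R₂)) = s' at *
    have hentry : ∀ f g : K[X], (t₁ * t₂) ^ 2 * ι f = κ * (t₃ * t₄) * ι g →
        ρ.denom * f = ρ.num * g := by
      intro f g hfg
      apply RatFunc.algebraMap_injective K
      apply mul_left_cancel₀ ht₁₂
      rw [map_mul, map_mul]
      linear_combination ι ρ.denom * hfg - ι g * hρ
    simp only [Prod.ext_iff, Prod.smul_fst, Prod.smul_snd, Prod.map_fst, Prod.map_snd,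
      smul_eq_mul] at heq ⊢
    exact ⟨hentry _ _ heq.1, hentry _ _ heq.2.1, hentry _ _ heq.2.2⟩
  obtain ⟨hm, hn⟩ := isUnit_of_smul_kummerMap_eq hΔ (isCoprime_xPair _) (isCoprime_xPair _)
    (isCoprime_xPair _) (isCoprime_xPair _) ρ.isCoprime_num_denom.symm hsmul
  obtain ⟨m, hm, hm'⟩ := isUnit_iff.1 hm
  obtain ⟨n, hn, hn'⟩ := isUnit_iff.1 hn
  refine ⟨m⁻¹ * n, mul_ne_zero (inv_ne_zero hm.ne_zero) hn.ne_zero, ?_⟩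
  rw [C_mul, mul_smul, hn', ← hsmul, ← hm', smul_smul, ← C_mul, inv_mul_cancel₀ hm.ne_zero, C_1,
    one_smul]

theorem height_add_height_sub_and_exists_kummerMap_pairLead_eq (hF : F ≠ 0)
    (hΔ : 2 * β * (α ^ 2 - 4 * β) ≠ 0) (R₁ R₂ : (ratCurve F α β).Point) :
    height (R₁ + R₂) + height (R₁ - R₂) = 2 * (height R₁ + height R₂) ∧
      ∃ c : K, c ≠ 0 ∧
        kummerMap α β (symCoords (pairLead (xPair R₁)) (pairLead (xPair R₂))) =
          c • symCoords (pairLead (xPair (R₁ + R₂))) (pairLead (xPair (R₁ - R₂))) := by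
  obtain ⟨c, hc, heq⟩ := exists_kummerMap_xPair_eq hF hΔ R₁ R₂
  have hlead : ∀ R : (ratCurve F α β).Point, pairLead (xPair R) ≠ 0 :=
    fun R => pairLead_ne_zero (xPair_ne_zero R)
  have hl := (hasLead_symCoords (xPair R₁) (xPair R₂)).kummerMap α β
  rw [heq] at hl
  obtain ⟨hd, hv⟩ := hl.unique ((hasLead_symCoords _ _).smul c)
    (kummerMap_ne_zero hΔ (symCoords_ne_zero (hlead _) (hlead _)))
    (smul_ne_zero hc (symCoords_ne_zero (hlead _) (hlead _)))
  refine ⟨?_, c, hc, hv⟩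
  simp only [height]
  omega

theorem height_add_add_height_sub (hF : F ≠ 0) (hΔ : 2 * β * (α ^ 2 - 4 * β) ≠ 0)
    (R₁ R₂ : (ratCurve F α β).Point) :
    height (R₁ + R₂) + height (R₁ - R₂) = 2 * (height R₁ + height R₂) :=
  (height_add_height_sub_and_exists_kummerMap_pairLead_eq hF hΔ R₁ R₂).1

/-- The points which specialize to `0` at `T = ∞`, in the coordinates `(X, Y)`. -/
noncomputable def poleSubgroup (hF : F ≠ 0) (hΔ : 2 * β * (α ^ 2 - 4 * β) ≠ 0) :
    AddSubgroup (ratCurve F α β).Point where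
  carrier := {R | (xPair R).2.degree < (xPair R).1.degree}
  zero_mem' := by simp [xPair_zero]
  neg_mem' {R} hR := by
    rwa [Set.mem_ofPred_eq, xPair_neg hF]
  add_mem' {R₁ R₂} h₁ h₂ := by
    simp only [Set.mem_ofPred_eq, ← pairLead_snd_eq_zero_iff (xPair_ne_zero _)] at h₁ h₂ ⊢
    obtain ⟨c, hc, heq⟩ :=
      (height_add_height_sub_and_exists_kummerMap_pairLead_eq hF hΔ R₁ R₂).2
    have hne := pairLead_ne_zero (xPair_ne_zero (R₁ - R₂))
    simp only [kummerMap, symCoords, h₁, h₂, Prod.smul_mk, smul_eq_mul, Prod.ext_iff, ne_eq,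
      Prod.fst_zero, Prod.snd_zero] at heq hne
    grind

theorem mem_poleSubgroup {hF : F ≠ 0} {hΔ : 2 * β * (α ^ 2 - 4 * β) ≠ 0} :
    R ∈ poleSubgroup hF hΔ ↔ (xPair R).2.degree < (xPair R).1.degree := Iff.rfl

theorem height_eq_of_mem_poleSubgroup {hF : F ≠ 0} {hΔ : 2 * β * (α ^ 2 - 4 * β) ≠ 0}
    (hR : R ∈ poleSubgroup hF hΔ) : height R = (xPair R).1.natDegree :=
  max_eq_left (natDegree_le_natDegree hR.le)

end RationalPoints

section Parallelogram

theorem eq_of_add_add_sub_eq {g : ℤ → ℤ} {c : ℤ}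
    (h : ∀ n, g (n + 1) + g (n - 1) = 2 * (g n + c)) (n : ℤ) :
    g n = g 0 + n * (g 1 - g 0 - c) + n ^ 2 * c := by
  suffices hpair : ∀ n, g n = g 0 + n * (g 1 - g 0 - c) + n ^ 2 * c ∧
      g (n + 1) = g 0 + (n + 1) * (g 1 - g 0 - c) + (n + 1) ^ 2 * c from (hpair n).1
  intro n
  induction n with
  | zero => exact ⟨by ring, by rw [zero_add]; ring⟩
  | succ n ih =>
    have hn := h (n + 1)
    rw [add_sub_cancel_right] at hn
    exact ⟨ih.2, by linear_combination hn + 2 * ih.2 - ih.1⟩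
  | pred n ih =>
    have hn := h (-n)
    rw [sub_add_cancel]
    exact ⟨by linear_combination hn + 2 * ih.1 - ih.2, ih.1⟩

theorem parallelogram_zsmul_add_zsmul {G : Type*} [AddCommGroup G] {f : G → ℤ}
    (h : ∀ x y, f (x + y) + f (x - y) = 2 * (f x + f y)) (x y : G) (m n : ℤ) :
    f (m • x + n • y) = m ^ 2 * f x + m * n * (f (x + y) - f x - f y) + n ^ 2 * f y := by
  have hline : ∀ (x y : G) (n : ℤ),
      f (x + n • y) = f x + n * (f (x + y) - f x - f y) + n ^ 2 * f y := by
    intro x y n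
    have hrec := eq_of_add_add_sub_eq (g := fun n => f (x + n • y)) (c := f y) (fun n => by
      rw [← h, add_zsmul, sub_zsmul, one_zsmul, add_assoc, add_sub_assoc, ← sub_eq_add_neg]) n
    simpa using hrec
  have hzero : f 0 = 0 := by
    have h0 := h 0 0
    rw [add_zero, sub_zero] at h0
    omega
  have hsmul := hline 0 x m
  have hmixed := hline y x m
  simp only [zero_add, hzero] at hsmul
  rw [hline, add_comm (m • x), hmixed, hsmul, add_comm y]
  ring

end Parallelogram

section RationalPointsOfBoundedHeight

open Polynomial

variable {K : Type*} [Field K] {F : K[X]} {α β : K} {R : (ratCurve F α β).Point}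

local notation "ι" => algebraMap K[X] (RatFunc K)

theorem HasCoords.mem_poleSubgroup_and_height_eq [DecidableEq (RatFunc K)] (hF : F ≠ 0)
    (hΔ : 2 * β * (α ^ 2 - 4 * β) ≠ 0) {a b : K[X]} (hb : b ≠ 0) (hab : IsCoprime a b)
    (hdeg : b.degree < a.degree) {Y : RatFunc K} (h : HasCoords R (ι a / ι b) Y) :
    R ∈ poleSubgroup hF hΔ ∧ height R = a.natDegree := by
  obtain ⟨c, hc, hpair⟩ := exists_C_mul_num_denom_eq hb hab
  rw [← h.xPair_eq hF] at hpair
  constructor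
  · obtain ⟨rfl, rfl⟩ := Prod.ext_iff.1 hpair
    simpa only [mem_poleSubgroup, Prod.smul_fst, Prod.smul_snd, smul_eq_mul, degree_C_mul hc]
      using hdeg
  · rw [height, ← pairDegree_C_smul hc, ← hpair]
    exact max_eq_left (natDegree_le_natDegree hdeg.le)

theorem derivative_xPair_eq_zero (hF : F ≠ 0) (hΔ : 2 * β * (α ^ 2 - 4 * β) ≠ 0)
    (hR : multiplier ratDerivation R = 0) :
    derivative (xPair R).1 = 0 ∧ derivative (xPair R).2 = 0 := by
  have hF' := RatFunc.algebraMap_ne_zero hF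
  have hconst : ∀ c : K, ratDerivation (ι (C c)) = 0 := fun c => by
    rw [ratDerivation_algebraMap, derivative_C, map_zero]
  rcases eq_zero_or_exists_hasCoords hF' R with rfl | ⟨X, Y, h⟩
  · simp [xPair_zero]
  · have hD := (h.derivation_eq hF' (four_torsion_poly_ne_zero hΔ) (hconst α) (hconst β)).1
    rw [hR, zero_mul, ← X.num_div_denom, ratDerivation_div _ X.denom_ne_zero, div_eq_zero_iff,
      or_iff_left (pow_ne_zero 2 (RatFunc.algebraMap_ne_zero X.denom_ne_zero)),
      map_eq_zero_iff _ (RatFunc.algebraMap_injective K)] at hD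
    rw [h.xPair_eq hF]
    refine X.isCoprime_num_denom.wronskian_eq_zero_iff.1 ?_
    rw [wronskian, ← neg_eq_zero, ← hD]
    ring

theorem dvd_natDegree_of_derivative_eq_zero {p : ℕ} [Fact p.Prime] [CharP K p] {f : K[X]}
    (hf : derivative f = 0) : p ∣ f.natDegree := by
  rw [← expand_contract p hf (Fact.out : p.Prime).ne_zero, natDegree_expand]
  exact dvd_mul_left _ _

theorem dvd_height_of_multiplier_eq_zero {p : ℕ} [Fact p.Prime] [CharP K p] (hF : F ≠ 0)
    (hΔ : 2 * β * (α ^ 2 - 4 * β) ≠ 0) (hR : multiplier ratDerivation R = 0) : p ∣ height R := by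
  obtain ⟨h₁, h₂⟩ := derivative_xPair_eq_zero hF hΔ hR
  rw [height, pairDegree]
  rcases max_choice (xPair R).1.natDegree (xPair R).2.natDegree with h | h <;> rw [h]
  exacts [dvd_natDegree_of_derivative_eq_zero h₁, dvd_natDegree_of_derivative_eq_zero h₂]

theorem HasCoords.equation_comp (hF : F ≠ 0) {q : K[X]} {Y : RatFunc K}
    (h : HasCoords R (ι q) Y) : ι F * Y ^ 2 = ι ((twoTorsionCubic α β).comp q) := by
  rw [h.equation (RatFunc.algebraMap_ne_zero hF)]
  simp [twoTorsionCubic]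
  ring

theorem exists_eq_C_mul_of_mul_sq_eq_pow {g : K[X]} (hF : Squarefree F) (hg : g ≠ 0)
    (hdeg : g.natDegree ≤ F.natDegree) {n : ℕ} (hn : Odd n) {Y : RatFunc K}
    (h : ι F * Y ^ 2 = ι g ^ n) : ∃ k : K, g = C k * F := by
  obtain ⟨m, rfl⟩ := hn
  have hg' := RatFunc.algebraMap_ne_zero hg
  have hsq : (ι F * Y / ι g ^ m) ^ 2 = ι (F * g) := by
    rw [div_pow, div_eq_iff (pow_ne_zero 2 (pow_ne_zero m hg')), map_mul]
    linear_combination ι F * h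
  obtain ⟨r, hr⟩ := IsIntegrallyClosed.exists_algebraMap_eq_of_isIntegral_pow two_pos
    (hsq ▸ isIntegral_algebraMap)
  rw [← hr, ← map_pow] at hsq
  replace hsq := RatFunc.algebraMap_injective K hsq
  obtain ⟨k, rfl⟩ : F ∣ r := (hF.dvd_pow_iff_dvd two_ne_zero).1 ⟨g, hsq⟩
  have hgk : g = k ^ 2 * F := mul_left_cancel₀ hF.ne_zero (by linear_combination -hsq)
  have hk : k.natDegree = 0 := by
    have hk₀ : k ^ 2 ≠ 0 := left_ne_zero_of_mul (hgk ▸ hg)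
    rw [hgk, natDegree_mul hk₀ hF.ne_zero, natDegree_pow] at hdeg
    lia
  rw [eq_C_of_natDegree_eq_zero hk, ← C_pow] at hgk
  exact ⟨_, hgk⟩

theorem separable_twoTorsionCubic (hΔ : 2 * β * (α ^ 2 - 4 * β) ≠ 0) :
    (twoTorsionCubic α β).Separable := by
  have hunit : β ^ 2 * (α ^ 2 - 4 * β) ≠ 0 := by
    simp only [ne_eq, mul_eq_zero, not_or] at hΔ
    simp [hΔ]
  have hbezout := bezout_cubic_derivative (C α) (C β) (X : K[X])
  have hderiv : derivative (twoTorsionCubic α β) = 3 * X ^ 2 + 2 * C α * X + C β := by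
    simp [twoTorsionCubic]
    ring
  rw [separable_def, hderiv]
  refine ⟨C (β ^ 2 * (α ^ 2 - 4 * β))⁻¹ *
      (-6 * (C α ^ 2 - 3 * C β) * X + C α * (15 * C β - 4 * C α ^ 2)),
    C (β ^ 2 * (α ^ 2 - 4 * β))⁻¹ * (2 * (C α ^ 2 - 3 * C β) * X ^ 2 +
      C α * (2 * C α ^ 2 - 7 * C β) * X + C β * (C α ^ 2 - 4 * C β)), ?_⟩
  have hinv := congrArg C (inv_mul_cancel₀ hunit)
  simp only [C_mul, C_sub, C_pow, C_1, map_ofNat] at hinv ⊢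
  unfold twoTorsionCubic
  linear_combination C (β ^ 2 * (α ^ 2 - 4 * β))⁻¹ * hbezout + hinv

theorem comp_pow_card {p : ℕ} [Fact p.Prime] (f g : (ZMod p)[X]) :
    f.comp (g ^ p) = f.comp g ^ p := by
  rw [← pow_comp, ← ZMod.expand_card f, expand_eq_comp_X_pow, comp_assoc, X_pow_comp]

theorem exists_hasCoords_linear_pow {p : ℕ} [Fact p.Prime] {F : (ZMod p)[X]} {α β : ZMod p}
    [DecidableEq (RatFunc (ZMod p))]
    (hF : F ≠ 0) {hΔ : 2 * β * (α ^ 2 - 4 * β) ≠ 0} {R : (ratCurve F α β).Point}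
    (hpole : R ∈ poleSubgroup hF hΔ) (hheight : height R = p)
    (hR : multiplier ratDerivation R = 0) :
    ∃ (u v : ZMod p) (Y : RatFunc (ZMod p)), u ≠ 0 ∧
      HasCoords R (algebraMap _ (RatFunc (ZMod p)) ((C u * X + C v) ^ p)) Y := by
  have hp := (Fact.out : p.Prime)
  rw [height_eq_of_mem_poleSubgroup hpole] at hheight
  obtain ⟨hN, hM⟩ := derivative_xPair_eq_zero hF hΔ hR
  rcases eq_zero_or_exists_hasCoords (RatFunc.algebraMap_ne_zero hF) R with rfl | ⟨x, Y, h⟩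
  · rw [xPair_zero, natDegree_one] at hheight
    exact absurd hheight.symm hp.ne_zero
  rw [mem_poleSubgroup] at hpole
  rw [h.xPair_eq hF] at hN hM hheight hpole
  have hden : x.denom = 1 := by
    refine (RatFunc.monic_denom x).natDegree_eq_zero.1 (Nat.eq_zero_of_dvd_of_lt
      (dvd_natDegree_of_derivative_eq_zero hM) ?_)
    exact (natDegree_lt_natDegree x.denom_ne_zero hpole).trans_eq hheight
  have hexp := expand_contract p hN hp.ne_zero
  have hlin : (contract p x.num).natDegree = 1 := by
    rw [← hexp, natDegree_expand] at hheight
    exact Nat.eq_of_mul_eq_mul_right hp.pos (hheight.trans (one_mul p).symm)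
  obtain ⟨u, hu, v, huv⟩ := natDegree_eq_one.1 hlin
  refine ⟨u, v, Y, hu, ?_⟩
  rw [huv, ← ZMod.expand_card, hexp]
  rwa [← x.num_div_denom, hden, map_one, div_one] at h

end RationalPointsOfBoundedHeight

section Endomorphisms

open Polynomial

variable {K : Type*} [Field K] {s c : K}

local notation "ι" => algebraMap K[X] (RatFunc K)

theorem twoTorsionCubic_ne_zero (α β : K) : twoTorsionCubic α β ≠ 0 :=
  ne_zero_of_natDegree_gt (n := 2) (by rw [natDegree_twoTorsionCubic]; exact Nat.lt_succ_self 2)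

/-- The quadratic twist of `Y² = X³ + α X² + β X` over `K(T)` whose rational points are the
rational maps from this curve to itself which commute with negation. -/
noncomputable abbrev selfTwist (α β : K) : WeierstrassCurve.Affine (RatFunc K) :=
  ratCurve (twoTorsionCubic α β) α β

theorem exists_hasCoords_X {α β : K} (hΔ : 2 * β * (α ^ 2 - 4 * β) ≠ 0) :
    ∃ P : (selfTwist α β).Point, HasCoords P (ι X) 1 := by
  refine exists_hasCoords (RatFunc.algebraMap_ne_zero (twoTorsionCubic_ne_zero α β))
    (four_torsion_poly_ne_zero hΔ) ?_
  simp [twoTorsionCubic]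
  ring

theorem discr_ne_zero (h2 : (2 : K) ≠ 0) (h3 : (3 : K) ≠ 0) (hs : s ^ 2 = 2) :
    2 * (18 - 12 * s) * (12 ^ 2 - 4 * (18 - 12 * s)) ≠ 0 := by
  have hunit : (12 ^ 2 - 4 * (18 - 12 * s)) * (3 - 2 * s) = 2 ^ 3 * 3 := by
    linear_combination -96 * hs
  exact mul_ne_zero (mul_ne_zero h2 (eighteen_sub_ne_zero h2 h3 hs))
    (left_ne_zero_of_mul (hunit ▸ mul_ne_zero (pow_ne_zero 3 h2) h3))

theorem neg_six_ne_zero (h2 : (2 : K) ≠ 0) (h3 : (3 : K) ≠ 0) : (-6 : K) ≠ 0 := by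
  rw [show (-6 : K) = -(2 * 3) by norm_num]
  exact neg_ne_zero.2 (mul_ne_zero h2 h3)

theorem monic_cmWronskian (s : K) : (cmWronskian s).Monic := by
  unfold cmWronskian
  exact ((by monicity! : Monic _).mul ((monic_X_sub_C _).mul (monic_X_sub_C _))).mul
    (by monicity!)

theorem natDegree_cmNum (s : K) : (cmNum s).natDegree = 6 := by
  unfold cmNum
  compute_degree!

theorem cmDen_ne_zero (h2 : (2 : K) ≠ 0) (h3 : (3 : K) ≠ 0) (s : K) : cmDen s ≠ 0 := by
  have h6 := C_ne_zero.2 (neg_six_ne_zero h2 h3)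
  rw [C_neg, map_ofNat] at h6
  exact mul_ne_zero (mul_ne_zero h6 X_ne_zero)
    (pow_ne_zero 2 (mul_ne_zero (X_sub_C_ne_zero _) (X_sub_C_ne_zero _)))

theorem degree_cmDen_lt (s : K) : (cmDen s).degree < (cmNum s).degree := by
  rw [degree_eq_natDegree (monic_cmNum s).ne_zero, natDegree_cmNum]
  refine lt_of_le_of_lt (b := ((5 : ℕ) : WithBot ℕ)) ?_ (by exact_mod_cast Nat.lt_succ_self 5)
  unfold cmDen
  compute_degree!

theorem isCoprime_X_sub_C_of_eval_ne_zero {f : K[X]} {x : K} (h : f.eval x ≠ 0) :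
    IsCoprime f (X - C x) :=
  ((irreducible_X_sub_C x).coprime_iff_not_dvd.2 (mt dvd_iff_isRoot.1 h)).symm

theorem isCoprime_cmNum_cmDen (h2 : (2 : K) ≠ 0) (h3 : (3 : K) ≠ 0) (hs : s ^ 2 = 2) :
    IsCoprime (cmNum s) (cmDen s) := by
  have heval : ∀ x y z : K, y ≠ 0 → z ≠ 0 → x ^ 2 + 12 * x + (18 - 12 * s) = y →
      x ^ 2 + (12 - 6 * s) * x + (18 - 12 * s) = z → IsCoprime (cmNum s) (X - C x) := by
    rintro x _ _ hy hz rfl rfl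
    refine isCoprime_X_sub_C_of_eval_ne_zero ?_
    simpa [cmNum] using ⟨hy, hz⟩
  have h32 : 3 + 2 * s ≠ 0 := left_ne_zero_of_mul_eq_one (b := 3 - 2 * s)
    (by linear_combination -4 * hs)
  have hs₀ : s ≠ 0 := ne_zero_pow two_ne_zero (hs ▸ h2)
  have h34 : (3 * s - 4) * (3 * s + 4) = 2 := by linear_combination 9 * hs
  have hβ := eighteen_sub_ne_zero h2 h3 hs
  have h_zero : IsCoprime (cmNum s) X := by
    simpa using heval 0 _ _ hβ hβ (by ring) (by ring)
  have h_three : IsCoprime (cmNum s) (X - C (3 * s)) :=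
    heval _ (2 ^ 2 * 3 * (3 + 2 * s)) (2 ^ 3 * 3 * s)
      (mul_ne_zero (mul_ne_zero (pow_ne_zero 2 h2) h3) h32)
      (mul_ne_zero (mul_ne_zero (pow_ne_zero 3 h2) h3) hs₀)
      (by linear_combination 9 * hs) (by linear_combination -9 * hs)
  have h_four : IsCoprime (cmNum s) (X - C (3 * s - 4)) :=
    heval _ (2 ^ 2) (2 ^ 3 * (3 * s - 4)) (pow_ne_zero 2 h2)
      (mul_ne_zero (pow_ne_zero 3 h2) (left_ne_zero_of_mul (h34 ▸ h2)))
      (by linear_combination 9 * hs) (by linear_combination -9 * hs)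
  have h_unit : IsUnit (-6 : K[X]) := by
    have := isUnit_C.2 (neg_six_ne_zero h2 h3).isUnit
    rwa [C_neg, map_ofNat] at this
  rw [cmDen, mul_assoc, isCoprime_mul_unit_left_right h_unit]
  exact h_zero.mul_right (h_three.mul_right h_four).pow_right

theorem ratDerivation_cmNum_div_cmDen (h2 : (2 : K) ≠ 0) (h3 : (3 : K) ≠ 0) (hs : s ^ 2 = 2) :
    ratDerivation (ι (cmNum s) / ι (cmDen s)) = ι (-6 * cmWronskian s) / ι (cmDen s) ^ 2 := by
  rw [ratDerivation_div _ (cmDen_ne_zero h2 h3 s)]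
  congr 2
  linear_combination -derivative_cmDen_mul_cmNum_sub hs

theorem exists_hasCoords_cm (h2 : (2 : K) ≠ 0) (h3 : (3 : K) ≠ 0) (hs : s ^ 2 = 2)
    (hc : c ^ 2 = -6) :
    ∃ Q : (selfTwist 12 (18 - 12 * s)).Point,
      HasCoords Q (ι (cmNum s) / ι (cmDen s)) (ι (C c * cmWronskian s) / ι (cmDen s) ^ 2) := by
  refine exists_hasCoords (RatFunc.algebraMap_ne_zero (twoTorsionCubic_ne_zero _ _))
    (four_torsion_poly_ne_zero (discr_ne_zero h2 h3 hs)) ?_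
  have hden := RatFunc.algebraMap_ne_zero (cmDen_ne_zero h2 h3 s)
  have hcm := congrArg ι (cmNum_mul_cmDen_mul hs)
  have hc' := congrArg ι (congrArg C hc)
  simp only [map_mul, map_pow, map_add, map_neg, map_ofNat] at hcm hc' ⊢
  field_simp
  linear_combination ι (twoTorsionCubic 12 (18 - 12 * s)) * ι (cmWronskian s) ^ 2 * hc' - hcm

theorem multiplier_eq_C (h2 : (2 : K) ≠ 0) (h3 : (3 : K) ≠ 0) (hs : s ^ 2 = 2)
    (hc : c ^ 2 = -6) {Q : (selfTwist 12 (18 - 12 * s)).Point}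
    (hQ : HasCoords Q (ι (cmNum s) / ι (cmDen s)) (ι (C c * cmWronskian s) / ι (cmDen s) ^ 2)) :
    multiplier ratDerivation Q = ι (C c) := by
  have hc₀ : C c ≠ 0 := C_ne_zero.2 (ne_zero_pow two_ne_zero (hc ▸ neg_six_ne_zero h2 h3))
  rw [hQ.multiplier_eq (RatFunc.algebraMap_ne_zero (twoTorsionCubic_ne_zero _ _)),
    ratDerivation_cmNum_div_cmDen h2 h3 hs, div_div_div_cancel_right₀
      (pow_ne_zero 2 (RatFunc.algebraMap_ne_zero (cmDen_ne_zero h2 h3 s))),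
    div_eq_iff (RatFunc.algebraMap_ne_zero (mul_ne_zero hc₀ (monic_cmWronskian s).ne_zero)),
    ← map_mul, ← mul_assoc, ← C_mul, ← sq, hc, C_neg, map_ofNat]

theorem exists_height_zsmul_add_zsmul_eq [DecidableEq (RatFunc K)] {F : K[X]} {α β : K}
    (hF : F ≠ 0) (hΔ : 2 * β * (α ^ 2 - 4 * β) ≠ 0) {P Q : (ratCurve F α β).Point}
    (hP : height P = 1) (hQ : height Q = 6) :
    ∃ b : ℤ, |b| ≤ 4 ∧
      ∀ m n : ℤ, (height (m • P + n • Q) : ℤ) = m ^ 2 + m * n * b + n ^ 2 * 6 := by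
  have hquad : ∀ m n : ℤ, (height (m • P + n • Q) : ℤ) =
      m ^ 2 + m * n * (height (P + Q) - 1 - 6) + n ^ 2 * 6 := by
    intro m n
    rw [parallelogram_zsmul_add_zsmul (f := fun R : (ratCurve F α β).Point => (height R : ℤ))
      (fun x y => by exact_mod_cast height_add_add_height_sub hF hΔ x y), hP, hQ]
    simp
  refine ⟨height (P + Q) - 1 - 6, abs_le.2 ⟨?_, ?_⟩, hquad⟩
  · linarith [hquad 5 2, (height ((5 : ℤ) • P + (2 : ℤ) • Q)).cast_nonneg (α := ℤ)]
  · linarith [hquad 5 (-2), (height ((5 : ℤ) • P + (-2 : ℤ) • Q)).cast_nonneg (α := ℤ)]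

/-- The points `P` and `Q` are the identity and `√-6`. -/
theorem exists_one_and_sqrt_neg_six [DecidableEq (RatFunc K)] (h2 : (2 : K) ≠ 0)
    (h3 : (3 : K) ≠ 0) (hs : s ^ 2 = 2) (hc : c ^ 2 = -6) :
    ∃ P Q : (selfTwist 12 (18 - 12 * s)).Point, HasCoords P (ι X) 1 ∧
      (P ∈ poleSubgroup (twoTorsionCubic_ne_zero _ _) (discr_ne_zero h2 h3 hs) ∧
        Q ∈ poleSubgroup (twoTorsionCubic_ne_zero _ _) (discr_ne_zero h2 h3 hs)) ∧
      (multiplier ratDerivation P = 1 ∧ multiplier ratDerivation Q = ι (C c)) ∧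
      height P = 1 ∧ height Q = 6 := by
  have hF := twoTorsionCubic_ne_zero (12 : K) (18 - 12 * s)
  have hΔ := discr_ne_zero h2 h3 hs
  obtain ⟨P, hP⟩ := exists_hasCoords_X hΔ
  obtain ⟨Q, hQ⟩ := exists_hasCoords_cm h2 h3 hs hc
  obtain ⟨hPpole, hPheight⟩ := HasCoords.mem_poleSubgroup_and_height_eq hF hΔ (a := X)
    one_ne_zero isCoprime_one_right (by simp) (by rwa [map_one, div_one])
  obtain ⟨hQpole, hQheight⟩ := hQ.mem_poleSubgroup_and_height_eq hF hΔ (cmDen_ne_zero h2 h3 s)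
    (isCoprime_cmNum_cmDen h2 h3 hs) (degree_cmDen_lt s)
  refine ⟨P, Q, hP, ⟨hPpole, hQpole⟩, ⟨?_, multiplier_eq_C h2 h3 hs hc hQ⟩, ?_, ?_⟩
  · rw [hP.multiplier_eq (RatFunc.algebraMap_ne_zero hF), ratDerivation_algebraMap, derivative_X,
      map_one, div_one]
  · rw [hPheight, natDegree_X]
  · rw [hQheight, natDegree_cmNum]

theorem eq_one_and_eq_zero_of_comp_linear_eq (h2 : (2 : K) ≠ 0) (h3 : (3 : K) ≠ 0)
    (h17 : (17 : K) ≠ 0) (h23 : (23 : K) ≠ 0) (hs : s ^ 2 = 2) {u v k : K} (hu : u ≠ 0)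
    (h : (twoTorsionCubic 12 (18 - 12 * s)).comp (C u * X + C v) =
      C k * twoTorsionCubic 12 (18 - 12 * s)) : u = 1 ∧ v = 0 := by
  have h6 : (6 : K) ≠ 0 := neg_ne_zero.1 (neg_six_ne_zero h2 h3)
  have heval : ∀ x : K, (u * x + v) ^ 3 + 12 * (u * x + v) ^ 2 + (18 - 12 * s) * (u * x + v) =
      k * (x ^ 3 + 12 * x ^ 2 + (18 - 12 * s) * x) := by
    intro x
    have hx := congrArg (eval x) h
    simp only [eval_comp, eval_add, eval_mul, eval_C, eval_X, eval_twoTorsionCubic] at hx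
    linear_combination hx
  have e₀ := heval 0
  have e₁ := heval 1
  have e₂ := heval (-1)
  have e₃ := heval 2
  have hk : k = u ^ 3 := mul_left_cancel₀ h6 (by linear_combination 3 * e₁ - e₃ + e₂ - 3 * e₀)
  subst hk
  have hv : v = 4 * (u - 1) :=
    mul_left_cancel₀ (mul_ne_zero h6 (pow_ne_zero 2 hu)) (by linear_combination e₁ + e₂ - 2 * e₀)
  subst hv
  have h5 : 5 + 2 * s ≠ 0 := by
    refine left_ne_zero_of_mul (b := 5 - 2 * s) ?_
    rwa [show (5 + 2 * s) * (5 - 2 * s) = 17 by linear_combination -4 * hs]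
  have hprod : (u * (2 * (6 * (5 + 2 * s)))) * ((u - 1) * (u + 1)) = 0 := by
    linear_combination e₁ - e₂
  have hu_sq := (mul_eq_zero.1 hprod).resolve_left
    (mul_ne_zero hu (mul_ne_zero h2 (mul_ne_zero h6 h5)))
  rcases mul_eq_zero.1 hu_sq with hu₁ | hu₁
  · rw [sub_eq_zero.1 hu₁]
    simp
  · obtain rfl := eq_neg_of_add_eq_zero_left hu₁
    have h7 : 7 + 6 * s = 0 := mul_left_cancel₀ (pow_ne_zero 4 h2) (by linear_combination e₀)
    exact absurd (by linear_combination (6 * s - 7) * h7 - 36 * hs) h23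

theorem eq_frobenius_or_neg_eq_frobenius {p : ℕ} [Fact p.Prime] [DecidableEq (RatFunc (ZMod p))]
    (h2 : (2 : ZMod p) ≠ 0) (h3 : (3 : ZMod p) ≠ 0) (h17 : (17 : ZMod p) ≠ 0)
    (h23 : (23 : ZMod p) ≠ 0) {s : ZMod p} (hs : s ^ 2 = 2)
    {R : (selfTwist 12 (18 - 12 * s)).Point}
    (hpole : R ∈ poleSubgroup (twoTorsionCubic_ne_zero _ _) (discr_ne_zero h2 h3 hs))
    (hheight : height R = p) (hR : multiplier ratDerivation R = 0)
    {Φ : (selfTwist 12 (18 - 12 * s)).Point}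
    (hΦ : HasCoords Φ (algebraMap (ZMod p)[X] _ (X ^ p))
      (algebraMap (ZMod p)[X] _ (twoTorsionCubic 12 (18 - 12 * s) ^ (p / 2)))) :
    R = Φ ∨ R = -Φ := by
  have hF := twoTorsionCubic_ne_zero 12 (18 - 12 * s)
  obtain ⟨u, v, Y, hu, h⟩ := exists_hasCoords_linear_pow hF hpole hheight hR
  have heq := h.equation_comp hF
  rw [comp_pow_card, map_pow] at heq
  have hdeg : (C u * X + C v).natDegree = 1 := natDegree_linear hu
  have hcomp : ((twoTorsionCubic 12 (18 - 12 * s)).comp (C u * X + C v)).natDegree = 3 := by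
    rw [natDegree_comp, hdeg, mul_one, natDegree_twoTorsionCubic]
  obtain ⟨k, hk⟩ := exists_eq_C_mul_of_mul_sq_eq_pow
    (separable_twoTorsionCubic (discr_ne_zero h2 h3 hs)).squarefree
    (ne_zero_of_natDegree_gt (n := 2) (hcomp.symm ▸ Nat.lt_succ_self 2))
    (hcomp.trans (natDegree_twoTorsionCubic _ _).symm).le
    ((Fact.out : p.Prime).odd_of_ne_two (by rintro rfl; exact h2 rfl)) heq
  obtain ⟨rfl, rfl⟩ := eq_one_and_eq_zero_of_comp_linear_eq h2 h3 h17 h23 hs hu hk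
  rw [C_1, one_mul, C_0, add_zero] at h
  exact h.eq_or_eq_neg (RatFunc.algebraMap_ne_zero hF) hΦ

theorem exists_hasCoords_frobenius {p : ℕ} [Fact p.Prime] (hp : p ≠ 2) {α β : ZMod p}
    (hΔ : 2 * β * (α ^ 2 - 4 * β) ≠ 0) :
    ∃ Φ : (selfTwist α β).Point, HasCoords Φ (algebraMap (ZMod p)[X] _ (X ^ p))
      (algebraMap (ZMod p)[X] _ (twoTorsionCubic α β ^ (p / 2))) := by
  refine exists_hasCoords (RatFunc.algebraMap_ne_zero (twoTorsionCubic_ne_zero α β))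
    (four_torsion_poly_ne_zero hΔ) ?_
  have hodd : p / 2 * 2 + 1 = p := by
    rw [mul_comm, two_mul_half_prime hp, Nat.sub_add_cancel (Fact.out : p.Prime).one_le]
  have hcomp : (twoTorsionCubic α β).comp (X ^ p) =
      (twoTorsionCubic α β ^ (p / 2)) ^ 2 * twoTorsionCubic α β := by
    rw [comp_pow_card, comp_X, ← pow_mul, ← pow_succ, hodd]
  have heq := congrArg (algebraMap _ (RatFunc (ZMod p))) hcomp
  nth_rewrite 1 [twoTorsionCubic] at heq
  simp only [mul_comp, add_comp, pow_comp, X_comp, C_comp, map_mul, map_add, map_pow] at heq ⊢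
  linear_combination -heq

end Endomorphisms

section FrobeniusSubOne

open Polynomial

variable {p : ℕ} [Fact p.Prime]

/-- The points at which the value of `F` has quadratic character `e`, the character being the
power `p / 2`. -/
def signSet (F : (ZMod p)[X]) (e : ZMod p) : Finset (ZMod p) :=
  univ.filter fun x => F.eval x ^ (p / 2) = e

/-- The monic polynomial whose roots are the points of `signSet F e`, all of them simple. -/
noncomputable def signPoly (F : (ZMod p)[X]) (e : ZMod p) : (ZMod p)[X] :=
  ∏ x ∈ signSet F e, (X - C x)

theorem eval_pow_of_mem_signSet {F : (ZMod p)[X]} {e x : ZMod p} (hx : x ∈ signSet F e) :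
    F.eval x ^ (p / 2) = e :=
  (mem_filter.1 hx).2

@[to_additive]
theorem prod_signSet_mul (hp : p ≠ 2) (F : (ZMod p)[X]) {M : Type*} [CommMonoid M]
    (f : ZMod p → M) :
    (∏ x ∈ signSet F 1, f x) * (∏ x ∈ signSet F (-1), f x) * ∏ x ∈ signSet F 0, f x =
      ∏ x, f x := by
  have hmaps : ∀ x ∈ univ, F.eval x ^ (p / 2) ∈ ({1, -1, 0} : Finset (ZMod p)) := by
    intro x _
    rcases eq_or_ne (F.eval x) 0 with hx | hx
    · have := (Fact.out : p.Prime).two_le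
      simp [hx, zero_pow (show p / 2 ≠ 0 by lia)]
    · rcases ZMod.pow_div_two_eq_neg_one_or_one p hx with h | h <;> simp [h]
  have hne : (1 : ZMod p) ≠ -1 := fun h => two_ne_zero_of_ne_two hp (by linear_combination h)
  rw [← prod_fiberwise_of_maps_to hmaps, prod_insert (by simp [hne]), prod_insert (by simp),
    prod_singleton, mul_assoc]
  rfl

theorem charSum_eq_card_sub_card (hp : p ≠ 2) (F : (ZMod p)[X]) :
    charSum F = (#(signSet F 1) : ZMod p) - #(signSet F (-1)) := by
  have hsum : ∀ e, ∑ x ∈ signSet F e, F.eval x ^ (p / 2) = #(signSet F e) * e := fun e => by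
    rw [sum_congr rfl fun x => eval_pow_of_mem_signSet, sum_const, nsmul_eq_mul]
  rw [charSum, ← sum_signSet_add hp F, hsum, hsum, hsum]
  ring

theorem card_signSet_add (hp : p ≠ 2) (F : (ZMod p)[X]) :
    #(signSet F 1) + #(signSet F (-1)) + #(signSet F 0) = p := by
  simpa only [← card_eq_sum_ones, card_univ, ZMod.card] using sum_signSet_add hp F fun _ => (1 : ℕ)

theorem monic_signPoly (F : (ZMod p)[X]) (e : ZMod p) : (signPoly F e).Monic :=
  monic_prod_X_sub_C _ _

theorem natDegree_signPoly (F : (ZMod p)[X]) (e : ZMod p) :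
    (signPoly F e).natDegree = #(signSet F e) := by
  rw [signPoly, natDegree_prod_of_monic _ _ fun x _ => monic_X_sub_C x]
  simp only [natDegree_X_sub_C, sum_const, smul_eq_mul, mul_one]

theorem signPoly_mul (hp : p ≠ 2) (F : (ZMod p)[X]) :
    signPoly F 1 * signPoly F (-1) * signPoly F 0 = X ^ p - X := by
  have hdeg : degree (X : (ZMod p)[X]) < p := by
    rw [degree_X]
    exact_mod_cast (Fact.out : p.Prime).one_lt
  have hroots := FiniteField.roots_X_pow_card_sub_X (ZMod p)
  have hprod := prod_multiset_X_sub_C_of_monic_of_roots_card_eq (monic_X_pow_sub hdeg) (by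
    rw [FiniteField.X_pow_card_sub_X_natDegree_eq _ (Fact.out : p.Prime).one_lt]
    rw [ZMod.card] at hroots
    rw [hroots, card_val, card_univ, ZMod.card])
  rw [ZMod.card] at hroots
  rw [hroots] at hprod
  exact (prod_signSet_mul hp F _).trans hprod

theorem signPoly_dvd {F f : (ZMod p)[X]} {e : ZMod p} (h : ∀ x ∈ signSet F e, f.eval x = 0) :
    signPoly F e ∣ f :=
  Finset.prod_dvd_of_coprime
    (fun _ _ _ _ hne => pairwise_coprime_X_sub_C Function.injective_id hne)
    fun x hx => dvd_iff_isRoot.2 (h x hx)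

theorem isCoprime_signPoly {F f : (ZMod p)[X]} {e : ZMod p}
    (h : ∀ x ∈ signSet F e, f.eval x ≠ 0) : IsCoprime f (signPoly F e) :=
  IsCoprime.prod_right fun x hx => isCoprime_X_sub_C_of_eval_ne_zero (h x hx)

/-- The reduction to lowest terms of the `X`-coordinate of Frobenius minus the identity. -/
theorem exists_isCoprime_chord_numerator (hp : p ≠ 2) {F : (ZMod p)[X]} (hF : Squarefree F)
    (A : (ZMod p)[X]) :
    ∃ N, F * (F ^ (p / 2) + 1) ^ 2 - A * (X ^ p - X) ^ 2 =
        signPoly F (-1) ^ 2 * signPoly F 0 * N ∧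
      IsCoprime N (signPoly F 1 ^ 2 * signPoly F 0) := by
  have hhalf : p / 2 ≠ 0 := by
    have := (Fact.out : p.Prime).two_le
    lia
  have heval : ∀ e, ∀ x ∈ signSet F e, (F ^ (p / 2) + 1).eval x = e + 1 := fun e x hx => by
    rw [eval_add, eval_pow, eval_pow_of_mem_signSet hx, eval_one]
  obtain ⟨W, hW⟩ : signPoly F (-1) ∣ F ^ (p / 2) + 1 :=
    signPoly_dvd fun x hx => by rw [heval _ x hx, neg_add_cancel]
  obtain ⟨G, hG⟩ : signPoly F 0 ∣ F :=
    signPoly_dvd fun x hx => eq_zero_of_pow_eq_zero (eval_pow_of_mem_signSet hx)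
  have hW_coprime : ∀ e, e + 1 ≠ 0 → IsCoprime W (signPoly F e) := fun e he =>
    (isCoprime_signPoly fun x hx => by rwa [heval e x hx]).of_isCoprime_of_dvd_left
      (hW ▸ dvd_mul_left W _)
  have hG_one : IsCoprime G (signPoly F 1) :=
    (isCoprime_signPoly fun x hx h => by
      have := eval_pow_of_mem_signSet hx
      rw [h, zero_pow hhalf] at this
      exact zero_ne_one this).of_isCoprime_of_dvd_left (hG ▸ dvd_mul_left G _)
  have hG_zero : IsCoprime G (signPoly F 0) :=
    (squarefree_mul_iff.1 (hG ▸ hF)).1.isCoprime.symm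
  have hone : (1 + 1 : ZMod p) ≠ 0 := by
    rw [one_add_one_eq_two]
    exact two_ne_zero_of_ne_two hp
  have hcop : IsCoprime (G * W ^ 2) (signPoly F 1 ^ 2 * signPoly F 0) :=
    ((hG_one.mul_left (hW_coprime 1 hone).pow_left).pow_right).mul_right
      (hG_zero.mul_left (hW_coprime 0 (by simp)).pow_left)
  refine ⟨_, ?_, hcop.add_mul_right_left (-A)⟩
  rw [← signPoly_mul hp F, hW]
  linear_combination (signPoly F (-1) * W) ^ 2 * hG

theorem natDegree_chord_numerator (hp : p ≠ 2) (α β : ZMod p) :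
    (twoTorsionCubic α β * (twoTorsionCubic α β ^ (p / 2) + 1) ^ 2 -
      (C α + X ^ p + X) * (X ^ p - X) ^ 2).natDegree = 2 * p + 1 := by
  have hhalf := two_mul_half_prime hp
  have htwo := (Fact.out : p.Prime).two_le
  have hcomp := comp_pow_card (twoTorsionCubic α β) X
  have hexp : twoTorsionCubic α β * (twoTorsionCubic α β ^ (p / 2) + 1) ^ 2 -
      (C α + X ^ p + X) * (X ^ p - X) ^ 2 = X ^ (2 * p + 1) + (X ^ (p + 2) +
        C (2 * α) * X ^ (p + 1) + C β * X ^ p + C β * X ^ 1 +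
        C 2 * twoTorsionCubic α β ^ (p / 2 + 1)) := by
    have hpow : twoTorsionCubic α β ^ p =
        twoTorsionCubic α β * (twoTorsionCubic α β ^ (p / 2)) ^ 2 := by
      rw [← pow_mul, ← pow_succ', show p / 2 * 2 + 1 = p by lia]
    rw [comp_X, hpow] at hcomp
    nth_rewrite 1 [twoTorsionCubic] at hcomp
    simp only [mul_comp, add_comp, pow_comp, X_comp, C_comp] at hcomp
    rw [pow_succ _ (p / 2), C_mul, show (C 2 : (ZMod p)[X]) = 2 from rfl]
    have hF : twoTorsionCubic α β = X * (X ^ 2 + C α * X + C β) := rfl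
    linear_combination hF - hcomp
  have hmonomial : ∀ (c : ZMod p) (k : ℕ), k ≤ 2 * p → (C c * X ^ k).natDegree ≤ 2 * p :=
    fun c k hk => (natDegree_C_mul_X_pow_le _ _).trans hk
  rw [hexp, natDegree_add_eq_left_of_natDegree_lt, natDegree_X_pow]
  rw [natDegree_X_pow, Nat.lt_succ_iff]
  refine natDegree_add_le_of_degree_le (natDegree_add_le_of_degree_le
    (natDegree_add_le_of_degree_le (natDegree_add_le_of_degree_le ?_ (hmonomial _ _ (by lia)))
      (hmonomial _ _ (by lia))) (hmonomial _ _ (by lia))) ?_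
  · rw [natDegree_X_pow]
    lia
  · refine (natDegree_C_mul_le _ _).trans ?_
    rw [natDegree_pow, natDegree_twoTorsionCubic]
    lia

theorem hasCoords_frobenius_sub_one [DecidableEq (RatFunc (ZMod p))] {α β : ZMod p}
    {Φ P : (selfTwist α β).Point}
    (hΦ : HasCoords Φ (algebraMap (ZMod p)[X] _ (X ^ p))
      (algebraMap (ZMod p)[X] _ (twoTorsionCubic α β ^ (p / 2))))
    (hP : HasCoords P (algebraMap (ZMod p)[X] _ X) 1) :
    ∃ Y, HasCoords (Φ - P) (algebraMap (ZMod p)[X] _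
      (twoTorsionCubic α β * (twoTorsionCubic α β ^ (p / 2) + 1) ^ 2 -
        (C α + X ^ p + X) * (X ^ p - X) ^ 2) /
      algebraMap (ZMod p)[X] _ ((X ^ p - X) ^ 2)) Y := by
  have hden := RatFunc.algebraMap_ne_zero
    (FiniteField.X_pow_card_sub_X_ne_zero (ZMod p) (Fact.out : p.Prime).one_lt)
  have hX : algebraMap (ZMod p)[X] (RatFunc (ZMod p)) (X ^ p) ≠ algebraMap _ _ X :=
    fun h => hden (by rw [map_sub, h, sub_self])
  have h := hΦ.add_of_X_ne (RatFunc.algebraMap_ne_zero (twoTorsionCubic_ne_zero α β)) hP.neg hX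
    (l := algebraMap _ _ (twoTorsionCubic α β ^ (p / 2) + 1) / algebraMap _ _ (X ^ p - X)) (by
      rw [← map_sub, div_mul_cancel₀ _ hden, map_add, map_one, sub_neg_eq_add])
  refine ⟨_, sub_eq_add_neg Φ P ▸ Eq.subst (motive := (HasCoords _ · _)) ?_ h⟩
  simp only [map_sub, map_mul, map_add, map_pow] at hden ⊢
  field_simp
  ring

theorem height_frobenius_sub_one [DecidableEq (RatFunc (ZMod p))] (hp : p ≠ 2) {α β : ZMod p}
    (hΔ : 2 * β * (α ^ 2 - 4 * β) ≠ 0) {Φ P : (selfTwist α β).Point}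
    (hΦ : HasCoords Φ (algebraMap (ZMod p)[X] _ (X ^ p))
      (algebraMap (ZMod p)[X] _ (twoTorsionCubic α β ^ (p / 2))))
    (hP : HasCoords P (algebraMap (ZMod p)[X] _ X) 1) :
    (height (Φ - P) : ℤ) = p + 1 + #(signSet (twoTorsionCubic α β) 1) -
      #(signSet (twoTorsionCubic α β) (-1)) := by
  obtain ⟨N, hN, hcop⟩ := exists_isCoprime_chord_numerator hp
    (separable_twoTorsionCubic hΔ).squarefree (C α + X ^ p + X)
  obtain ⟨Y, h⟩ := hasCoords_frobenius_sub_one hΦ hP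
  have hdegN := natDegree_chord_numerator hp α β
  have hcard := card_signSet_add hp (twoTorsionCubic α β)
  have hmonic := monic_signPoly (twoTorsionCubic α β)
  have hcommon := ((hmonic (-1)).pow 2).mul (hmonic 0)
  have hden := ((hmonic 1).pow 2).mul (hmonic 0)
  have hN₀ : N ≠ 0 := by
    rintro rfl
    rw [hN, mul_zero, natDegree_zero] at hdegN
    exact absurd hdegN (by lia)
  rw [hN, hcommon.natDegree_mul' hN₀, ((hmonic (-1)).pow 2).natDegree_mul (hmonic 0),
    (hmonic (-1)).natDegree_pow, natDegree_signPoly, natDegree_signPoly] at hdegN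
  have hdeg_den : (signPoly (twoTorsionCubic α β) 1 ^ 2 *
      signPoly (twoTorsionCubic α β) 0).natDegree < N.natDegree := by
    rw [((hmonic 1).pow 2).natDegree_mul (hmonic 0), (hmonic 1).natDegree_pow,
      natDegree_signPoly, natDegree_signPoly]
    lia
  rw [hN, ← signPoly_mul hp (twoTorsionCubic α β), show ∀ u v w : (ZMod p)[X],
    (u * v * w) ^ 2 = v ^ 2 * w * (u ^ 2 * w) by intros; ring, map_mul, map_mul _ _ (_ * _),
    mul_div_mul_left _ _ (RatFunc.algebraMap_ne_zero hcommon.ne_zero)] at h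
  rw [(h.mem_poleSubgroup_and_height_eq (twoTorsionCubic_ne_zero α β) hΔ hden.ne_zero hcop
    (degree_lt_degree hdeg_den)).2]
  lia

end FrobeniusSubOne

section TraceOfFrobenius

open Polynomial

variable {p : ℕ} [Fact p.Prime] {x y : ℤ}

theorem intCast_sq_add_six_mul_sq_eq_zero (hxy : (p : ℤ) = x ^ 2 + 6 * y ^ 2) :
    (x : ZMod p) ^ 2 + 6 * (y : ZMod p) ^ 2 = 0 := by
  have := congrArg (Int.cast : ℤ → ZMod p) hxy
  push_cast at this
  rw [← this, CharP.cast_eq_zero]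

theorem ne_zero_of_eq_sq_add_six_mul_sq (hxy : (p : ℤ) = x ^ 2 + 6 * y ^ 2) : y ≠ 0 := by
  rintro rfl
  exact (Nat.prime_iff_prime_int.1 Fact.out).irreducible.not_isSquare ⟨x, by rw [hxy]; ring⟩

theorem six_le_of_eq_sq_add_six_mul_sq (hxy : (p : ℤ) = x ^ 2 + 6 * y ^ 2) : 6 ≤ p := by
  have hy : 0 < y ^ 2 := by
    have := ne_zero_of_eq_sq_add_six_mul_sq hxy
    positivity
  zify
  linarith [sq_nonneg x]

theorem intCast_right_ne_zero_of_eq_sq_add_six_mul_sq (hxy : (p : ℤ) = x ^ 2 + 6 * y ^ 2) :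
    (y : ZMod p) ≠ 0 := by
  rw [Ne, ZMod.intCast_zmod_eq_zero_iff_dvd]
  intro hdvd
  have hy := ne_zero_of_eq_sq_add_six_mul_sq hxy
  have hle : (p : ℤ) ≤ |y| := Int.le_of_dvd (abs_pos.2 hy) ((dvd_abs _ _).2 hdvd)
  nlinarith [sq_abs y, sq_nonneg x, abs_pos.2 hy]

theorem intCast_left_ne_zero_of_eq_sq_add_six_mul_sq (h2 : (2 : ZMod p) ≠ 0)
    (h3 : (3 : ZMod p) ≠ 0) (hxy : (p : ℤ) = x ^ 2 + 6 * y ^ 2) : (x : ZMod p) ≠ 0 := by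
  intro hx
  refine mul_ne_zero (neg_six_ne_zero h2 h3)
    (pow_ne_zero 2 (intCast_right_ne_zero_of_eq_sq_add_six_mul_sq hxy)) ?_
  linear_combination -intCast_sq_add_six_mul_sq_eq_zero hxy + (x : ZMod p) * hx

theorem eq_zero_of_dvd_add_mul_mul (h2 : (2 : ZMod p) ≠ 0) (h3 : (3 : ZMod p) ≠ 0)
    (hxy : (p : ℤ) = x ^ 2 + 6 * y ^ 2) {b : ℤ} (hb : |b| ≤ 4)
    (hdvd : (p : ℤ) ∣ x ^ 2 + x * y * b + y ^ 2 * 6) : b = 0 := by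
  have hzero := (ZMod.intCast_zmod_eq_zero_iff_dvd _ _).2 hdvd
  push_cast at hzero
  have hprod : (x * y : ZMod p) * b = 0 := by
    linear_combination hzero - intCast_sq_add_six_mul_sq_eq_zero hxy
  have hb_zero := (mul_eq_zero.1 hprod).resolve_left
    (mul_ne_zero (intCast_left_ne_zero_of_eq_sq_add_six_mul_sq h2 h3 hxy)
      (intCast_right_ne_zero_of_eq_sq_add_six_mul_sq hxy))
  have := six_le_of_eq_sq_add_six_mul_sq hxy
  exact Int.eq_zero_of_abs_lt_dvd ((ZMod.intCast_zmod_eq_zero_iff_dvd _ _).1 hb_zero) (by lia)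

theorem exists_zsmul_add_zsmul_eq_frobenius [DecidableEq (RatFunc (ZMod p))]
    (h2 : (2 : ZMod p) ≠ 0) (h3 : (3 : ZMod p) ≠ 0) (h17 : (17 : ZMod p) ≠ 0)
    (h23 : (23 : ZMod p) ≠ 0) {s : ZMod p} (hs : s ^ 2 = 2)
    (hxy : (p : ℤ) = x ^ 2 + 6 * y ^ 2) :
    ∃ P Q Φ : (selfTwist 12 (18 - 12 * s)).Point,
      HasCoords P (algebraMap (ZMod p)[X] _ X) 1 ∧
      HasCoords Φ (algebraMap (ZMod p)[X] _ (X ^ p))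
        (algebraMap (ZMod p)[X] _ (twoTorsionCubic 12 (18 - 12 * s) ^ (p / 2))) ∧
      (∀ m n : ℤ, (height (m • P + n • Q) : ℤ) = m ^ 2 + n ^ 2 * 6) ∧
      (x • P + y • Q = Φ ∨ x • P + y • Q = -Φ) := by
  have hF := twoTorsionCubic_ne_zero 12 (18 - 12 * s)
  have hF' := RatFunc.algebraMap_ne_zero hF
  have hΔ := discr_ne_zero h2 h3 hs
  have hy := intCast_right_ne_zero_of_eq_sq_add_six_mul_sq hxy
  have hkernel : (x : ZMod p) + y * (-x / y) = 0 := by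
    field_simp
    ring
  have hc : (-x / y : ZMod p) ^ 2 = -6 := by
    field_simp
    linear_combination intCast_sq_add_six_mul_sq_eq_zero hxy
  obtain ⟨P, Q, hP, ⟨hPpole, hQpole⟩, ⟨hPmult, hQmult⟩, hPheight, hQheight⟩ :=
    exists_one_and_sqrt_neg_six h2 h3 hs hc
  obtain ⟨Φ, hΦ⟩ := exists_hasCoords_frobenius (by rintro rfl; exact h2 rfl) hΔ
  obtain ⟨b, hb, hheight⟩ := exists_height_zsmul_add_zsmul_eq hF hΔ hPheight hQheight
  have hmult : multiplier ratDerivation (x • P + y • Q) = 0 := by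
    have hconst : ∀ z : ZMod p, ratDerivation (algebraMap _ (RatFunc (ZMod p)) (C z)) = 0 :=
      fun z => by rw [ratDerivation_algebraMap, derivative_C, map_zero]
    have hadd := multiplier_add hF' (four_torsion_poly_ne_zero hΔ) (hconst _) (hconst _)
    have hzsmul := multiplier_zsmul hF' (four_torsion_poly_ne_zero hΔ) (hconst _) (hconst _)
    rw [hadd, hzsmul, hzsmul, hPmult, hQmult, mul_one]
    simpa using congrArg (fun z => algebraMap _ (RatFunc (ZMod p)) (C z)) hkernel
  have hdvd := dvd_height_of_multiplier_eq_zero hF hΔ (p := p) hmult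
  obtain rfl := eq_zero_of_dvd_add_mul_mul h2 h3 hxy hb
    (hheight x y ▸ Int.natCast_dvd_natCast.2 hdvd)
  simp only [mul_zero, add_zero] at hheight
  have hpole := add_mem (zsmul_mem hPpole x) (zsmul_mem hQpole y)
  have hdegree : height (x • P + y • Q) = p := by
    have := hheight x y
    lia
  exact ⟨P, Q, Φ, hP, hΦ, hheight,
    eq_frobenius_or_neg_eq_frobenius h2 h3 h17 h23 hs hpole hdegree hmult hΦ⟩

theorem charSum_twoTorsionCubic_sq (h2 : (2 : ZMod p) ≠ 0) (h3 : (3 : ZMod p) ≠ 0)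
    (h17 : (17 : ZMod p) ≠ 0) (h23 : (23 : ZMod p) ≠ 0) {s : ZMod p} (hs : s ^ 2 = 2)
    (hxy : (p : ℤ) = x ^ 2 + 6 * y ^ 2) :
    charSum (twoTorsionCubic 12 (18 - 12 * s)) ^ 2 = 4 * (x : ZMod p) ^ 2 := by
  classical
  have hp : p ≠ 2 := by
    rintro rfl
    exact h2 rfl
  obtain ⟨P, Q, Φ, hP, hΦ, hheight, hΦeq⟩ :=
    exists_zsmul_add_zsmul_eq_frobenius h2 h3 h17 h23 hs hxy
  obtain ⟨z, hz, hsub⟩ : ∃ z : ℤ, z ^ 2 = x ^ 2 ∧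
      (height (Φ - P) : ℤ) = (z - 1) ^ 2 + y ^ 2 * 6 := by
    rcases hΦeq with hΦeq | hΦeq
    · refine ⟨x, rfl, ?_⟩
      rw [← hheight, sub_eq_add_neg x 1, add_zsmul, neg_one_zsmul, add_right_comm, hΦeq,
        sub_eq_add_neg Φ P]
    · refine ⟨-x, neg_sq x, ?_⟩
      have hneg : Φ - P = -((x + 1) • P + y • Q) := by
        rw [add_zsmul, one_zsmul, add_right_comm, hΦeq]
        abel
      rw [hneg, height, xPair_neg (twoTorsionCubic_ne_zero _ _), ← height, hheight]
      ring
  have htrace := height_frobenius_sub_one hp (discr_ne_zero h2 h3 hs) hΦ hP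
  have hcard : (#(signSet (twoTorsionCubic 12 (18 - 12 * s)) 1) : ℤ) -
      #(signSet (twoTorsionCubic 12 (18 - 12 * s)) (-1)) = -2 * z := by
    linear_combination hsub - htrace - hxy + hz
  rw [charSum_eq_card_sub_card hp]
  have hcard' := congrArg (Int.cast : ℤ → ZMod p) hcard
  have hz' := congrArg (Int.cast : ℤ → ZMod p) hz
  push_cast at hcard' hz'
  rw [hcard', mul_pow, hz']
  norm_num

end TraceOfFrobenius

section QuadraticForm

theorem exists_sq_lt_and_intCast_eq_mul {n : ℕ} (hn : ¬IsSquare n) (c : ZMod n) :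
    ∃ x y : ℤ, (x ≠ 0 ∨ y ≠ 0) ∧ x ^ 2 < n ∧ y ^ 2 < n ∧ (x : ZMod n) = c * y := by
  have : NeZero n := ⟨by rintro rfl; exact hn IsSquare.zero⟩
  have hsqrt : n.sqrt * n.sqrt < n :=
    lt_of_le_of_ne n.sqrt_le fun h => hn ⟨n.sqrt, h.symm⟩
  have hdiff : ∀ u v : ℕ, u < n.sqrt + 1 → v < n.sqrt + 1 → ((u : ℤ) - v) ^ 2 < n := by
    intro u v hu hv
    have hle : ((u : ℤ) - v) ^ 2 ≤ (n.sqrt : ℤ) ^ 2 := sq_le_sq' (by lia) (by lia)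
    exact hle.trans_lt (by exact_mod_cast sq n.sqrt ▸ hsqrt)
  have hcard : #(univ : Finset (ZMod n)) < #(range (n.sqrt + 1) ×ˢ range (n.sqrt + 1)) := by
    rw [card_univ, ZMod.card, card_product, card_range]
    exact n.lt_succ_sqrt
  obtain ⟨u, hu, v, hv, hne, heq⟩ := exists_ne_map_eq_of_card_lt_of_maps_to hcard
    (f := fun w => (w.1 : ZMod n) - c * w.2) fun _ _ => mem_univ _
  simp only [mem_product, mem_range] at hu hv
  refine ⟨u.1 - v.1, u.2 - v.2, ?_, hdiff _ _ hu.1 hv.1, hdiff _ _ hu.2 hv.2, ?_⟩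
  · by_contra! h
    exact hne (Prod.ext (by lia) (by lia))
  · push_cast
    linear_combination heq

theorem three_dvd_or_sq_emod_three_eq_one (z : ℤ) : 3 ∣ z ∨ z ^ 2 % 3 = 1 := by
  have hz : z % 3 = 0 ∨ z % 3 = 1 ∨ z % 3 = 2 := by lia
  rcases hz with hz | hz | hz
  · exact Or.inl (Int.dvd_of_emod_eq_zero hz)
  all_goals exact Or.inr (by simp [sq, Int.mul_emod, hz])

theorem eq_sq_add_six_mul_sq_of_mul_eq {n x y k : ℤ} (hn : n % 3 = 1) (hk₀ : 0 < k) (hk : k < 7)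
    (h : x ^ 2 + 6 * y ^ 2 = n * k) : ∃ u v : ℤ, n = u ^ 2 + 6 * v ^ 2 := by
  have hx := three_dvd_or_sq_emod_three_eq_one x
  have hsq : 3 ∣ x → x ^ 2 % 3 = 0 := fun hx => Int.emod_eq_zero_of_dvd (dvd_pow hx two_ne_zero)
  interval_cases k
  · exact ⟨x, y, by lia⟩
  · lia
  · obtain ⟨z, rfl⟩ : 3 ∣ x := by lia
    rcases three_dvd_or_sq_emod_three_eq_one y with ⟨w, rfl⟩ | hy <;> lia
  · obtain ⟨z, rfl⟩ : 2 ∣ x :=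
      Int.prime_two.dvd_of_dvd_pow (n := 2) ⟨2 * n - 3 * y ^ 2, by linear_combination h⟩
    obtain ⟨w, rfl⟩ : 2 ∣ y :=
      Int.prime_two.dvd_of_dvd_pow (n := 2) ⟨n - z ^ 2 - y ^ 2, by lia⟩
    exact ⟨z, w, by lia⟩
  · lia
  · obtain ⟨z, rfl⟩ : 2 ∣ x :=
      Int.prime_two.dvd_of_dvd_pow (n := 2) ⟨3 * n - 3 * y ^ 2, by linear_combination h⟩
    obtain ⟨w, rfl⟩ : 3 ∣ z := by lia
    exact ⟨y, w, by lia⟩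

theorem exists_eq_sq_add_six_mul_sq {n : ℕ} (hn : ¬IsSquare n) (hmod : n % 3 = 1)
    (hsq : IsSquare (-6 : ZMod n)) : ∃ x y : ℤ, (n : ℤ) = x ^ 2 + 6 * y ^ 2 := by
  obtain ⟨c, hc⟩ := hsq
  obtain ⟨x, y, hne, hx, hy, hxy⟩ := exists_sq_lt_and_intCast_eq_mul hn c
  obtain ⟨k, hk⟩ : (n : ℤ) ∣ x ^ 2 + 6 * y ^ 2 := by
    rw [← ZMod.intCast_zmod_eq_zero_iff_dvd]
    push_cast
    rw [hxy]
    linear_combination -(y : ZMod n) ^ 2 * hc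
  have hpos : 0 < x ^ 2 + 6 * y ^ 2 := by
    rcases hne with h | h <;> positivity
  exact eq_sq_add_six_mul_sq_of_mul_eq (by lia) (by nlinarith) (by nlinarith) hk

theorem isSquare_neg_three_iff {p : ℕ} [Fact p.Prime] (hp2 : p ≠ 2) (hp3 : p ≠ 3) :
    IsSquare (-3 : ZMod p) ↔ p % 3 = 1 := by
  have hp : p.Prime := Fact.out
  have hodd := hp.eq_two_or_odd.resolve_left hp2
  have h3 : ((-3 : ℤ) : ZMod p) ≠ 0 := by
    rw [Ne, ZMod.intCast_zmod_eq_zero_iff_dvd, dvd_neg]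
    exact_mod_cast mt (Nat.prime_dvd_prime_iff_eq hp Nat.prime_three).1 hp3
  have hreciprocity : legendreSym p (-3) = legendreSym 3 p := by
    have heven : Even (p / 2 + p / 2) := ⟨_, rfl⟩
    have hthree : legendreSym p (3 : ℕ) = (-1) ^ (p / 2) * legendreSym 3 p := by
      simpa using legendreSym.quadratic_reciprocity' (p := 3) (q := p) (by norm_num) hp2
    rw [show (-3 : ℤ) = -1 * (3 : ℕ) by norm_num, legendreSym.mul, legendreSym.at_neg_one hp2,
      hthree, ZMod.χ₄_eq_neg_one_pow hodd, ← mul_assoc, ← pow_add, heven.neg_one_pow, one_mul]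
  have hlegendre : IsSquare (-3 : ZMod p) ↔ legendreSym p (-3) = 1 := by
    rw [legendreSym.eq_one_iff _ h3]
    push_cast
    rfl
  have hmod : p % 3 ≠ 0 := fun h =>
    hp3 ((Nat.prime_dvd_prime_iff_eq Nat.prime_three hp).1 (Nat.dvd_of_mod_eq_zero h)).symm
  rw [hlegendre, hreciprocity, legendreSym.mod, ← Int.natCast_mod]
  rcases (by lia : p % 3 = 1 ∨ p % 3 = 2) with h | h <;> rw [h] <;> decide

theorem isSquare_neg_six_iff {p : ℕ} [Fact p.Prime] (hp2 : p ≠ 2) (hp3 : p ≠ 3) {s : ZMod p}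
    (hs : s ^ 2 = 2) : IsSquare (-6 : ZMod p) ↔ p % 3 = 1 := by
  have hs₀ : s ≠ 0 := ne_zero_pow two_ne_zero (hs ▸ two_ne_zero_of_ne_two hp2)
  rw [← isSquare_neg_three_iff hp2 hp3]
  constructor
  · rintro ⟨r, hr⟩
    refine ⟨r / s, ?_⟩
    field_simp
    linear_combination hr - 3 * hs
  · rintro ⟨r, hr⟩
    exact ⟨s * r, by linear_combination 2 * hr - r ^ 2 * hs⟩

end QuadraticForm

theorem stmt_11 (p : ℕ) [Fact p.Prime] (hp : 3 < p) (hp8 : p % 8 = 1 ∨ p % 8 = 7) :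
    ((p % 24 = 1 ∨ p % 24 = 7) →
      (∃ x y : ℤ, (p : ℤ) = x ^ 2 + 6 * y ^ 2) ∧
        ∀ x y : ℤ, (p : ℤ) = x ^ 2 + 6 * y ^ 2 →
          (∑ k ∈ Finset.range p,
              (Nat.choose (2 * k) k : ZMod p) * (a k : ZMod p) / (36 : ZMod p) ^ k)
            = 4 * (x : ZMod p) ^ 2)
    ∧
    ((p % 24 = 17 ∨ p % 24 = 23) →
      (∑ k ∈ Finset.range p,
          (Nat.choose (2 * k) k : ZMod p) * (a k : ZMod p) / (36 : ZMod p) ^ k) = 0) := by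
  have hprime : p.Prime := Fact.out
  have hp2 : p ≠ 2 := by lia
  have hp3 : p ≠ 3 := by lia
  have hne : ∀ q : ℕ, q.Prime → q ≠ p → (q : ZMod p) ≠ 0 := fun q hq h =>
    mt ((ZMod.natCast_eq_zero_iff q p).1) (mt (Nat.prime_dvd_prime_iff_eq hprime hq).1 h.symm)
  have h2 : (2 : ZMod p) ≠ 0 := two_ne_zero_of_ne_two hp2
  have h3 : (3 : ZMod p) ≠ 0 := hne 3 Nat.prime_three hp3.symm
  obtain ⟨s, hs⟩ := (ZMod.exists_sq_eq_two_iff hp2).2 hp8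
  replace hs : s ^ 2 = 2 := by rw [hs, sq]
  have hsum := (sum_choose_mul_a_div_eq_sq h2 h3 hs).trans (sq_sum_a_mul_pow h2 h3 hs)
  have h6 := isSquare_neg_six_iff hp2 hp3 hs
  refine ⟨fun hmod => ⟨?_, fun x y hxy => hsum.trans ?_⟩, fun hmod => hsum.trans ?_⟩
  · exact exists_eq_sq_add_six_mul_sq hprime.prime.irreducible.not_isSquare (by lia)
      (h6.2 (by lia))
  · exact charSum_twoTorsionCubic_sq h2 h3 (hne 17 (by norm_num) (by lia))
      (hne 23 (by norm_num) (by lia)) hs hxy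
  · have heuler := mt (ZMod.euler_criterion p (neg_six_ne_zero h2 h3)).2 (mt h6.1 (by lia))
    rw [charSum_twoTorsionCubic_eq_zero h2 h3 hs ((ZMod.pow_div_two_eq_neg_one_or_one p
      (neg_six_ne_zero h2 h3)).resolve_left heuler), sq, mul_zero]
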